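/- arXiv:0802.2161 — 3 statements merged into one kernel-verified Lean document; each statement's English description precedes it below -/
import Mathlib

section
/- Let d ≥ 2 be an integer, 0 < τ₀ < τ₁, α > 0, and a > 0, γ > 0. Let V₁, V₂ : ℝ^d → ℝ with V₁ continuously differentiable, satisfying |V₁(x)| ≤ a(1+|x|)^{−γ}, |V₂(x)| ≤ a(1+|x|)^{−γ−1} and ∂_rV₁(x) ≤ a(1+|x|)^{−γ−1} for all x. Then there exists a constant C (depending only on τ₀, τ₁, α, a, γ, d) such that for every τ ∈ (τ₀, τ₁), every ε ∈ (0,1), every f ∈ L²((1+|x|)^{1+α}) and every classical solution u of −Δu + (V₁+V₂)u ± iεu − τu = f with u, ∇u ∈ L²((1+|x|)^{−1−α}), one has ‖u‖_{L²((1+|x|)^{−1−α})} + ‖∇u‖_{L²((1+|x|)^{−1−α})} ≤ C‖f‖_{L²((1+|x|)^{1+α})}. -/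
/-!
The estimate is proved directly by a Carleman inequality with a bounded weight, which also makes
the constant independent of the potentials. Write `m = (1+α)/2`, and replace the weights
`(1+|x|)^{∓(1+α)}` by the comparable smooth ones `wt (±m) 1 = (1+|x|²)^{∓m}`.

*Energy.* Testing the equation against `wt m t · ū` with `t → 0` and using the absorption `ε`
shows that `u` and `∇u` are square integrable with `ε(‖u‖² + ‖∇u‖²) ≲ ∫|f||u|` (`global_energy`).

*Carleman.* Let `φ` be a bounded radial phase with slope `p = φ'` and let `w` be a bounded
increasing radial function vanishing quadratically at the origin. The divergence of the field
obtained by testing against `e^{2φ} w` times the conjugated radial derivative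
`∂_r u + ((d-1)/(2r) + p) u` is bounded below by `e^{2φ}` times
`{w'(p² + τ - V₁) + 2wpp' - w ∂_rV₁ - …}|u|²`, up to terms in `|f|²` and `ε(|u|² + |∇u|²)`
(`carleman_pointwise`, `carleman_abstract`). The integral of a divergence vanishes
(`integral_le_zero_of_le_div`; the singularity of the field at the origin is harmless since
`d ≥ 2`).

*Weights.* Take `w = 1 - (1 + r²/R²)^{-q}` and `p = k(1 + r/L)^{-1-θ}`. Outside a ball of radius
`R₀` the decay of `V₁`, `V₂`, `∂_rV₁` makes the term `τw'` dominate; inside that ball the large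
slope `k` makes `p²w'` dominate; then `L`, `θ`, `R` are chosen to make the remaining errors small
(`exists_params`, `bracket_lower`). As `φ` is bounded, `e^{2φ}` costs only a constant.

*Closing.* The Carleman estimate controls `∫ |x|²(1+|x|²)^{-m-1}|u|²`. The mass near the origin
is recovered from the divergence of `(1+|x|²)^{-m-1}|u|² x` (`low_part`), and the term
`ε(‖u‖² + ‖∇u‖²) ≲ ∫|f||u|` is absorbed by Young's inequality (`close_estimate`).

*Measurability.* Neither `V₂` nor `f` is assumed measurable. Replacing `V₂(x)` by the value within
the allowed bound that minimises `|f(x)|` gives a measurable pair with the same `u` and a smaller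
right-hand side (`norm_add_clamp_le`).
-/

noncomputable section
open MeasureTheory Metric Set ENNReal

abbrev Ed (d : ℕ) := EuclideanSpace ℝ (Fin d)

/-- partial derivative of a complex valued function -/
def pd {d : ℕ} (u : Ed d → ℂ) (i : Fin d) (x : Ed d) : ℂ :=
  fderiv ℝ u x (EuclideanSpace.single i 1)

/-- Laplacian of a complex valued function -/
def lap {d : ℕ} (u : Ed d → ℂ) (x : Ed d) : ℂ :=
  ∑ i, fderiv ℝ (pd u i) x (EuclideanSpace.single i 1)

/-- squared norm of the gradient, as an extended nonnegative real -/
def gradSq {d : ℕ} (u : Ed d → ℂ) (x : Ed d) : ℝ≥0∞ :=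
  ∑ i, (‖pd u i x‖₊ : ℝ≥0∞) ^ 2

/-- |u(x)|² as an extended nonnegative real -/
def usq {d : ℕ} (u : Ed d → ℂ) (x : Ed d) : ℝ≥0∞ := (‖u x‖₊ : ℝ≥0∞) ^ 2

/-- radial derivative ∂_r V (x) = (x/|x|)·∇V(x) -/
def radialDeriv {d : ℕ} (V : Ed d → ℝ) (x : Ed d) : ℝ :=
  fderiv ℝ V x x / ‖x‖

/-- Morrey–Campanato type quantity sup_{R>0} (1/R) ∫_{B(0,R)} g -/
def nX2 {d : ℕ} (g : Ed d → ℝ≥0∞) : ℝ≥0∞ :=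
  ⨆ (R : ℝ) (_ : 0 < R), (ENNReal.ofReal R)⁻¹ * ∫⁻ x in ball (0 : Ed d) R, g x

/-- dyadic shell C_j -/
def shell (d : ℕ) (j : ℤ) : Set (Ed d) := {x | (2:ℝ)^j < ‖x‖ ∧ ‖x‖ ≤ (2:ℝ)^(j+1)}

/-- the dual norm ‖f‖_{X*} applied to g = |f|² -/
def nXstar {d : ℕ} (g : Ed d → ℝ≥0∞) : ℝ≥0∞ :=
  ∑' j : ℤ, (ENNReal.ofReal ((2:ℝ)^(j+1)) * ∫⁻ x in shell d j, g x) ^ (1/2 : ℝ)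

/-- the index j₀ with 2^{j₀} < ρ ≤ 2^{j₀+1} -/
def jIdx (ρ : ℝ) : ℤ := ⌈Real.logb 2 ρ⌉ - 1

/-- sup_{R ≥ ρ} (1/R)∫_{B(0,R)} g -/
def nX2r {d : ℕ} (ρ : ℝ) (g : Ed d → ℝ≥0∞) : ℝ≥0∞ :=
  ⨆ (R : ℝ) (_ : ρ ≤ R), (ENNReal.ofReal R)⁻¹ * ∫⁻ x in ball (0 : Ed d) R, g x

/-- the dual norm ‖f‖_{X*_ρ} applied to g = |f|² -/
def nXstarr {d : ℕ} (ρ : ℝ) (g : Ed d → ℝ≥0∞) : ℝ≥0∞ :=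
  (∑' j : {j : ℤ // jIdx ρ ≤ j},
    (ENNReal.ofReal ((2:ℝ)^((j:ℤ)+1)) * ∫⁻ x in shell d (j:ℤ), g x) ^ (1/2 : ℝ))
  + (ENNReal.ofReal ρ * ∫⁻ x in ball (0 : Ed d) ρ, g x) ^ (1/2 : ℝ)

/-- integral of g over the sphere of radius R w.r.t. (d-1)-dimensional Hausdorff measure -/
def sphInt {d : ℕ} (R : ℝ) (g : Ed d → ℝ≥0∞) : ℝ≥0∞ :=
  ∫⁻ x in Metric.sphere (0 : Ed d) R, g x ∂(μH[(d:ℝ) - 1])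

/-! ### Cut-offs -/

theorem smoothTransition_deriv_bound :
    ∃ K : ℝ, 0 < K ∧ (∀ t, |deriv Real.smoothTransition t| ≤ K) ∧
      ∀ t, 1 < t → deriv Real.smoothTransition t = 0 := by
  have h1 : ∀ t, 1 < t → deriv Real.smoothTransition t = 0 := by
    intro t ht
    have : Real.smoothTransition =ᶠ[nhds t] fun _ => 1 := by
      filter_upwards [lt_mem_nhds ht] with s hs
      exact Real.smoothTransition.one_of_one_le hs.le
    rw [this.deriv_eq]; simp
  have h0 : ∀ t, t < 0 → deriv Real.smoothTransition t = 0 := by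
    intro t ht
    have : Real.smoothTransition =ᶠ[nhds t] fun _ => 0 := by
      filter_upwards [gt_mem_nhds ht] with s hs
      exact Real.smoothTransition.zero_of_nonpos (le_of_lt hs)
    rw [this.deriv_eq]; simp
  have hc : Continuous (deriv Real.smoothTransition) :=
    (Real.smoothTransition.contDiff (n := 1)).continuous_deriv le_rfl
  obtain ⟨K, hK⟩ := (isCompact_Icc (a := (0:ℝ)) (b := 1)).exists_bound_of_continuousOn hc.continuousOn
  refine ⟨max K 1, by positivity, fun t => ?_, h1⟩
  by_cases ht0 : t < 0
  · rw [h0 t ht0]; simp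
  by_cases ht1 : 1 < t
  · rw [h1 t ht1]; simp
  exact (hK t ⟨not_lt.1 ht0, not_lt.1 ht1⟩).trans (le_max_left _ _)

/-- Cut-offs `η` which are `1` on `2/n ≤ |x| ≤ n` and vanish near the origin and near infinity.
Their gradient is `O(1/n)`, except for a part of size `O(n)` in the ball of radius `2/n`. -/
theorem exists_cutoff (d : ℕ) : ∃ K : ℝ, 0 < K ∧ ∀ n : ℕ, 1 ≤ n → ∃ η : Ed d → ℝ,
    ContDiff ℝ 1 η ∧ HasCompactSupport η ∧ (0 : Ed d) ∉ tsupport η ∧ (∀ x, 0 ≤ η x) ∧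
    (∀ x, η x ≤ 1) ∧ (∀ x, 2 ≤ n * ‖x‖ → ‖x‖ ≤ n → η x = 1) ∧
    ∀ x v : Ed d, ‖v‖ ≤ 1 →
      |fderiv ℝ η x v| ≤ K / n + K * n * (ball (0 : Ed d) (2 / n)).indicator (fun _ => 1) x := by
  obtain ⟨K, hK, hb, hz⟩ := smoothTransition_deriv_bound
  refine ⟨4 * K, by positivity, fun n hn => ?_⟩
  have hn0 : (0:ℝ) < n := by exact_mod_cast hn
  have hn1 : (1:ℝ) ≤ n := by exact_mod_cast hn
  set θ := Real.smoothTransition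
  have hθ : ContDiff ℝ 1 θ := Real.smoothTransition.contDiff (n := 1)
  have hθd : ∀ t, HasDerivAt θ (deriv θ t) t := fun t =>
    (hθ.differentiable one_ne_zero t).hasDerivAt
  have hle := Real.smoothTransition.le_one
  have hnn := Real.smoothTransition.nonneg
  set η : Ed d → ℝ := fun x => θ (n ^ 2 * ‖x‖ ^ 2 - 1) * θ (2 - (1 / n ^ 2) * ‖x‖ ^ 2) with hη
  have hsq : ContDiff ℝ 1 (fun x : Ed d => ‖x‖ ^ 2) := contDiff_norm_sq ℝ
  have hηc : ContDiff ℝ 1 η :=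
    (hθ.comp ((contDiff_const.mul hsq).sub contDiff_const)).mul
      (hθ.comp (contDiff_const.sub (contDiff_const.mul hsq)))
  refine ⟨η, hηc, ?_, ?_, fun x => mul_nonneg (hnn _) (hnn _),
    fun x => mul_le_one₀ (hle _) (hnn _) (hle _), ?_, ?_⟩
  · refine HasCompactSupport.intro (isCompact_closedBall (0 : Ed d) (2 * n)) fun x hx => ?_
    have hx' : 2 * n < ‖x‖ := by simpa using hx
    have : θ (2 - (1 / n ^ 2) * ‖x‖ ^ 2) = 0 := by
      apply Real.smoothTransition.zero_of_nonpos
      have : (2 * n) ^ 2 ≤ ‖x‖ ^ 2 := by gcongr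
      have h4 : 4 ≤ (1 / (n:ℝ) ^ 2) * ‖x‖ ^ 2 := by
        rw [one_div, ← div_eq_inv_mul, le_div_iff₀ (by positivity)]; linarith
      linarith
    simp only [hη, this, mul_zero]
  · rw [notMem_tsupport_iff_eventuallyEq]
    have : ∀ᶠ x in nhds (0 : Ed d), ‖x‖ < 1 / n := by
      have := Metric.ball_mem_nhds (0 : Ed d) (show (0:ℝ) < 1 / n by positivity)
      filter_upwards [this] with x hx
      simpa using hx
    filter_upwards [this] with x hx
    have : θ (n ^ 2 * ‖x‖ ^ 2 - 1) = 0 := by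
      apply Real.smoothTransition.zero_of_nonpos
      have h1 : n * ‖x‖ ≤ 1 := by rw [lt_div_iff₀ hn0] at hx; linarith
      have : (n * ‖x‖) ^ 2 ≤ 1 := pow_le_one₀ (by positivity) h1
      nlinarith
    simp [hη, this]
  · intro x h2 h3
    have e1 : θ (n ^ 2 * ‖x‖ ^ 2 - 1) = 1 := by
      apply Real.smoothTransition.one_of_one_le
      nlinarith
    have e2 : θ (2 - (1 / n ^ 2) * ‖x‖ ^ 2) = 1 := by
      apply Real.smoothTransition.one_of_one_le
      have : (1 / (n:ℝ) ^ 2) * ‖x‖ ^ 2 ≤ 1 := by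
        rw [one_div, ← div_eq_inv_mul, div_le_one (by positivity)]; gcongr
      linarith
    simp only [hη, e1, e2, mul_one]
  · intro x v hv
    have hs : HasFDerivAt (fun x : Ed d => ‖x‖ ^ 2) (2 • (innerSL ℝ x)) x :=
      (hasStrictFDerivAt_norm_sq x).hasFDerivAt
    have hA := (hθd (n ^ 2 * ‖x‖ ^ 2 - 1)).comp_hasFDerivAt x ((hs.const_mul ((n:ℝ) ^ 2)).sub_const 1)
    have hB := (hθd (2 - (1 / n ^ 2) * ‖x‖ ^ 2)).comp_hasFDerivAt x ((hs.const_mul (1 / (n:ℝ) ^ 2)).const_sub 2)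
    have hAB := hA.mul hB
    have hder : fderiv ℝ η x = _ := hAB.fderiv
    rw [hder]
    have hin : |inner ℝ x v| ≤ ‖x‖ := (abs_real_inner_le_norm x v).trans
      (mul_le_of_le_one_right (norm_nonneg _) hv)
    simp only [Function.comp, add_apply, smul_apply,
      neg_apply, innerSL_apply_apply, smul_eq_mul, nsmul_eq_mul]
    have b1 : |θ (2 - (1 / n ^ 2) * ‖x‖ ^ 2) * (deriv θ (n ^ 2 * ‖x‖ ^ 2 - 1) *
        (n ^ 2 * (((2:ℕ):ℝ) * inner ℝ x v)))| ≤
        4 * K * n * (ball (0 : Ed d) (2 / n)).indicator (fun _ => 1) x := by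
      by_cases hx : n * ‖x‖ < 2
      · have hmem : x ∈ ball (0 : Ed d) (2 / n) := by
          rw [mem_ball_zero_iff, lt_div_iff₀ hn0]; linarith
        rw [indicator_of_mem hmem, abs_mul, abs_mul, abs_mul, abs_mul, abs_of_nonneg (hnn _),
          abs_of_nonneg (by positivity : (0:ℝ) ≤ (n:ℝ) ^ 2)]
        calc _ ≤ 1 * (K * (n ^ 2 * (|((2:ℕ):ℝ)| * ‖x‖))) := by
              gcongr
              · exact hle _
              · exact hb _
          _ = 2 * K * n * (n * ‖x‖) := by norm_num; ring
          _ ≤ 2 * K * n * 2 := by gcongr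
          _ = _ := by ring
      · have : deriv θ (n ^ 2 * ‖x‖ ^ 2 - 1) = 0 := hz _ (by nlinarith)
        rw [this]
        simp only [zero_mul, mul_zero, abs_zero]
        exact mul_nonneg (by positivity) (indicator_nonneg (fun _ _ => zero_le_one) _)
    have b2 : |θ (n ^ 2 * ‖x‖ ^ 2 - 1) * (deriv θ (2 - (1 / n ^ 2) * ‖x‖ ^ 2) *
        (-(1 / n ^ 2 * (((2:ℕ):ℝ) * inner ℝ x v))))| ≤ 4 * K / n := by
      by_cases hx : ‖x‖ ≤ 2 * n
      · rw [abs_mul, abs_mul, abs_neg, abs_mul, abs_mul, abs_of_nonneg (hnn _),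
          abs_of_nonneg (by positivity : (0:ℝ) ≤ 1 / (n:ℝ) ^ 2)]
        calc _ ≤ 1 * (K * (1 / n ^ 2 * (|((2:ℕ):ℝ)| * (2 * n)))) := by
              gcongr
              · exact hle _
              · exact hb _
              · exact hin.trans hx
          _ = _ := by norm_num; field_simp; norm_num
      · have hx' := not_le.1 hx
        have : deriv θ (2 - (1 / n ^ 2) * ‖x‖ ^ 2) = 0 := by
          have h4 : 4 ≤ (1 / (n:ℝ) ^ 2) * ‖x‖ ^ 2 := by
            rw [one_div, ← div_eq_inv_mul, le_div_iff₀ (by positivity)]; nlinarith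
          have : Real.smoothTransition =ᶠ[nhds (2 - (1 / n ^ 2) * ‖x‖ ^ 2)] fun _ => 0 := by
            filter_upwards [gt_mem_nhds (show 2 - (1 / (n:ℝ) ^ 2) * ‖x‖ ^ 2 < 0 by linarith)] with s hs
            exact Real.smoothTransition.zero_of_nonpos (le_of_lt hs)
          rw [show θ = Real.smoothTransition from rfl, this.deriv_eq]; simp
        rw [this]; simp; positivity
    refine (abs_add_le _ _).trans ?_
    rw [add_comm]
    exact (add_le_add b1 b2).trans (by linarith)

/-! ### The divergence inequality -/

/-- The standard basis vector. -/
abbrev bv {d : ℕ} (i : Fin d) : Ed d := EuclideanSpace.single i 1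

/-- Divergence inequality: if `h ≤ div F` off the origin and `F` is dominated by a continuous
integrable function, then `∫ h ≤ 0`. The field may be singular at the origin, a point that is
negligible since `d ≥ 2`. -/
theorem integral_le_zero_of_le_div {d : ℕ} (hd : 2 ≤ d) (F : Fin d → Ed d → ℝ) (g h : Ed d → ℝ)
    (hF : ∀ i, ∀ x, x ≠ 0 → ContDiffAt ℝ 1 (F i) x) (hgc : Continuous g) (hgi : Integrable g)
    (hFg : ∀ i x, |F i x| ≤ g x) (hh : Integrable h)
    (hle : ∀ x, x ≠ 0 → h x ≤ ∑ i, fderiv ℝ (F i) x (bv i)) : ∫ x, h x ≤ 0 := by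
  have : Nonempty (Fin d) := ⟨⟨0, by omega⟩⟩
  obtain ⟨K, hK, hη⟩ := exists_cutoff d
  choose! η hηc hηs hη0 hηn hη1 hηe hηd using hη
  obtain ⟨C, hC⟩ := (isCompact_closedBall (0 : Ed d) 1).exists_bound_of_continuousOn hgc.continuousOn
  have hbv : ∀ i : Fin d, ‖(bv i : Ed d)‖ ≤ 1 := fun i => by simp
  have hg0 : ∀ x, 0 ≤ g x := fun x => (abs_nonneg _).trans (hFg ⟨0, by omega⟩ x)
  have hC0 : 0 ≤ C := (norm_nonneg _).trans (hC 0 (by simp))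
  have hne : ∀ n x, 1 ≤ n → x ∈ tsupport (η n) → x ≠ 0 := fun n x hn hx h0 => hη0 n hn (h0 ▸ hx)
  have hFc : ∀ i, ∀ x, x ≠ 0 → ContinuousAt (fun y => fderiv ℝ (F i) y (bv i)) x := fun i x hx =>
    ((hF i x hx).continuousAt_fderiv one_ne_zero).clm_apply continuousAt_const
  have hcont : ∀ n (f : Ed d → ℝ), 1 ≤ n → (∀ x, x ≠ 0 → ContinuousAt f x) →
      Continuous (fun x => η n x * f x) := by
    intro n f hn hf
    refine continuous_iff_continuousAt.2 fun x => ?_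
    by_cases hx : x ∈ tsupport (η n)
    · exact ((hηc n hn).continuous.continuousAt).mul (hf x (hne n x hn hx))
    · have : (fun x => η n x * f x) =ᶠ[nhds x] fun _ => 0 := by
        filter_upwards [notMem_tsupport_iff_eventuallyEq.1 hx] with y hy
        simp [hy]
      exact continuousAt_const.congr this.symm
  have hlocint : ∀ n (f : Ed d → ℝ), 1 ≤ n → (∀ x, x ≠ 0 → ContinuousAt f x) →
      Integrable (fun x => η n x * f x) := fun n f hn hf =>
    (hcont n f hn hf).integrable_of_hasCompactSupport (hηs n hn).mul_right
  have hFm : ∀ i, AEStronglyMeasurable (F i) volume := by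
    intro i
    have h1 : ContinuousOn (F i) {0}ᶜ := fun x hx => (hF i x hx).continuousAt.continuousWithinAt
    have h2 := h1.aestronglyMeasurable (μ := volume) (measurableSet_singleton (0 : Ed d)).compl
    rwa [Measure.restrict_eq_self_of_ae_mem] at h2
    exact compl_mem_ae_iff.2 (by simp)
  have hFi : ∀ i, Integrable (F i) := fun i => hgi.mono' (hFm i) (ae_of_all _ fun x => hFg i x)
  have hdη : ∀ n i, 1 ≤ n → Continuous (fun x => fderiv ℝ (η n) x (bv i)) := fun n i hn =>
    ((hηc n hn).continuous_fderiv one_ne_zero).clm_apply continuous_const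
  have hdFi : ∀ n i, 1 ≤ n → Integrable (fun x => fderiv ℝ (η n) x (bv i) * F i x) := by
    intro n i hn
    refine (hFi i).bdd_mul (c := K / n + K * n) (hdη n i hn).aestronglyMeasurable (ae_of_all _ fun x => ?_)
    refine (hηd n hn x _ (hbv i)).trans ?_
    have : (ball (0 : Ed d) (2 / n)).indicator (fun _ => (1:ℝ)) x ≤ 1 :=
      indicator_le_self' (fun _ _ => zero_le_one) x
    have h2 : 0 ≤ K * n := by positivity
    nlinarith
  set v₁ := volume.real (ball (0 : Ed d) 1)
  -- the error made by the cut-off is `O(1/n)`: at the origin because `d ≥ 2`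
  have key : ∀ n : ℕ, 2 ≤ n → ∫ x, η n x * h x ≤ d * ((K * ∫ x, g x) + 4 * K * C * v₁) / n := by
    intro n hn2
    have hn : 1 ≤ n := by omega
    have hn0 : (0:ℝ) < n := by exact_mod_cast hn
    have hibp : ∀ i, ∫ x, η n x * fderiv ℝ (F i) x (bv i) = - ∫ x, fderiv ℝ (η n) x (bv i) * F i x :=
      fun i => integral_mul_fderiv_eq_neg_fderiv_mul_of_integrable (hdFi n i hn)
        (hlocint n _ hn (hFc i)) (hlocint n _ hn fun x hx => (hF i x hx).continuousAt)
        (fun x _ => (hηc n hn).differentiable one_ne_zero x)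
        (fun x hx => (hF i x (hne n x hn hx)).differentiableAt one_ne_zero)
    have hball : Integrable (fun x => (ball (0 : Ed d) (2 / n)).indicator (fun _ => (1:ℝ)) x) :=
      (integrable_indicator_iff measurableSet_ball).2 (integrableOn_const (measure_ball_lt_top.ne))
    have hbi : ∀ i, - ∫ x, fderiv ℝ (η n) x (bv i) * F i x ≤ ((K * ∫ x, g x) + 4 * K * C * v₁) / n := by
      intro i
      rw [← integral_neg]
      have hvol : ∫ x, (ball (0 : Ed d) (2 / n)).indicator (fun _ => (1:ℝ)) x ≤ (2 / n) ^ 2 * v₁ := by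
        rw [integral_indicator measurableSet_ball, setIntegral_const, smul_eq_mul, mul_one]
        have : volume.real (ball (0 : Ed d) (2 / n)) = (2 / n) ^ d * v₁ := by
          rw [Measure.real, Measure.addHaar_ball _ _ (by positivity), ENNReal.toReal_mul,
            ENNReal.toReal_ofReal (by positivity)]
          simp [v₁, Measure.real]
        rw [this]
        refine mul_le_mul_of_nonneg_right ?_ measureReal_nonneg
        refine pow_le_pow_of_le_one (by positivity) ?_ hd
        rw [div_le_one hn0]; exact_mod_cast hn2
      calc ∫ x, -(fderiv ℝ (η n) x (bv i) * F i x)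
          ≤ ∫ x, (K / n * g x + K * n * C * (ball (0 : Ed d) (2 / n)).indicator (fun _ => (1:ℝ)) x) := by
            refine integral_mono (hdFi n i hn).neg ((hgi.const_mul _).add (hball.const_mul _)) fun x => ?_
            refine (neg_le_abs _).trans ?_
            rw [abs_mul]
            have h1 : |fderiv ℝ (η n) x (bv i)| * |F i x| ≤
                (K / n + K * n * (ball (0 : Ed d) (2 / n)).indicator (fun _ => 1) x) * g x :=
              mul_le_mul (hηd n hn x _ (hbv i)) (hFg i x) (abs_nonneg _)
                ((abs_nonneg _).trans (hηd n hn x _ (hbv i)))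
            refine h1.trans ?_
            by_cases hx : x ∈ ball (0 : Ed d) (2 / n)
            · have hx1 : g x ≤ C := by
                refine (le_abs_self _).trans (hC x ?_)
                have h3 : ‖x‖ < 2 / n := by simpa using hx
                have h4 : (2:ℝ) / n ≤ 1 := by rw [div_le_one hn0]; exact_mod_cast hn2
                simpa using h3.le.trans h4
              simp only [indicator_of_mem hx]
              have : K * n * g x ≤ K * n * C := by gcongr
              linarith
            · simp only [indicator_of_notMem hx]; simp
        _ = K / n * (∫ x, g x) + K * n * C * ∫ x, (ball (0 : Ed d) (2 / n)).indicator (fun _ => (1:ℝ)) x := by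
            rw [integral_add (hgi.const_mul _) (hball.const_mul _), integral_const_mul, integral_const_mul]
        _ ≤ K / n * (∫ x, g x) + K * n * C * ((2 / n) ^ 2 * v₁) := by gcongr
        _ = _ := by field_simp; ring
    calc ∫ x, η n x * h x ≤ ∫ x, ∑ i, η n x * fderiv ℝ (F i) x (bv i) := by
          refine integral_mono (hh.bdd_mul (c := 1) (hηc n hn).continuous.aestronglyMeasurable
            (ae_of_all _ fun x => ?_)) (integrable_finsetSum _ fun i _ => hlocint n _ hn (hFc i)) fun x => ?_
          · rw [Real.norm_eq_abs, abs_of_nonneg (hηn n hn x)]; exact hη1 n hn x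
          · simp only [← Finset.mul_sum]
            by_cases hx : x = 0
            · have : η n x = 0 := by
                rw [hx]; exact image_eq_zero_of_notMem_tsupport (hη0 n hn)
              simp [this]
            · exact mul_le_mul_of_nonneg_left (hle x hx) (hηn n hn x)
      _ = ∑ i, - ∫ x, fderiv ℝ (η n) x (bv i) * F i x := by
          rw [integral_finsetSum _ fun i _ => hlocint n _ hn (hFc i)]
          exact Finset.sum_congr rfl fun i _ => hibp i
      _ ≤ ∑ _i : Fin d, ((K * ∫ x, g x) + 4 * K * C * v₁) / n := Finset.sum_le_sum fun i _ => hbi i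
      _ = _ := by rw [Finset.sum_const, Finset.card_fin, nsmul_eq_mul]; ring
  have hlim : Filter.Tendsto (fun n => ∫ x, η n x * h x) Filter.atTop (nhds (∫ x, h x)) := by
    refine tendsto_integral_filter_of_dominated_convergence (fun x => |h x|) ?_ ?_ hh.abs ?_
    · filter_upwards [Filter.eventually_ge_atTop 1] with n hn
      exact (hηc n hn).continuous.aestronglyMeasurable.mul hh.aestronglyMeasurable
    · filter_upwards [Filter.eventually_ge_atTop 1] with n hn
      refine ae_of_all _ fun x => ?_
      rw [norm_mul, Real.norm_eq_abs, Real.norm_eq_abs, abs_of_nonneg (hηn n hn x)]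
      exact mul_le_of_le_one_left (abs_nonneg _) (hη1 n hn x)
    · have : ∀ᵐ x : Ed d, x ≠ 0 := by
        rw [ae_iff]; simp
      filter_upwards [this] with x hx
      have hx0 : 0 < ‖x‖ := norm_pos_iff.2 hx
      refine tendsto_const_nhds.congr' ?_
      have e1 : ∀ᶠ n : ℕ in Filter.atTop, 2 / ‖x‖ ≤ n :=
        tendsto_natCast_atTop_atTop.eventually_ge_atTop _
      have e2 : ∀ᶠ n : ℕ in Filter.atTop, ‖x‖ ≤ n :=
        tendsto_natCast_atTop_atTop.eventually_ge_atTop _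
      filter_upwards [e1, e2, Filter.eventually_ge_atTop 1] with n h1 h2 h3
      rw [hηe n h3 x (by rwa [div_le_iff₀ hx0] at h1) h2, one_mul]
  refine le_of_tendsto_of_tendsto hlim
    (tendsto_const_div_atTop_nhds_zero_nat (d * ((K * ∫ x, g x) + 4 * K * C * v₁))) ?_
  filter_upwards [Filter.eventually_ge_atTop 2] with n hn using key n hn

/-! ### The multiplier field and its divergence -/

/-- `|∇u|²` as a real number. -/
def nSq {d : ℕ} (u : Ed d → ℂ) (x : Ed d) : ℝ := ∑ i, ‖pd u i x‖ ^ 2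

/-- The unnormalised radial derivative `x·∇u`. -/
def Xd {d : ℕ} (u : Ed d → ℂ) (x : Ed d) : ℂ := ∑ j, (x j) • pd u j x

/-- The components of the multiplier field
`2A Re((x·∇ū)∂ᵢu) - A xᵢ|∇u|² + B Re(ū ∂ᵢu) + g xᵢ|u|²`. -/
def Fld {d : ℕ} (u : Ed d → ℂ) (A B g : Ed d → ℝ) (i : Fin d) (x : Ed d) : ℝ :=
  2 * (A x * inner ℝ (Xd u x) (pd u i x)) - A x * x i * nSq u x
    + B x * inner ℝ (u x) (pd u i x) + g x * x i * ‖u x‖ ^ 2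

section
variable {d : ℕ} {u : Ed d → ℂ}

theorem contDiff_pd (hu : ContDiff ℝ 2 u) (i : Fin d) : ContDiff ℝ 1 (pd u i) :=
  (hu.fderiv_right (m := 1) (by norm_num)).clm_apply contDiff_const

theorem contDiff_coord (i : Fin d) : ContDiff ℝ 1 (fun x : Ed d => x i) := by fun_prop

theorem contDiff_Xd (hu : ContDiff ℝ 2 u) : ContDiff ℝ 1 (Xd u) :=
  ContDiff.sum fun j _ => (contDiff_coord j).smul (contDiff_pd hu j)

theorem contDiff_nSq (hu : ContDiff ℝ 2 u) : ContDiff ℝ 1 (nSq u) :=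
  ContDiff.sum fun j _ => (contDiff_pd hu j).norm_sq ℝ

theorem contDiffAt_Fld (hu : ContDiff ℝ 2 u) {A B g : Ed d → ℝ} {x : Ed d}
    (hA : ContDiffAt ℝ 1 A x) (hB : ContDiffAt ℝ 1 B x) (hg : ContDiffAt ℝ 1 g x) (i : Fin d) :
    ContDiffAt ℝ 1 (Fld u A B g i) x := by
  have h1 := (contDiff_pd hu i).contDiffAt (x := x)
  have h2 := (contDiff_coord i).contDiffAt (x := x)
  have h3 := (contDiff_Xd hu).contDiffAt (x := x)
  have h4 := (contDiff_nSq hu).contDiffAt (x := x)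
  have h5 : ContDiffAt ℝ 1 u x := (hu.of_le (by norm_num)).contDiffAt
  exact (((contDiffAt_const.mul (hA.mul (h3.inner ℝ h1))).sub ((hA.mul h2).mul h4)).add
    (hB.mul (h5.inner ℝ h1))).add ((hg.mul h2).mul (h5.norm_sq ℝ))

theorem pd_symm (hu : ContDiff ℝ 2 u) (x : Ed d) (i j : Fin d) :
    fderiv ℝ (pd u j) x (bv i) = fderiv ℝ (pd u i) x (bv j) := by
  have hs : IsSymmSndFDerivAt ℝ u x := hu.contDiffAt.isSymmSndFDerivAt (by simp)
  have hd : DifferentiableAt ℝ (fderiv ℝ u) x :=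
    (hu.fderiv_right (m := 1) (by norm_num)).differentiable one_ne_zero x
  have : ∀ k : Fin d, ∀ v, fderiv ℝ (pd u k) x v = fderiv ℝ (fderiv ℝ u) x v (bv k) := by
    intro k v
    have h := (hd.hasFDerivAt.clm_apply (hasFDerivAt_const (bv k) x)).fderiv
    have h' : fderiv ℝ (pd u k) x = _ := h
    rw [h']; simp
  rw [this, this, hs.eq]

theorem hasDerivAt_coord (x : Ed d) (i j : Fin d) :
    HasDerivAt (fun t : ℝ => (x + t • bv i) j) (if j = i then 1 else 0) 0 := by
  have : (fun t : ℝ => (x + t • bv i) j) = fun t : ℝ => x j + t * (if j = i then 1 else 0) := by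
    funext t; simp
  rw [this]
  simpa using ((hasDerivAt_id (0:ℝ)).mul_const (if j = i then (1:ℝ) else 0)).const_add (x j)

theorem hasDerivAt_line {H : Type*} [NormedAddCommGroup H] [NormedSpace ℝ H] {f : Ed d → H}
    {x : Ed d} (hf : DifferentiableAt ℝ f x) (v : Ed d) :
    HasDerivAt (fun t : ℝ => f (x + t • v)) (fderiv ℝ f x v) 0 :=
  hf.hasFDerivAt.hasLineDerivAt v

theorem fderiv_Fld (hu : ContDiff ℝ 2 u) {A B g : Ed d → ℝ} {x : Ed d}
    (hA : ContDiffAt ℝ 1 A x) (hB : ContDiffAt ℝ 1 B x) (hg : ContDiffAt ℝ 1 g x) (i : Fin d) :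
    fderiv ℝ (Fld u A B g i) x (bv i) =
      2 * (fderiv ℝ A x (bv i) * inner ℝ (Xd u x) (pd u i x)
        + A x * (inner ℝ (Xd u x) (fderiv ℝ (pd u i) x (bv i))
          + inner ℝ (pd u i x + ∑ j, x j • fderiv ℝ (pd u j) x (bv i)) (pd u i x)))
      - ((fderiv ℝ A x (bv i) * x i + A x) * nSq u x
        + A x * x i * ∑ j, 2 * inner ℝ (pd u j x) (fderiv ℝ (pd u j) x (bv i)))
      + (fderiv ℝ B x (bv i) * inner ℝ (u x) (pd u i x)
        + B x * (inner ℝ (u x) (fderiv ℝ (pd u i) x (bv i)) + inner ℝ (pd u i x) (pd u i x)))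
      + ((fderiv ℝ g x (bv i) * x i + g x) * ‖u x‖ ^ 2
        + g x * x i * (2 * inner ℝ (u x) (pd u i x))) := by
  have h0 : x + (0:ℝ) • bv i = x := by simp
  have dA := hasDerivAt_line (hA.differentiableAt one_ne_zero) (bv i)
  have dB := hasDerivAt_line (hB.differentiableAt one_ne_zero) (bv i)
  have dg := hasDerivAt_line (hg.differentiableAt one_ne_zero) (bv i)
  have du : HasDerivAt (fun t : ℝ => u (x + t • bv i)) (pd u i x) 0 :=
    hasDerivAt_line (hu.differentiable two_ne_zero x) (bv i)
  have dp : ∀ j, HasDerivAt (fun t : ℝ => pd u j (x + t • bv i)) (fderiv ℝ (pd u j) x (bv i)) 0 :=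
    fun j => hasDerivAt_line ((contDiff_pd hu j).differentiable one_ne_zero x) (bv i)
  have dc := hasDerivAt_coord x i
  have dX : HasDerivAt (fun t : ℝ => Xd u (x + t • bv i))
      (pd u i x + ∑ j, x j • fderiv ℝ (pd u j) x (bv i)) 0 := by
    have h := HasDerivAt.fun_sum (u := Finset.univ) fun j _ => (dc j).smul (dp j)
    simp only [h0] at h
    refine h.congr_deriv ?_
    rw [Finset.sum_add_distrib, add_comm]
    congr 1
    simp
  have dN : HasDerivAt (fun t : ℝ => nSq u (x + t • bv i))
      (∑ j, 2 * inner ℝ (pd u j x) (fderiv ℝ (pd u j) x (bv i))) 0 := by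
    have h := HasDerivAt.fun_sum (u := Finset.univ) fun j _ => (dp j).norm_sq
    simp only [h0] at h
    exact h
  have dS := du.norm_sq
  have hF := ((((dA.mul (dX.inner ℝ (dp i))).const_mul 2).sub ((dA.mul (dc i)).mul dN)).add
    (dB.mul (du.inner ℝ (dp i)))).add ((dg.mul (dc i)).mul dS)
  have hF' := hasDerivAt_line ((contDiffAt_Fld hu hA hB hg i).differentiableAt one_ne_zero) (bv i)
  rw [hF'.unique hF]
  simp only [h0, Pi.mul_apply, if_true, mul_one]

theorem clm_apply_self (L : Ed d →L[ℝ] ℝ) (x : Ed d) : L x = ∑ i, L (bv i) * x i := by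
  have h : x = ∑ i, x i • (bv i : Ed d) := by
    ext j; simp [Pi.single_apply]
  conv_lhs => rw [h]
  rw [map_sum]
  simp [mul_comm]

/-- The divergence of `Fld` when `A` and `B` are radial. -/
theorem div_Fld (hu : ContDiff ℝ 2 u) {A B g : Ed d → ℝ} {x : Ed d} {A₁ B₁ g₁ : ℝ}
    (hA : ContDiffAt ℝ 1 A x) (hB : ContDiffAt ℝ 1 B x) (hg : ContDiffAt ℝ 1 g x)
    (hA₁ : ∀ i, fderiv ℝ A x (bv i) = A₁ * x i) (hB₁ : ∀ i, fderiv ℝ B x (bv i) = B₁ * x i)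
    (hg₁ : fderiv ℝ g x x = g₁) :
    ∑ i, fderiv ℝ (Fld u A B g i) x (bv i) =
      2 * A x * inner ℝ (Xd u x) (lap u x) + (2 * A x - d * A x - A₁ * ‖x‖ ^ 2) * nSq u x
      + 2 * A₁ * ‖Xd u x‖ ^ 2 + B x * nSq u x + B₁ * inner ℝ (u x) (Xd u x)
      + B x * inner ℝ (u x) (lap u x) + (d * g x + g₁) * ‖u x‖ ^ 2
      + 2 * g x * inner ℝ (u x) (Xd u x) := by
  have hx2 : ‖x‖ ^ 2 = ∑ i, x i * x i := by
    rw [EuclideanSpace.norm_sq_eq]; exact Finset.sum_congr rfl fun i _ => by simp [sq]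
  have hgx : fderiv ℝ g x x = ∑ i, fderiv ℝ g x (bv i) * x i := by
    rw [clm_apply_self]
  have e2 : ∀ z : ℂ, inner ℝ z (Xd u x) = ∑ i, x i * inner ℝ z (pd u i x) := by
    intro z; rw [Xd, inner_sum]; simp only [real_inner_smul_right]
  have e1 : ‖Xd u x‖ ^ 2 = ∑ i, x i * inner ℝ (Xd u x) (pd u i x) := by
    rw [← real_inner_self_eq_norm_sq]; exact e2 _
  have e3 : ∀ z : ℂ, inner ℝ z (lap u x) = ∑ i, inner ℝ z (fderiv ℝ (pd u i) x (bv i)) := by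
    intro z; rw [lap, inner_sum]
  have e4 : nSq u x = ∑ i, inner ℝ (pd u i x) (pd u i x) := by
    simp only [nSq, real_inner_self_eq_norm_sq]
  have e5 : ∑ i, inner ℝ (∑ j, x j • fderiv ℝ (pd u j) x (bv i)) (pd u i x)
      = ∑ i, x i * ∑ j, inner ℝ (pd u j x) (fderiv ℝ (pd u j) x (bv i)) := by
    simp only [sum_inner, Finset.mul_sum]
    rw [Finset.sum_comm]
    refine Finset.sum_congr rfl fun i _ => Finset.sum_congr rfl fun j _ => ?_
    rw [real_inner_smul_left, pd_symm hu x j i, real_inner_comm]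
  simp only [fderiv_Fld hu hA hB hg, hA₁, hB₁]
  rw [e3, e3, e1, e2, ← hg₁, hgx, hx2]
  have expand : ∀ i, (2 * (A₁ * x i * inner ℝ (Xd u x) (pd u i x)
        + A x * (inner ℝ (Xd u x) (fderiv ℝ (pd u i) x (bv i))
          + inner ℝ (pd u i x + ∑ j, x j • fderiv ℝ (pd u j) x (bv i)) (pd u i x)))
      - ((A₁ * x i * x i + A x) * nSq u x
        + A x * x i * ∑ j, 2 * inner ℝ (pd u j x) (fderiv ℝ (pd u j) x (bv i)))
      + (B₁ * x i * inner ℝ (u x) (pd u i x)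
        + B x * (inner ℝ (u x) (fderiv ℝ (pd u i) x (bv i)) + inner ℝ (pd u i x) (pd u i x)))
      + ((fderiv ℝ g x (bv i) * x i + g x) * ‖u x‖ ^ 2
        + g x * x i * (2 * inner ℝ (u x) (pd u i x))))
      = 2 * A₁ * (x i * inner ℝ (Xd u x) (pd u i x))
        + 2 * A x * inner ℝ (Xd u x) (fderiv ℝ (pd u i) x (bv i))
        + (2 * A x + B x) * inner ℝ (pd u i x) (pd u i x)
        + 2 * A x * inner ℝ (∑ j, x j • fderiv ℝ (pd u j) x (bv i)) (pd u i x)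
        - A₁ * nSq u x * (x i * x i) - A x * nSq u x
        - 2 * A x * (x i * ∑ j, inner ℝ (pd u j x) (fderiv ℝ (pd u j) x (bv i)))
        + (B₁ + 2 * g x) * (x i * inner ℝ (u x) (pd u i x))
        + B x * inner ℝ (u x) (fderiv ℝ (pd u i) x (bv i))
        + ‖u x‖ ^ 2 * (fderiv ℝ g x (bv i) * x i) + g x * ‖u x‖ ^ 2 := by
    intro i
    rw [inner_add_left, ← Finset.mul_sum]; ring
  rw [Finset.sum_congr rfl fun i _ => expand i]
  simp only [Finset.sum_add_distrib, Finset.sum_sub_distrib, ← Finset.mul_sum, e5, ← e4,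
    Finset.sum_const, Finset.card_fin, nsmul_eq_mul]
  ring

end

/-! ### Energy identities -/

section
variable {d : ℕ} {u : Ed d → ℂ}

theorem integrable_lin3 {X : Type*} [MeasurableSpace X] {μ : Measure X} {f g h : X → ℝ}
    (a b c : ℝ) (hf : Integrable f μ) (hg : Integrable g μ) (hh : Integrable h μ) :
    Integrable (fun x => a * f x + b * g x + c * h x) μ :=
  ((hf.const_mul a).add (hg.const_mul b)).add (hh.const_mul c)

theorem integral_lin3 {X : Type*} [MeasurableSpace X] {μ : Measure X} {f g h : X → ℝ}
    (a b c : ℝ) (hf : Integrable f μ) (hg : Integrable g μ) (hh : Integrable h μ) :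
    ∫ x, (a * f x + b * g x + c * h x) ∂μ = a * ∫ x, f x ∂μ + b * ∫ x, g x ∂μ + c * ∫ x, h x ∂μ := by
  have h1 := integral_add ((hf.const_mul a).add (hg.const_mul b)) (hh.const_mul c)
  have h2 := integral_add (hf.const_mul a) (hg.const_mul b)
  simp only [Pi.add_apply] at h1 h2
  rw [h1, h2, integral_const_mul, integral_const_mul, integral_const_mul]

theorem nSq_nonneg (u : Ed d → ℂ) (x : Ed d) : 0 ≤ nSq u x :=
  Finset.sum_nonneg fun _ _ => by positivity

theorem norm_pd_sq_le (u : Ed d → ℂ) (i : Fin d) (x : Ed d) : ‖pd u i x‖ ^ 2 ≤ nSq u x :=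
  Finset.single_le_sum (f := fun i => ‖pd u i x‖ ^ 2) (fun _ _ => by positivity) (Finset.mem_univ i)

theorem norm_Xd_sq_le (u : Ed d → ℂ) (x : Ed d) : ‖Xd u x‖ ^ 2 ≤ ‖x‖ ^ 2 * nSq u x := by
  have h1 : ‖Xd u x‖ ≤ ∑ j, |x j| * ‖pd u j x‖ := by
    refine (norm_sum_le _ _).trans (Finset.sum_le_sum fun j _ => ?_)
    rw [norm_smul, Real.norm_eq_abs]
  calc ‖Xd u x‖ ^ 2 ≤ (∑ j, |x j| * ‖pd u j x‖) ^ 2 := by gcongr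
    _ ≤ (∑ j, |x j| ^ 2) * ∑ j, ‖pd u j x‖ ^ 2 := Finset.sum_mul_sq_le_sq_mul_sq _ _ _
    _ = _ := by rw [EuclideanSpace.norm_sq_eq, nSq]; simp

theorem inner_I_self (z : ℂ) : inner ℝ z (Complex.I * z) = 0 := by
  simp [Complex.inner]; ring

theorem inner_I_self' (z : ℂ) : inner ℝ (Complex.I * z) z = 0 := by
  rw [real_inner_comm, inner_I_self]

theorem continuous_nSq (hu : ContDiff ℝ 2 u) : Continuous (nSq u) := (contDiff_nSq hu).continuous

theorem abs_inner_le_half (z w : ℂ) : |inner ℝ z w| ≤ (‖z‖ ^ 2 + ‖w‖ ^ 2) / 2 := by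
  refine (abs_real_inner_le_norm z w).trans ?_
  nlinarith [sq_nonneg (‖z‖ - ‖w‖)]

theorem norm_Xd_le (u : Ed d → ℂ) (x : Ed d) : ‖Xd u x‖ ≤ ‖x‖ * √(nSq u x) := by
  refine abs_le_of_sq_le_sq' ?_ (by positivity) |>.2
  rw [mul_pow, Real.sq_sqrt (nSq_nonneg u x)]
  exact norm_Xd_sq_le u x

/-- Cauchy–Schwarz for `b z·(x·∇u)`; the next two bounds are Young's inequality applied to it. -/
theorem abs_mul_inner_Xd_le' {b K B : ℝ} (z : ℂ) (u : Ed d → ℂ) (x : Ed d)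
    (h : |b| * ‖x‖ ≤ K * B) :
    |b * inner ℝ z (Xd u x)| ≤ K * B * (‖z‖ * √(nSq u x)) := by
  rw [abs_mul]
  calc |b| * |inner ℝ z (Xd u x)| ≤ |b| * (‖z‖ * (‖x‖ * √(nSq u x))) := by
        gcongr; exact (abs_real_inner_le_norm _ _).trans (by gcongr; exact norm_Xd_le u x)
    _ = (|b| * ‖x‖) * (‖z‖ * √(nSq u x)) := by ring
    _ ≤ _ := by gcongr

/-- `|b z·(x·∇u)| ≤ (K B/2)(|z|²+|∇u|²)` whenever `|b||x| ≤ K B`. -/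
theorem abs_mul_inner_Xd_le {b K B : ℝ} (z : ℂ) (u : Ed d → ℂ) (x : Ed d)
    (h : |b| * ‖x‖ ≤ K * B) :
    |b * inner ℝ z (Xd u x)| ≤ K / 2 * (B * ‖z‖ ^ 2 + B * nSq u x) := by
  have h2 : ‖z‖ * √(nSq u x) ≤ (‖z‖ ^ 2 + nSq u x) / 2 := by
    nlinarith [sq_nonneg (‖z‖ - √(nSq u x)), Real.sq_sqrt (nSq_nonneg u x)]
  refine (abs_mul_inner_Xd_le' z u x h).trans ?_
  have h0 : 0 ≤ K * B := le_trans (by positivity) h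
  nlinarith [mul_le_mul_of_nonneg_left h2 h0]

/-- `|b z·(x·∇u)| ≤ B |∇u|²/2 + K² B |z|²/2` whenever `|b||x| ≤ K B`. -/
theorem abs_mul_inner_Xd_le_sq {b K B : ℝ} (hB : 0 ≤ B) (z : ℂ) (u : Ed d → ℂ) (x : Ed d)
    (h : |b| * ‖x‖ ≤ K * B) :
    |b * inner ℝ z (Xd u x)| ≤ 1 / 2 * (B * nSq u x) + K ^ 2 / 2 * (B * ‖z‖ ^ 2) := by
  have h2 : K * (‖z‖ * √(nSq u x)) ≤ (K ^ 2 * ‖z‖ ^ 2 + nSq u x) / 2 := by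
    nlinarith [sq_nonneg (K * ‖z‖ - √(nSq u x)), Real.sq_sqrt (nSq_nonneg u x)]
  refine (abs_mul_inner_Xd_le' z u x h).trans ?_
  nlinarith [mul_le_mul_of_nonneg_left h2 hB]

variable {B B₁ W : Ed d → ℝ} {f : Ed d → ℂ} {K c₀ s : ℝ}

/-- Real part of the equation tested against `B ū`: the gradient is controlled by `u` and `f`. -/
theorem energy_re (hd : 2 ≤ d) (hu : ContDiff ℝ 2 u) (hBc : ContDiff ℝ 1 B) (hB0 : ∀ x, 0 ≤ B x)
    (hB₁ : ∀ x i, fderiv ℝ B x (bv i) = B₁ x * x i) (hK : ∀ x, |B₁ x| * ‖x‖ ≤ K * B x)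
    (hW : ∀ x, |W x| ≤ c₀)
    (heq : ∀ x, lap u x = W x • u x + s • (Complex.I * u x) - f x)
    (hS : Integrable fun x => B x * ‖u x‖ ^ 2) (hN : Integrable fun x => B x * nSq u x)
    (hfu : Integrable fun x => B x * (‖f x‖ * ‖u x‖)) :
    ∫ x, B x * nSq u x ≤ (2 * c₀ + K ^ 2) * (∫ x, B x * ‖u x‖ ^ 2)
      + 2 * (∫ x, B x * (‖f x‖ * ‖u x‖)) := by
  have key := integral_le_zero_of_le_div hd (Fld u (fun _ => 0) B (fun _ => 0))
    (fun x => B x * ‖u x‖ ^ 2 + B x * nSq u x)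
    (fun x => 1 / 2 * (B x * nSq u x) + -(c₀ + K ^ 2 / 2) * (B x * ‖u x‖ ^ 2)
      + -1 * (B x * (‖f x‖ * ‖u x‖)))
    (fun i x _ => contDiffAt_Fld hu contDiffAt_const hBc.contDiffAt contDiffAt_const i)
    ((hBc.continuous.mul (hu.continuous.norm.pow 2)).add (hBc.continuous.mul (continuous_nSq hu)))
    (hS.add hN) ?_ (integrable_lin3 _ _ _ hN hS hfu) ?_
  · rw [integral_lin3 _ _ _ hN hS hfu] at key
    linarith
  · intro i x
    have h1 := abs_inner_le_half (u x) (pd u i x)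
    have h2 := norm_pd_sq_le u i x
    simp only [Fld, zero_mul, mul_zero, zero_add, add_zero, sub_zero]
    rw [abs_mul, abs_of_nonneg (hB0 x), ← mul_add]
    refine mul_le_mul_of_nonneg_left (h1.trans ?_) (hB0 x)
    have := nSq_nonneg u x
    nlinarith [sq_nonneg ‖u x‖]
  · intro x _
    rw [div_Fld hu (A₁ := 0) (g₁ := 0) contDiffAt_const hBc.contDiffAt contDiffAt_const
      (by simp) (hB₁ x) (by simp)]
    have h1 := abs_mul_inner_Xd_le_sq (hB0 x) (u x) u x (hK x)
    have h2 : inner ℝ (u x) (lap u x) = W x * ‖u x‖ ^ 2 - inner ℝ (u x) (f x) := by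
      rw [heq x, inner_sub_right, inner_add_right, real_inner_smul_right, real_inner_smul_right,
        inner_I_self, real_inner_self_eq_norm_sq]; ring
    have h3 : inner ℝ (u x) (f x) ≤ ‖f x‖ * ‖u x‖ := by
      rw [mul_comm]; exact real_inner_le_norm _ _
    have h4 : B x * inner ℝ (u x) (f x) ≤ B x * (‖f x‖ * ‖u x‖) :=
      mul_le_mul_of_nonneg_left h3 (hB0 x)
    have h5 : -c₀ * (B x * ‖u x‖ ^ 2) ≤ W x * (B x * ‖u x‖ ^ 2) :=
      mul_le_mul_of_nonneg_right (abs_le.1 (hW x)).1 (mul_nonneg (hB0 x) (by positivity))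
    rw [h2]
    have h6 := (abs_le.1 h1).1
    simp only [mul_zero, zero_mul]
    linarith

/-- Imaginary part of the equation tested against `B ū`: the absorption controls `ε ∫ B|u|²`. -/
theorem energy_im {ε σ : ℝ} (hd : 2 ≤ d) (hu : ContDiff ℝ 2 u) (hBc : ContDiff ℝ 1 B)
    (hB0 : ∀ x, 0 ≤ B x) (hσ : |σ| = 1)
    (hB₁ : ∀ x i, fderiv ℝ B x (bv i) = B₁ x * x i) (hK : ∀ x, |B₁ x| * ‖x‖ ≤ K * B x)
    (heq : ∀ x, lap u x = W x • u x + (σ * ε) • (Complex.I * u x) - f x)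
    (hS : Integrable fun x => B x * ‖u x‖ ^ 2) (hN : Integrable fun x => B x * nSq u x)
    (hfu : Integrable fun x => B x * (‖f x‖ * ‖u x‖)) :
    ε * (∫ x, B x * ‖u x‖ ^ 2) ≤ (∫ x, B x * (‖f x‖ * ‖u x‖))
      + K / 2 * ((∫ x, B x * ‖u x‖ ^ 2) + ∫ x, B x * nSq u x) := by
  have hσ2 : σ * σ = 1 := by rw [← abs_mul_abs_self, hσ, one_mul]
  have huI : ContDiff ℝ 2 (fun x => Complex.I * u x) := contDiff_const.mul hu
  have hnI : ∀ z : ℂ, ‖Complex.I * z‖ = ‖z‖ := fun z => by simp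
  set F : Fin d → Ed d → ℝ := fun i x => σ * (B x * inner ℝ (Complex.I * u x) (pd u i x)) with hF
  have hFc : ∀ i, ContDiff ℝ 1 (F i) := fun i => contDiff_const.mul (hBc.mul
    ((huI.of_le (by norm_num)).inner ℝ (contDiff_pd hu i)))
  have hdF : ∀ x, ∑ i, fderiv ℝ (F i) x (bv i) = σ * (B₁ x * inner ℝ (Complex.I * u x) (Xd u x)
      + B x * inner ℝ (Complex.I * u x) (lap u x)) := by
    intro x
    have h0 : ∀ i : Fin d, x + (0:ℝ) • bv i = x := by simp
    have h1 : ∀ i, fderiv ℝ (F i) x (bv i) = σ * (B₁ x * (x i * inner ℝ (Complex.I * u x) (pd u i x))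
        + B x * inner ℝ (Complex.I * u x) (fderiv ℝ (pd u i) x (bv i))) := by
      intro i
      have du : HasDerivAt (fun t : ℝ => u (x + t • bv i)) (pd u i x) 0 :=
        hasDerivAt_line (hu.differentiable two_ne_zero x) (bv i)
      have dB := hasDerivAt_line (hBc.differentiable one_ne_zero x) (bv i)
      have dp := hasDerivAt_line ((contDiff_pd hu i).differentiable one_ne_zero x) (bv i)
      have hd := (dB.mul ((du.const_mul Complex.I).inner ℝ dp)).const_mul σ
      rw [(hasDerivAt_line ((hFc i).differentiable one_ne_zero x) (bv i)).unique hd]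
      simp only [h0, hB₁, inner_I_self']
      ring
    simp only [h1, ← Finset.mul_sum, Finset.sum_add_distrib]
    rw [lap, Xd, inner_sum, inner_sum]
    simp only [real_inner_smul_right]
  have key := integral_le_zero_of_le_div hd F (fun x => B x * ‖u x‖ ^ 2 + B x * nSq u x)
    (fun x => (ε - K / 2) * (B x * ‖u x‖ ^ 2) + -1 * (B x * (‖f x‖ * ‖u x‖))
      + -(K / 2) * (B x * nSq u x))
    (fun i x _ => (hFc i).contDiffAt)
    ((hBc.continuous.mul (hu.continuous.norm.pow 2)).add (hBc.continuous.mul (continuous_nSq hu)))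
    (hS.add hN) ?_ (integrable_lin3 _ _ _ hS hfu hN) ?_
  · rw [integral_lin3 _ _ _ hS hfu hN] at key
    linarith
  · intro i x
    have h1 := abs_inner_le_half (Complex.I * u x) (pd u i x)
    have h2 := norm_pd_sq_le u i x
    simp only [hF]
    rw [abs_mul, hσ, one_mul, abs_mul, abs_of_nonneg (hB0 x), ← mul_add]
    refine mul_le_mul_of_nonneg_left (h1.trans ?_) (hB0 x)
    have := nSq_nonneg u x
    rw [hnI]
    nlinarith [sq_nonneg ‖u x‖]
  · intro x _
    rw [hdF]
    have h1 := abs_mul_inner_Xd_le (Complex.I * u x) u x (hK x)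
    have h2 : inner ℝ (Complex.I * u x) (lap u x)
        = σ * ε * ‖u x‖ ^ 2 - inner ℝ (Complex.I * u x) (f x) := by
      rw [heq x, inner_sub_right, inner_add_right, real_inner_smul_right, real_inner_smul_right,
        inner_I_self', real_inner_self_eq_norm_sq, hnI]; ring
    have h3 : |inner ℝ (Complex.I * u x) (f x)| ≤ ‖f x‖ * ‖u x‖ := by
      exact (abs_real_inner_le_norm _ _).trans (by rw [hnI]; exact (mul_comm _ _).le)
    have h3' : σ * inner ℝ (Complex.I * u x) (f x) ≤ ‖f x‖ * ‖u x‖ := by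
      refine (le_abs_self _).trans ?_
      rwa [abs_mul, hσ, one_mul]
    have h4 : B x * (σ * inner ℝ (Complex.I * u x) (f x)) ≤ B x * (‖f x‖ * ‖u x‖) :=
      mul_le_mul_of_nonneg_left h3' (hB0 x)
    have h6 : -(K / 2 * (B x * ‖u x‖ ^ 2 + B x * nSq u x)) ≤
        σ * (B₁ x * inner ℝ (Complex.I * u x) (Xd u x)) := by
      refine (abs_le.1 ?_).1
      rw [abs_mul, hσ, one_mul]
      rwa [hnI] at h1
    have h7 : σ * (B x * (σ * ε * ‖u x‖ ^ 2)) = ε * (B x * ‖u x‖ ^ 2) := by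
      linear_combination ε * B x * ‖u x‖ ^ 2 * hσ2
    rw [h2]
    linarith

end

/-! ### Smooth weights and global square integrability -/

section
variable {d : ℕ} {u : Ed d → ℂ}

theorem inner_bv (x : Ed d) (i : Fin d) : inner ℝ x (bv i) = x i := by
  simp [bv, EuclideanSpace.inner_single_right]

/-- The weight `(1 + t²|x|²)^{-m}`. -/
def wt (m t : ℝ) (x : Ed d) : ℝ := (1 + t ^ 2 * ‖x‖ ^ 2) ^ (-m)

theorem wt_base_pos (t : ℝ) (x : Ed d) : 0 < 1 + t ^ 2 * ‖x‖ ^ 2 := by positivity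

theorem wt_pos (m t : ℝ) (x : Ed d) : 0 < wt m t x := Real.rpow_pos_of_pos (wt_base_pos t x) _

theorem contDiff_wt (m t : ℝ) : ContDiff ℝ 1 (wt m t : Ed d → ℝ) :=
  (contDiff_const.add (contDiff_const.mul (contDiff_norm_sq ℝ))).rpow_const_of_ne
    fun x => (wt_base_pos t x).ne'

theorem fderiv_wt (m t : ℝ) (x v : Ed d) :
    fderiv ℝ (wt m t) x v = -(2 * m * t ^ 2) * wt (m + 1) t x * inner ℝ x v := by
  have h1 : HasFDerivAt (fun y : Ed d => 1 + t ^ 2 * ‖y‖ ^ 2) (t ^ 2 • (2 • innerSL ℝ x)) x :=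
    (((hasStrictFDerivAt_norm_sq x).hasFDerivAt).const_mul (t ^ 2)).const_add 1
  have h2 := h1.rpow_const (p := -m) (Or.inl (wt_base_pos t x).ne')
  have h3 : fderiv ℝ (wt m t) x = _ := h2.fderiv
  rw [h3]
  simp only [wt, smul_apply, innerSL_apply_apply, smul_eq_mul, nsmul_eq_mul]
  rw [show -(m + 1) = -m - 1 by ring]
  push_cast
  ring

theorem wt_succ (m t : ℝ) (x : Ed d) : wt m t x = wt (m + 1) t x * (1 + t ^ 2 * ‖x‖ ^ 2) := by
  rw [wt, wt, ← Real.rpow_add_one (wt_base_pos t x).ne']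
  congr 1; ring

theorem wt_deriv_bound {m t : ℝ} (hm : 0 ≤ m) (ht : 0 ≤ t) (x : Ed d) :
    |-(2 * m * t ^ 2) * wt (m + 1) t x| * ‖x‖ ≤ m * t * wt m t x := by
  have := wt_pos (m + 1) t x
  rw [wt_succ m, abs_mul, abs_neg, abs_of_nonneg (by positivity), abs_of_pos this]
  have h : 0 ≤ m * t * wt (m + 1) t x := by positivity
  nlinarith [mul_nonneg h (sq_nonneg (1 - t * ‖x‖))]

theorem wt_le_one {m : ℝ} (hm : 0 ≤ m) (t : ℝ) (x : Ed d) : wt m t x ≤ 1 :=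
  Real.rpow_le_one_of_one_le_of_nonpos (by nlinarith [sq_nonneg (t * ‖x‖)]) (by linarith)

theorem wt_le_mul {m t : ℝ} (hm : 0 ≤ m) (ht : 0 < t) (ht1 : t ≤ 1) (x : Ed d) :
    wt m t x ≤ (t ^ 2) ^ (-m) * wt m 1 x := by
  rw [wt, wt, ← Real.mul_rpow (by positivity) (by positivity)]
  refine Real.rpow_le_rpow_of_nonpos (by positivity) ?_ (by linarith)
  nlinarith

theorem integrable_wt_mul {m t : ℝ} (hm : 0 ≤ m) (ht : 0 < t) (ht1 : t ≤ 1) {G : Ed d → ℝ}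
    (hG0 : ∀ x, 0 ≤ G x) (hG : AEStronglyMeasurable G)
    (hi : Integrable fun x => wt m 1 x * G x) : Integrable fun x => wt m t x * G x := by
  refine (hi.const_mul ((t ^ 2) ^ (-m))).mono'
    ((contDiff_wt m t).continuous.aestronglyMeasurable.mul hG) (Filter.Eventually.of_forall fun x => ?_)
  rw [Real.norm_of_nonneg (mul_nonneg (wt_pos _ _ _).le (hG0 x)), ← mul_assoc]
  exact mul_le_mul_of_nonneg_right (wt_le_mul hm ht ht1 x) (hG0 x)

/-- Fatou's lemma for the weights `wt m (t/(n+1))`, which tend to `1`. -/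
theorem integrable_of_wt_bound {m t M : ℝ} {G : Ed d → ℝ}
    (hG0 : ∀ x, 0 ≤ G x) (hG : Continuous G)
    (hi : ∀ n : ℕ, Integrable fun x => wt m (t / (n + 1)) x * G x)
    (hM : ∀ n : ℕ, ∫ x, wt m (t / (n + 1)) x * G x ≤ M) :
    Integrable G ∧ ∫ x, G x ≤ M := by
  have hM0 : 0 ≤ M := (integral_nonneg fun x => mul_nonneg (wt_pos _ _ _).le (hG0 x)).trans (hM 0)
  have key : ∫⁻ x, ENNReal.ofReal (G x) ≤ ENNReal.ofReal M := by
    have h1 : ∀ x, Filter.liminf (fun n : ℕ => ENNReal.ofReal (wt m (t / (n + 1)) x * G x))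
        Filter.atTop = ENNReal.ofReal (G x) := by
      intro x
      apply Filter.Tendsto.liminf_eq
      refine (ENNReal.continuous_ofReal.tendsto _).comp ?_
      have h2 : Filter.Tendsto (fun n : ℕ => t / ((n : ℝ) + 1)) Filter.atTop (nhds 0) :=
        tendsto_const_div_atTop_nhds_zero_nat t |>.comp (Filter.tendsto_add_atTop_nat 1)
          |>.congr fun n => by simp
      have h3 : Continuous fun s : ℝ => wt m s x * G x := by
        unfold wt
        refine Continuous.mul (Continuous.rpow_const (by fun_prop) ?_) continuous_const
        exact fun s => Or.inl (wt_base_pos s x).ne'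
      have h4 := (h3.tendsto 0).comp h2
      simpa [wt, Function.comp_def] using h4
    simp_rw [← h1]
    refine (lintegral_liminf_le fun n => ?_).trans ?_
    · exact (ENNReal.continuous_ofReal.comp ((contDiff_wt m _).continuous.mul hG)).measurable
    · refine Filter.liminf_le_of_frequently_le' (Filter.Frequently.of_forall fun n => ?_)
      rw [← ofReal_integral_eq_lintegral_ofReal (hi n)
        (Filter.Eventually.of_forall fun x => mul_nonneg (wt_pos _ _ _).le (hG0 x))]
      exact ENNReal.ofReal_le_ofReal (hM n)
  have hGi : Integrable G := by
    refine ⟨hG.aestronglyMeasurable, ?_⟩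
    rw [hasFiniteIntegral_iff_ofReal (Filter.Eventually.of_forall hG0)]
    exact key.trans_lt ENNReal.ofReal_lt_top
  refine ⟨hGi, ?_⟩
  rw [← ofReal_integral_eq_lintegral_ofReal hGi (Filter.Eventually.of_forall hG0)] at key
  exact (ENNReal.ofReal_le_ofReal_iff hM0).1 key

variable {W : Ed d → ℝ} {f : Ed d → ℂ} {m c₀ ε σ : ℝ}

/-- Absorption makes `u` and `∇u` square integrable, with `ε‖u‖²_{H¹} ≲ ∫|f||u|`. -/
theorem global_energy (hd : 2 ≤ d) (hm : 0 < m) (hu : ContDiff ℝ 2 u)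
    (hσ : |σ| = 1) (hε : 0 < ε) (hε1 : ε < 1) (hW : ∀ x, |W x| ≤ c₀)
    (heq : ∀ x, lap u x = W x • u x + (σ * ε) • (Complex.I * u x) - f x)
    (hfm : AEStronglyMeasurable f)
    (hS : Integrable fun x => wt m 1 x * ‖u x‖ ^ 2) (hN : Integrable fun x => wt m 1 x * nSq u x)
    (hfu : Integrable fun x => ‖f x‖ * ‖u x‖) :
    Integrable (fun x => ‖u x‖ ^ 2) ∧ Integrable (fun x => nSq u x) ∧
    ε * (∫ x, ‖u x‖ ^ 2) ≤ 4 * (∫ x, ‖f x‖ * ‖u x‖) ∧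
    ε * (∫ x, nSq u x) ≤ (8 * c₀ + 6) * (∫ x, ‖f x‖ * ‖u x‖) := by
  have hc₀ : 0 ≤ c₀ := (abs_nonneg _).trans (hW 0)
  set J := ∫ x, ‖f x‖ * ‖u x‖ with hJ
  have hJ0 : 0 ≤ J := integral_nonneg fun x => by positivity
  set t₀ := ε / (2 * (m + 1) * (c₀ + 1)) with ht₀
  have ht₀0 : 0 < t₀ := by positivity
  have ht₀e : t₀ * (2 * (m + 1) * (c₀ + 1)) = ε := by rw [ht₀]; field_simp
  have main : ∀ t, 0 < t → t ≤ t₀ →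
      ((Integrable fun x => wt m t x * ‖u x‖ ^ 2) ∧ (Integrable fun x => wt m t x * nSq u x)) ∧
      (∫ x, wt m t x * ‖u x‖ ^ 2) ≤ 4 * J / ε ∧
      (∫ x, wt m t x * nSq u x) ≤ (8 * c₀ + 6) * J / ε := by
    intro t ht htt
    have hte : t * (2 * (m + 1) * (c₀ + 1)) ≤ ε := by
      rw [← ht₀e]; gcongr
    have hp : 0 ≤ t * m * c₀ := by positivity
    have hp2 : 0 ≤ t * m := by positivity
    have hp3 : 0 ≤ t * c₀ := by positivity
    have ht1 : t ≤ 1 := by nlinarith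
    have hmt1 : m * t ≤ 1 := by nlinarith
    have hmt2 : m * t * (c₀ + 1) ≤ ε / 2 := by nlinarith
    have iS := integrable_wt_mul (G := fun x => ‖u x‖ ^ 2) hm.le ht ht1 (fun x => by positivity)
      (hu.continuous.norm.pow 2).aestronglyMeasurable hS
    have iN := integrable_wt_mul hm.le ht ht1 (nSq_nonneg u)
      (continuous_nSq hu).aestronglyMeasurable hN
    have ij : Integrable fun x => wt m t x * (‖f x‖ * ‖u x‖) := by
      refine hfu.mono' ((contDiff_wt m t).continuous.aestronglyMeasurable.mul
        (hfm.norm.mul hu.continuous.norm.aestronglyMeasurable))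
        (Filter.Eventually.of_forall fun x => ?_)
      rw [Real.norm_of_nonneg (mul_nonneg (wt_pos _ _ _).le (by positivity))]
      exact mul_le_of_le_one_left (by positivity) (wt_le_one hm.le t x)
    have hj : ∫ x, wt m t x * (‖f x‖ * ‖u x‖) ≤ J := integral_mono ij hfu fun x =>
      mul_le_of_le_one_left (by positivity) (wt_le_one hm.le t x)
    have e1 := energy_re hd hu (contDiff_wt m t) (fun x => (wt_pos m t x).le)
      (B₁ := fun x => -(2 * m * t ^ 2) * wt (m + 1) t x)
      (fun x i => by rw [fderiv_wt, inner_bv]) (wt_deriv_bound hm.le ht.le) hW heq iS iN ij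
    have e2 := energy_im hd hu (contDiff_wt m t) (fun x => (wt_pos m t x).le) hσ
      (B₁ := fun x => -(2 * m * t ^ 2) * wt (m + 1) t x)
      (fun x i => by rw [fderiv_wt, inner_bv]) (wt_deriv_bound hm.le ht.le) heq iS iN ij
    have hs0 : 0 ≤ ∫ x, wt m t x * ‖u x‖ ^ 2 :=
      integral_nonneg fun x => mul_nonneg (wt_pos _ _ _).le (by positivity)
    generalize (∫ x, wt m t x * ‖u x‖ ^ 2) = s at *
    generalize (∫ x, wt m t x * nSq u x) = n at *
    generalize (∫ x, wt m t x * (‖f x‖ * ‖u x‖)) = j at *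
    have hK0 : 0 ≤ m * t := by positivity
    generalize m * t = K at *
    have hK2 : K ^ 2 ≤ 1 := by nlinarith
    have e3 : n ≤ (2 * c₀ + 1) * s + 2 * J := by nlinarith
    have e4 : ε * s ≤ 4 * J := by
      have h1 : K / 2 * (s + n) ≤ K / 2 * ((2 * c₀ + 2) * s + 2 * J) :=
        mul_le_mul_of_nonneg_left (by linarith) (by linarith)
      have h2 : K * (c₀ + 1) * s ≤ ε / 2 * s := by gcongr
      have h3 : K * J ≤ 1 * J := by gcongr
      nlinarith
    refine ⟨⟨iS, iN⟩, (le_div_iff₀ hε).2 (by linarith), (le_div_iff₀ hε).2 ?_⟩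
    have h4 : ε * n ≤ ε * ((2 * c₀ + 1) * s + 2 * J) := by gcongr
    have h5 : (2 * c₀ + 1) * (ε * s) ≤ (2 * c₀ + 1) * (4 * J) := by gcongr
    have h6 : ε * J ≤ 1 * J := by gcongr
    nlinarith
  have hn : ∀ n : ℕ, 0 < t₀ / ((n : ℝ) + 1) ∧ t₀ / ((n : ℝ) + 1) ≤ t₀ := fun n =>
    ⟨by positivity, div_le_self ht₀0.le (by have : (0:ℝ) ≤ n := n.cast_nonneg
                                            linarith)⟩
  have r1 := integrable_of_wt_bound (m := m) (t := t₀) (G := fun x => ‖u x‖ ^ 2)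
    (fun x => by positivity) (hu.continuous.norm.pow 2)
    (fun n => (main _ (hn n).1 (hn n).2).1.1) (fun n => (main _ (hn n).1 (hn n).2).2.1)
  have r2 := integrable_of_wt_bound (m := m) (t := t₀) (G := nSq u)
    (nSq_nonneg u) (continuous_nSq hu)
    (fun n => (main _ (hn n).1 (hn n).2).1.2) (fun n => (main _ (hn n).1 (hn n).2).2.2)
  refine ⟨r1.1, r2.1, ?_, ?_⟩
  · have := r1.2; rw [le_div_iff₀ hε] at this; linarith
  · have := r2.2; rw [le_div_iff₀ hε] at this; linarith

end

/-! ### From the region away from the origin to the full estimate -/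

section
variable {d : ℕ} {u : Ed d → ℂ} {m : ℝ}

theorem wt_one_succ (m : ℝ) (x : Ed d) : wt m 1 x = wt (m + 1) 1 x * (1 + ‖x‖ ^ 2) := by
  rw [wt_succ]; simp

theorem wt_mul_neg (m t : ℝ) (x : Ed d) : wt m t x * wt (-m) t x = 1 := by
  rw [wt, wt, ← Real.rpow_add (wt_base_pos t x)]; simp

theorem integrable_wt_succ {m : ℝ} {S : Ed d → ℝ} (hS0 : ∀ x, 0 ≤ S x)
    (hSm : AEStronglyMeasurable S) (hS : Integrable fun x => wt m 1 x * S x) :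
    Integrable (fun x => wt (m + 1) 1 x * S x) ∧
    Integrable (fun x => ‖x‖ ^ 2 * wt (m + 1) 1 x * S x) := by
  have hc := (contDiff_wt (d := d) (m + 1) 1).continuous
  constructor
  · refine hS.mono' (hc.aestronglyMeasurable.mul hSm) (Filter.Eventually.of_forall fun x => ?_)
    have := wt_pos (m + 1) 1 x
    have h0 := hS0 x
    rw [Real.norm_of_nonneg (by positivity), wt_one_succ m]
    gcongr
    nlinarith [sq_nonneg ‖x‖]
  · refine hS.mono' (((continuous_norm.pow 2).mul hc).aestronglyMeasurable.mul hSm)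
      (Filter.Eventually.of_forall fun x => ?_)
    have := wt_pos (m + 1) 1 x
    have h0 := hS0 x
    rw [Real.norm_of_nonneg (by positivity), wt_one_succ m, mul_comm (‖x‖ ^ 2)]
    gcongr
    linarith

/-- The mass of `u` near the origin is controlled by the mass away from it, up to a small multiple
of the gradient; this is the divergence theorem for the field `(1+|x|²)^{-m-1}|u|² x`. -/
theorem low_part (hd : 2 ≤ d) (hm : 0 < m) (hu : ContDiff ℝ 2 u) {η : ℝ} (hη : 0 < η)
    (hS : Integrable fun x => wt m 1 x * ‖u x‖ ^ 2) (hN : Integrable fun x => wt m 1 x * nSq u x) :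
    ∫ x, wt (m + 1) 1 x * ‖u x‖ ^ 2 ≤
      (2 * (m + 1) + 1 / η) * (∫ x, ‖x‖ ^ 2 * wt (m + 1) 1 x * ‖u x‖ ^ 2)
        + η * ∫ x, wt m 1 x * nSq u x := by
  obtain ⟨i1, i2⟩ := integrable_wt_succ (S := fun x => ‖u x‖ ^ 2) (fun x => by positivity)
    (hu.continuous.norm.pow 2).aestronglyMeasurable hS
  have key := integral_le_zero_of_le_div hd (Fld u (fun _ => 0) (fun _ => 0) (wt (m + 1) 1))
    (fun x => wt m 1 x * ‖u x‖ ^ 2)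
    (fun x => 1 * (wt (m + 1) 1 x * ‖u x‖ ^ 2)
      + -(2 * (m + 1) + 1 / η) * (‖x‖ ^ 2 * wt (m + 1) 1 x * ‖u x‖ ^ 2)
      + -η * (wt m 1 x * nSq u x))
    (fun i x _ => contDiffAt_Fld hu contDiffAt_const contDiffAt_const
      (contDiff_wt _ _).contDiffAt i)
    ((contDiff_wt m 1).continuous.mul (hu.continuous.norm.pow 2)) hS ?_
    (integrable_lin3 _ _ _ i1 i2 hN) ?_
  · rw [integral_lin3 _ _ _ i1 i2 hN] at key
    linarith
  · intro i x
    have hw := wt_pos (m + 1) 1 x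
    have hxi : |x i| ≤ ‖x‖ := PiLp.norm_apply_le x i
    simp only [Fld, zero_mul, mul_zero, zero_add, sub_zero]
    rw [abs_mul, abs_mul, abs_of_pos hw, abs_of_nonneg (by positivity : 0 ≤ ‖u x‖ ^ 2),
      wt_one_succ m]
    gcongr
    nlinarith [sq_nonneg (‖x‖ - 1), norm_nonneg x]
  · intro x _
    rw [div_Fld hu (A₁ := 0) (B₁ := 0) contDiffAt_const contDiffAt_const
      (contDiff_wt _ _).contDiffAt (by simp) (by simp) rfl, fderiv_wt]
    have hw := wt_pos (m + 2) 1 x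
    have hS0 : 0 ≤ ‖u x‖ ^ 2 := by positivity
    have hN0 := nSq_nonneg u x
    have e1 : wt (m + 1) 1 x = wt (m + 2) 1 x * (1 + ‖x‖ ^ 2) := by
      rw [wt_one_succ (m + 1), add_assoc]; norm_num
    have h1 := norm_Xd_le u x
    have h2 : -(‖u x‖ * (‖x‖ * √(nSq u x))) ≤ inner ℝ (u x) (Xd u x) := by
      have := (abs_le.1 (abs_real_inner_le_norm (u x) (Xd u x))).1
      refine le_trans ?_ this
      gcongr
    have h3 : 2 * (‖u x‖ * (‖x‖ * √(nSq u x))) ≤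
        η * ((1 + ‖x‖ ^ 2) * nSq u x) + 1 / η * (‖x‖ ^ 2 * ‖u x‖ ^ 2) := by
      have e : √(nSq u x) ^ 2 = nSq u x := Real.sq_sqrt hN0
      have h4 : 0 ≤ 1 / η * (η * √(nSq u x) - ‖x‖ * ‖u x‖) ^ 2 := by positivity
      have h5 : 1 / η * (η * √(nSq u x) - ‖x‖ * ‖u x‖) ^ 2 = η * nSq u x
          - 2 * (‖u x‖ * (‖x‖ * √(nSq u x))) + 1 / η * (‖x‖ ^ 2 * ‖u x‖ ^ 2) := by
        have e' : η * nSq u x = η * √(nSq u x) ^ 2 := by rw [e]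
        rw [e']; field_simp; ring
      have h6 : 0 ≤ η * (‖x‖ ^ 2 * nSq u x) := by positivity
      linarith
    have hd' : (2 : ℝ) ≤ d := by exact_mod_cast hd
    rw [wt_one_succ m, e1, show m + 1 + 1 = m + 2 by ring, real_inner_self_eq_norm_sq]
    simp only [mul_zero, zero_mul, zero_add, sub_zero]
    have h7 : 0 ≤ wt (m + 2) 1 x * (1 + ‖x‖ ^ 2) := by positivity
    have h8 := mul_le_mul_of_nonneg_left h2 h7
    have h9 := mul_le_mul_of_nonneg_left h3 h7
    have h10 : 0 ≤ (d - 1) * (wt (m + 2) 1 x * (1 + ‖x‖ ^ 2) * ‖u x‖ ^ 2) :=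
      mul_nonneg (by linarith) (by positivity)
    have h11 : 0 ≤ (m + 1) * (wt (m + 2) 1 x * ‖x‖ ^ 4 * ‖u x‖ ^ 2) := by positivity
    nlinarith

variable {W : Ed d → ℝ} {f : Ed d → ℂ} {c₀ ε σ : ℝ}

/-- Young's inequality for `∫ |f||u|` with the dual weights. -/
theorem integrable_fu (hu : Continuous u) (hfm : AEStronglyMeasurable f)
    (hS : Integrable fun x => wt m 1 x * ‖u x‖ ^ 2)
    (hf : Integrable fun x => wt (-m) 1 x * ‖f x‖ ^ 2) {η : ℝ} (hη : 0 < η) :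
    Integrable (fun x => ‖f x‖ * ‖u x‖) ∧
    ∫ x, ‖f x‖ * ‖u x‖ ≤ η * (∫ x, wt m 1 x * ‖u x‖ ^ 2)
      + 1 / (4 * η) * ∫ x, wt (-m) 1 x * ‖f x‖ ^ 2 := by
  have hp : ∀ x, ‖f x‖ * ‖u x‖ ≤ η * (wt m 1 x * ‖u x‖ ^ 2)
      + 1 / (4 * η) * (wt (-m) 1 x * ‖f x‖ ^ 2) := by
    intro x
    have e := wt_mul_neg m 1 x
    have h1 := wt_pos m 1 x
    have e2 : wt (-m) 1 x = 1 / wt m 1 x := by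
      rw [eq_div_iff h1.ne']; linarith
    have h3 : 0 ≤ 1 / (4 * η * wt m 1 x) * (2 * η * wt m 1 x * ‖u x‖ - ‖f x‖) ^ 2 := by positivity
    have h4 : 1 / (4 * η * wt m 1 x) * (2 * η * wt m 1 x * ‖u x‖ - ‖f x‖) ^ 2 =
      η * (wt m 1 x * ‖u x‖ ^ 2)
      + 1 / (4 * η) * (1 / wt m 1 x * ‖f x‖ ^ 2) - ‖f x‖ * ‖u x‖ := by field_simp; ring
    rw [e2]; linarith
  have hi : Integrable fun x => η * (wt m 1 x * ‖u x‖ ^ 2)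
      + 1 / (4 * η) * (wt (-m) 1 x * ‖f x‖ ^ 2) := (hS.const_mul _).add (hf.const_mul _)
  have hi2 : Integrable (fun x => ‖f x‖ * ‖u x‖) := by
    refine hi.mono' (hfm.norm.mul hu.norm.aestronglyMeasurable)
      (Filter.Eventually.of_forall fun x => ?_)
    rw [Real.norm_of_nonneg (by positivity)]
    exact hp x
  refine ⟨hi2, (integral_mono hi2 hi hp).trans (le_of_eq ?_)⟩
  rw [integral_add (hS.const_mul _) (hf.const_mul _), integral_const_mul, integral_const_mul]

set_option maxHeartbeats 1000000 in
/-- Closing the estimate: a bound on the mass of `u` away from the origin in terms of `f` and the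
absorption `ε(|u|²+|∇u|²)` yields the full weighted bound. -/
theorem close_estimate (c₀ m Cc : ℝ) (hm : 0 < m) (hc₀ : 0 ≤ c₀) (hCc : 0 ≤ Cc) :
    ∃ C : ℝ, 0 ≤ C ∧ ∀ (d : ℕ), 2 ≤ d → ∀ (u f : Ed d → ℂ) (W : Ed d → ℝ) (ε σ : ℝ),
    ContDiff ℝ 2 u → |σ| = 1 → 0 < ε → ε < 1 → (∀ x, |W x| ≤ c₀) →
    (∀ x, lap u x = W x • u x + (σ * ε) • (Complex.I * u x) - f x) →
    AEStronglyMeasurable f →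
    Integrable (fun x => wt m 1 x * ‖u x‖ ^ 2) → Integrable (fun x => wt m 1 x * nSq u x) →
    Integrable (fun x => wt (-m) 1 x * ‖f x‖ ^ 2) →
    (Integrable (fun x => ‖u x‖ ^ 2) → Integrable (fun x => nSq u x) →
      ∫ x, ‖x‖ ^ 2 * wt (m + 1) 1 x * ‖u x‖ ^ 2 ≤
      Cc * ((∫ x, wt (-m) 1 x * ‖f x‖ ^ 2) + ε * ((∫ x, ‖u x‖ ^ 2) + ∫ x, nSq u x))) →
    (∫ x, wt m 1 x * ‖u x‖ ^ 2) ≤ C * ∫ x, wt (-m) 1 x * ‖f x‖ ^ 2 ∧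
    (∫ x, wt m 1 x * nSq u x) ≤ C * ∫ x, wt (-m) 1 x * ‖f x‖ ^ 2 := by
  set A := 2 * c₀ + m ^ 2 with hA
  set D := 2 * (m + 1) + 2 * (A + 1) + 1 with hD
  set M := 2 * D * (Cc * (8 * c₀ + 11)) + 2 with hM
  have hA0 : 0 ≤ A := by positivity
  have hD0 : 0 ≤ D := by positivity
  have hM2 : 2 ≤ M := by
    have : 0 ≤ 2 * D * (Cc * (8 * c₀ + 11)) := by positivity
    linarith
  have hM0 : 0 ≤ M := by linarith
  refine ⟨(A + 3) * (2 * M + M ^ 2), by positivity, ?_⟩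
  intro d hd u f W ε σ hu hσ hε hε1 hW heq hfm hS hN hf hcar
  have hfu := fun η hη => integrable_fu (η := η) hu.continuous hfm hS hf hη
  obtain ⟨g1, g2, g3, g4⟩ := global_energy hd hm hu hσ hε hε1 hW heq hfm hS hN (hfu 1 one_pos).1
  have hc := hcar g1 g2
  have hl := low_part hd hm hu (η := 1 / (2 * (A + 1))) (by positivity) hS hN
  obtain ⟨i1, i2⟩ := integrable_wt_succ (S := fun x => ‖u x‖ ^ 2) (fun x => by positivity)
    (hu.continuous.norm.pow 2).aestronglyMeasurable hS
  have hsum : ∫ x, wt m 1 x * ‖u x‖ ^ 2 = (∫ x, wt (m + 1) 1 x * ‖u x‖ ^ 2)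
      + ∫ x, ‖x‖ ^ 2 * wt (m + 1) 1 x * ‖u x‖ ^ 2 := by
    rw [← integral_add i1 i2]
    congr 1; ext x; rw [wt_one_succ m]; ring
  have ij : Integrable fun x => wt m 1 x * (‖f x‖ * ‖u x‖) := by
    refine (hfu 1 one_pos).1.mono' ((contDiff_wt m 1).continuous.aestronglyMeasurable.mul
      (hfm.norm.mul hu.continuous.norm.aestronglyMeasurable))
      (Filter.Eventually.of_forall fun x => ?_)
    rw [Real.norm_of_nonneg (mul_nonneg (wt_pos _ _ _).le (by positivity))]
    exact mul_le_of_le_one_left (by positivity) (wt_le_one hm.le 1 x)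
  have hj : ∫ x, wt m 1 x * (‖f x‖ * ‖u x‖) ≤ ∫ x, ‖f x‖ * ‖u x‖ :=
    integral_mono ij (hfu 1 one_pos).1 fun x =>
      mul_le_of_le_one_left (by positivity) (wt_le_one hm.le 1 x)
  have e1 := energy_re hd hu (contDiff_wt m 1) (fun x => (wt_pos m 1 x).le)
      (B₁ := fun x => -(2 * m * 1 ^ 2) * wt (m + 1) 1 x)
      (fun x i => by rw [fderiv_wt, inner_bv]) (wt_deriv_bound hm.le zero_le_one) hW heq hS hN ij
  have hJ1 := (hfu (1 / (2 * M)) (by positivity)).2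
  have hP0 : 0 ≤ ∫ x, ‖x‖ ^ 2 * wt (m + 1) 1 x * ‖u x‖ ^ 2 := integral_nonneg fun x =>
    mul_nonneg (mul_nonneg (by positivity) (wt_pos _ _ _).le) (by positivity)
  have hΦ0 : 0 ≤ ∫ x, wt (-m) 1 x * ‖f x‖ ^ 2 := integral_nonneg fun x =>
    mul_nonneg (wt_pos _ _ _).le (by positivity)
  have hs0 : 0 ≤ ∫ x, wt m 1 x * ‖u x‖ ^ 2 := integral_nonneg fun x =>
    mul_nonneg (wt_pos _ _ _).le (by positivity)
  have hJ0 : 0 ≤ ∫ x, ‖f x‖ * ‖u x‖ := integral_nonneg fun x => by positivity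
  rw [mul_one] at e1
  generalize (∫ x, wt m 1 x * ‖u x‖ ^ 2) = s at *
  generalize (∫ x, wt m 1 x * nSq u x) = n at *
  generalize (∫ x, ‖u x‖ ^ 2) = s' at *
  generalize (∫ x, nSq u x) = n' at *
  generalize (∫ x, ‖f x‖ * ‖u x‖) = J at *
  generalize (∫ x, wt (-m) 1 x * ‖f x‖ ^ 2) = Φ at *
  generalize (∫ x, ‖x‖ ^ 2 * wt (m + 1) 1 x * ‖u x‖ ^ 2) = P at *
  generalize (∫ x, wt (m + 1) 1 x * ‖u x‖ ^ 2) = o at *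
  have hn : n ≤ A * s + 2 * J := by linarith
  have hP : P ≤ Cc * (8 * c₀ + 11) * (Φ + J) := by
    refine hc.trans ?_
    rw [mul_assoc]
    refine mul_le_mul_of_nonneg_left ?_ hCc
    nlinarith [mul_nonneg hc₀ hΦ0]
  have hηn : 1 / (2 * (A + 1)) * n ≤ s / 2 + J := by
    rw [one_div, inv_mul_le_iff₀ (by positivity)]
    nlinarith [mul_nonneg hA0 hJ0]
  have hs1 : s ≤ 2 * D * P + 2 * J := by
    rw [one_div_one_div] at hl
    rw [hD]
    linarith
  have hs2 : s ≤ M * Φ + M * J := by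
    have : 2 * D * P ≤ 2 * D * (Cc * (8 * c₀ + 11) * (Φ + J)) := by gcongr
    rw [hM]
    nlinarith
  have hs3 : s ≤ (2 * M + M ^ 2) * Φ := by
    have h1 : M * J ≤ M * (1 / (2 * M) * s + 1 / (4 * (1 / (2 * M))) * Φ) := by gcongr
    have h2 : M * (1 / (2 * M) * s + 1 / (4 * (1 / (2 * M))) * Φ) = s / 2 + M ^ 2 / 2 * Φ := by
      field_simp; ring
    linarith
  have hJ2 : 2 * J ≤ 2 * (2 * M + M ^ 2) * Φ := by
    have h1 : 1 / (2 * M) * s ≤ 1 / 4 * s := by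
      gcongr; linarith
    have h2 : 1 / (4 * (1 / (2 * M))) = M / 2 := by field_simp; norm_num
    rw [h2] at hJ1
    have h3 := mul_nonneg hM0 hΦ0
    have h4 := mul_nonneg (sq_nonneg M) hΦ0
    linarith
  have hQ : 0 ≤ (2 * M + M ^ 2) * Φ := by positivity
  have hAs := mul_le_mul_of_nonneg_left hs3 hA0
  have hAQ := mul_nonneg hA0 hQ
  constructor <;> linarith

end

/-! ### Pointwise positivity in the Carleman estimate -/

section
/-- The Carleman identity in polar form. Here `q = Re(ū x·∇u)`, `X2 = |x·∇u|²`, `N = |∇u|²`,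
`S = |u|²`, and `Xf`, `uf`, `XI` are the inner products of `x·∇u` with `f`, of `u` with `f`, and of
`x·∇u` with `iu`. Up to the factor `e^{2φ}`, the left-hand side is the divergence of the Carleman
field; the right-hand side collects squares of the conjugated radial derivative
`∂_r u + ((d-1)/(2r) + p) u`, the angular part, and the potential terms. -/
theorem carleman_algebra (r d w w' p p' V V₂ τ s DV N X2 S q Xf uf XI : ℝ) (hr : r ≠ 0) :
    2 * (w / r) * ((V + V₂ - τ) * q + s * XI - Xf)
    + (2 * (w / r) - d * (w / r) - (2 * p * w / r + w' / r - w / r ^ 2) / r * r ^ 2) * N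
    + 2 * ((2 * p * w / r + w' / r - w / r ^ 2) / r) * X2
    + (w * (d - 1) / r + 2 * w * p) * N
    + (2 * p * (w * (d - 1) / r + 2 * w * p) + w' * (d - 1) / r - w * (d - 1) / r ^ 2
        + 2 * w' * p + 2 * w * p') / r * q
    + (w * (d - 1) / r + 2 * w * p) * ((V + V₂ - τ) * S - uf)
    + (d * (w / r * (2 * p ^ 2 + p * (d - 1) / r - V + τ + (d - 1) / (2 * r ^ 2)))
      + (r * (2 * p * w / r + w' / r - w / r ^ 2)
          * (2 * p ^ 2 + p * (d - 1) / r - V + τ + (d - 1) / (2 * r ^ 2))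
        + w * (4 * p * p' + p' * (d - 1) / r - p * (d - 1) / r ^ 2 - (d - 1) / r ^ 3)
        - w / r * DV)) * S
    + 2 * (w / r * (2 * p ^ 2 + p * (d - 1) / r - V + τ + (d - 1) / (2 * r ^ 2))) * q
    = (w' + 4 * p * w) * (X2 / r ^ 2 + 2 * ((d - 1) / (2 * r) + p) * q / r
          + ((d - 1) / (2 * r) + p) ^ 2 * S)
      + (2 * w / r - w') * (N - X2 / r ^ 2 + (d - 1) * (d - 3) / 4 / r ^ 2 * S)
      + (- (w' * (-p ^ 2 + V - τ)) - w * (-2 * p * p' + DV / r)) * S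
      + 2 * w * ((p' + V₂) * (q / r + ((d - 1) / (2 * r) + p) * S)
          - (Xf / r + ((d - 1) / (2 * r) + p) * uf))
      + 2 * w * s * XI / r := by
  field_simp
  ring

/-- Young's inequality spending a third of a square. -/
theorem young_third {κ t D U α : ℝ} (hκ : 0 < κ) (h : |α| ≤ D * U) :
    -(κ / 3 * D ^ 2 + 3 * t ^ 2 / κ * U ^ 2) ≤ 2 * t * α := by
  have h1 : |2 * t * α| ≤ 2 * |t| * (D * U) := by
    rw [abs_mul, abs_mul, abs_two]; gcongr
  have h2 : 0 ≤ 1 / (3 * κ) * (κ * D - 3 * |t| * U) ^ 2 := by positivity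
  have h3 : 1 / (3 * κ) * (κ * D - 3 * |t| * U) ^ 2
      = κ / 3 * D ^ 2 + 3 * |t| ^ 2 / κ * U ^ 2 - 2 * |t| * (D * U) := by
    field_simp; ring
  rw [sq_abs] at h3
  linarith [(abs_le.1 h1).1]

variable {d : ℕ}

set_option maxHeartbeats 1000000 in
/-- Positivity of the Carleman divergence at one point, in terms of the values `w, w', p, p'` of the
radial weights there. -/
theorem carleman_pointwise (u : Ed d → ℂ) (hd : 2 ≤ d) (x : Ed d) (hx : x ≠ 0) (F : ℂ)
    {w w' p p' V V₂ τ s DV cΛ : ℝ}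
    (hw0 : 0 ≤ w) (hw1 : w ≤ 1) (hw' : 0 < w') (hp : 0 < p)
    (h1 : ‖x‖ * w' ≤ 2 * w) (h2 : 2 * w / ‖x‖ - w' ≤ cΛ * ‖x‖ ^ 2 * w') :
    (w' * (p ^ 2 + τ - V) + 2 * w * p * p' - w * DV / ‖x‖ - 3 / 4 * (w * p' ^ 2 / p)
      - 3 * w ^ 2 * V₂ ^ 2 / w' - cΛ / 4 * w') * ‖u x‖ ^ 2
      - 3 * w ^ 2 / w' * ‖F‖ ^ 2 - |s| * (‖u x‖ ^ 2 + nSq u x) ≤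
    2 * (w / ‖x‖) * ((V + V₂ - τ) * inner ℝ (u x) (Xd u x) + s * inner ℝ (Xd u x) (Complex.I * u x)
        - inner ℝ (Xd u x) F)
    + (2 * (w / ‖x‖) - d * (w / ‖x‖)
        - (2 * p * w / ‖x‖ + w' / ‖x‖ - w / ‖x‖ ^ 2) / ‖x‖ * ‖x‖ ^ 2) * nSq u x
    + 2 * ((2 * p * w / ‖x‖ + w' / ‖x‖ - w / ‖x‖ ^ 2) / ‖x‖) * ‖Xd u x‖ ^ 2
    + (w * (d - 1) / ‖x‖ + 2 * w * p) * nSq u x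
    + (2 * p * (w * (d - 1) / ‖x‖ + 2 * w * p) + w' * (d - 1) / ‖x‖ - w * (d - 1) / ‖x‖ ^ 2
        + 2 * w' * p + 2 * w * p') / ‖x‖ * inner ℝ (u x) (Xd u x)
    + (w * (d - 1) / ‖x‖ + 2 * w * p) * ((V + V₂ - τ) * ‖u x‖ ^ 2 - inner ℝ (u x) F)
    + (d * (w / ‖x‖ * (2 * p ^ 2 + p * (d - 1) / ‖x‖ - V + τ + (d - 1) / (2 * ‖x‖ ^ 2)))
      + (‖x‖ * (2 * p * w / ‖x‖ + w' / ‖x‖ - w / ‖x‖ ^ 2)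
          * (2 * p ^ 2 + p * (d - 1) / ‖x‖ - V + τ + (d - 1) / (2 * ‖x‖ ^ 2))
        + w * (4 * p * p' + p' * (d - 1) / ‖x‖ - p * (d - 1) / ‖x‖ ^ 2 - (d - 1) / ‖x‖ ^ 3)
        - w / ‖x‖ * DV)) * ‖u x‖ ^ 2
    + 2 * (w / ‖x‖ * (2 * p ^ 2 + p * (d - 1) / ‖x‖ - V + τ + (d - 1) / (2 * ‖x‖ ^ 2)))
        * inner ℝ (u x) (Xd u x) := by
  have hr : 0 < ‖x‖ := norm_pos_iff.2 hx
  rw [carleman_algebra _ _ _ _ _ _ _ _ _ _ _ _ _ _ _ _ _ _ hr.ne']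
  have hX := norm_Xd_sq_le u x
  have hN0 := nSq_nonneg u x
  have hd' : (2 : ℝ) ≤ d := by exact_mod_cast hd
  set r := ‖x‖ with hr'
  set β := ((d : ℝ) - 1) / (2 * r) + p with hβ
  set D : ℂ := (1 / r) • Xd u x + β • u x with hD
  have eD : ‖Xd u x‖ ^ 2 / r ^ 2 + 2 * β * inner ℝ (u x) (Xd u x) / r + β ^ 2 * ‖u x‖ ^ 2
      = ‖D‖ ^ 2 := by
    rw [hD, norm_add_sq_real, norm_smul, norm_smul, mul_pow, mul_pow, Real.norm_eq_abs,
      Real.norm_eq_abs, sq_abs, sq_abs, real_inner_smul_left, real_inner_smul_right]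
    rw [real_inner_comm (u x) (Xd u x)]
    field_simp
  have eU : inner ℝ (u x) (Xd u x) / r + β * ‖u x‖ ^ 2 = inner ℝ D (u x) := by
    rw [hD, inner_add_left]
    simp only [real_inner_smul_left, real_inner_self_eq_norm_sq]
    rw [real_inner_comm (u x) (Xd u x)]
    ring
  have eF : inner ℝ (Xd u x) F / r + β * inner ℝ (u x) F = inner ℝ D F := by
    rw [hD, inner_add_left]
    simp only [real_inner_smul_left]
    ring
  rw [eD, eU, eF]
  set κ := w' + 4 * p * w with hκ
  have hκ' : w' ≤ κ := by
    have : 0 ≤ 4 * p * w := by positivity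
    linarith
  have hκ0 : 0 < κ := by linarith
  have hκp : 4 * p * w ≤ κ := by linarith
  have y1 := young_third (t := w * p') hκ0 (abs_real_inner_le_norm D (u x))
  have y2 := young_third (t := w * V₂) hκ0 (abs_real_inner_le_norm D (u x))
  have y3 := young_third (t := -w) hκ0 (abs_real_inner_le_norm D F)
  have z1 : 3 * (w * p') ^ 2 / κ * ‖u x‖ ^ 2 ≤ 3 / 4 * (w * p' ^ 2 / p) * ‖u x‖ ^ 2 := by
    gcongr
    rw [div_le_iff₀ hκ0]
    have : 3 / 4 * (w * p' ^ 2 / p) * (4 * p * w) ≤ 3 / 4 * (w * p' ^ 2 / p) * κ := by gcongr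
    refine le_trans (le_of_eq ?_) this
    field_simp
  have z2 : 3 * (w * V₂) ^ 2 / κ * ‖u x‖ ^ 2 ≤ 3 * w ^ 2 * V₂ ^ 2 / w' * ‖u x‖ ^ 2 := by
    rw [show 3 * w ^ 2 * V₂ ^ 2 = 3 * (w * V₂) ^ 2 by ring]
    gcongr
  have z3 : 3 * (-w) ^ 2 / κ * ‖F‖ ^ 2 ≤ 3 * w ^ 2 / w' * ‖F‖ ^ 2 := by
    rw [neg_sq]; gcongr
  have h3 : 0 ≤ 2 * w / r - w' := by
    rw [sub_nonneg, le_div_iff₀ hr]; linarith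
  have z4 : 0 ≤ (2 * w / r - w') * (nSq u x - ‖Xd u x‖ ^ 2 / r ^ 2) := by
    refine mul_nonneg h3 ?_
    rw [sub_nonneg, div_le_iff₀ (by positivity)]; linarith
  have z5 : -(cΛ / 4 * w' * ‖u x‖ ^ 2) ≤
      (2 * w / r - w') * (((d : ℝ) - 1) * (d - 3) / 4 / r ^ 2 * ‖u x‖ ^ 2) := by
    have hΛ : -(1 / 4 : ℝ) ≤ ((d : ℝ) - 1) * (d - 3) / 4 := by nlinarith [sq_nonneg ((d : ℝ) - 2)]
    have e1 : (2 * w / r - w') * (-(1 / 4) / r ^ 2 * ‖u x‖ ^ 2) ≤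
      (2 * w / r - w') * (((d : ℝ) - 1) * (d - 3) / 4 / r ^ 2 * ‖u x‖ ^ 2) := by gcongr
    refine le_trans ?_ e1
    have e2 : (2 * w / r - w') * (1 / 4 / r ^ 2 * ‖u x‖ ^ 2) ≤
      (cΛ * r ^ 2 * w') * (1 / 4 / r ^ 2 * ‖u x‖ ^ 2) := by gcongr
    have e3 : (cΛ * r ^ 2 * w') * (1 / 4 / r ^ 2 * ‖u x‖ ^ 2) = cΛ / 4 * w' * ‖u x‖ ^ 2 := by
      field_simp
    have e4 : (2 * w / r - w') * (-(1 / 4) / r ^ 2 * ‖u x‖ ^ 2)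
      = -((2 * w / r - w') * (1 / 4 / r ^ 2 * ‖u x‖ ^ 2)) := by ring
    linarith
  have z6 : -(|s| * (‖u x‖ ^ 2 + nSq u x)) ≤
      2 * w * s * inner ℝ (Xd u x) (Complex.I * u x) / r := by
    have e1 : |inner ℝ (Xd u x) (Complex.I * u x)| ≤ (r * √(nSq u x)) * ‖u x‖ := by
      refine (abs_real_inner_le_norm _ _).trans ?_
      rw [norm_mul, Complex.norm_I, one_mul]
      gcongr
      exact norm_Xd_le u x
    have e2 : √(nSq u x) ^ 2 = nSq u x := Real.sq_sqrt hN0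
    refine (abs_le.1 ?_).1
    rw [abs_div, abs_of_pos hr, div_le_iff₀ hr, abs_mul, abs_mul, abs_mul, abs_two, abs_of_nonneg hw0]
    calc 2 * w * |s| * |inner ℝ (Xd u x) (Complex.I * u x)|
        ≤ 2 * 1 * |s| * ((r * √(nSq u x)) * ‖u x‖) := by gcongr
      _ = |s| * r * (2 * √(nSq u x) * ‖u x‖) := by ring
      _ ≤ |s| * r * (‖u x‖ ^ 2 + nSq u x) := by
          gcongr
          nlinarith [sq_nonneg (√(nSq u x) - ‖u x‖)]
      _ = _ := by ring
  have e7 : w * DV / r = w * (DV / r) := by ring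
  rw [e7]
  linarith

end

/-! ### The Carleman estimate for abstract radial weights -/

section
variable {d : ℕ} {u : Ed d → ℂ}

theorem fderiv_radial {F : ℝ → ℝ} {F' : ℝ} {x : Ed d} (hx : x ≠ 0) (hF : HasDerivAt F F' ‖x‖)
    (v : Ed d) : fderiv ℝ (fun y : Ed d => F ‖y‖) x v = F' / ‖x‖ * inner ℝ x v := by
  have hn : ‖x‖ ≠ 0 := norm_ne_zero_iff.2 hx
  have h1 : HasFDerivAt (fun y : Ed d => ‖y‖) (fderiv ℝ (fun y : Ed d => ‖y‖) x) x :=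
    ((contDiffAt_norm ℝ hx (n := 1)).differentiableAt one_ne_zero).hasFDerivAt
  have h2 : fderiv ℝ (fun y : Ed d => ‖y‖) x v = inner ℝ x v / ‖x‖ := by
    have h3 := (h1.pow 2).unique (hasStrictFDerivAt_norm_sq x).hasFDerivAt
    have h4 := congrArg (fun L : Ed d →L[ℝ] ℝ => L v) h3
    simp at h4
    rw [eq_div_iff hn]; linarith
  have h5 : HasFDerivAt (fun y : Ed d => F ‖y‖) _ x := hF.comp_hasFDerivAt x h1
  rw [h5.fderiv]
  simp only [smul_apply, smul_eq_mul, h2]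
  ring

theorem contDiffAt_radial {F : ℝ → ℝ} {x : Ed d} (hx : x ≠ 0) (hF : ContDiffAt ℝ 1 F ‖x‖) :
    ContDiffAt ℝ 1 (fun y : Ed d => F ‖y‖) x :=
  hF.comp x (contDiffAt_norm ℝ hx)

/-- Pointwise size of the Carleman field. -/
theorem abs_Fld_le {A B g : Ed d → ℝ} {cA cB cg : ℝ} (x : Ed d) (hA0 : 0 ≤ A x)
    (hA : A x * ‖x‖ ≤ cA) (hB : |B x| ≤ cB) (hg : |g x| * ‖x‖ ≤ cg) (i : Fin d) :
    |Fld u A B g i x| ≤ (3 * cA + cB + cg) * (‖u x‖ ^ 2 + nSq u x) := by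
  have hN0 := nSq_nonneg u x
  have hp : ‖pd u i x‖ ≤ √(nSq u x) := Real.le_sqrt_of_sq_le (norm_pd_sq_le u i x)
  have hX := norm_Xd_le u x
  have hxi : |x i| ≤ ‖x‖ := PiLp.norm_apply_le x i
  have e2 : √(nSq u x) ^ 2 = nSq u x := Real.sq_sqrt hN0
  have t1 : |2 * (A x * inner ℝ (Xd u x) (pd u i x))| ≤ 2 * cA * nSq u x := by
    rw [abs_mul, abs_mul, abs_two, abs_of_nonneg hA0]
    calc 2 * (A x * |inner ℝ (Xd u x) (pd u i x)|)
        ≤ 2 * (A x * ((‖x‖ * √(nSq u x)) * √(nSq u x))) := by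
          gcongr
          refine (abs_real_inner_le_norm _ _).trans ?_
          gcongr
      _ = 2 * (A x * ‖x‖) * (√(nSq u x) ^ 2) := by ring
      _ ≤ 2 * cA * nSq u x := by rw [e2]; gcongr
  have t2 : |A x * x i * nSq u x| ≤ cA * nSq u x := by
    rw [abs_mul, abs_mul, abs_of_nonneg hA0, abs_of_nonneg hN0]
    gcongr
    exact le_trans (by gcongr) hA
  have hcB : 0 ≤ cB := (abs_nonneg _).trans hB
  have hcA : 0 ≤ cA := le_trans (by positivity) hA
  have hcg : 0 ≤ cg := le_trans (by positivity) hg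
  have t3 : |B x * inner ℝ (u x) (pd u i x)| ≤ cB * (‖u x‖ ^ 2 + nSq u x) := by
    rw [abs_mul]
    gcongr
    refine (abs_inner_le_half _ _).trans ?_
    have := norm_pd_sq_le u i x
    nlinarith [sq_nonneg ‖u x‖]
  have t4 : |g x * x i * ‖u x‖ ^ 2| ≤ cg * ‖u x‖ ^ 2 := by
    rw [abs_mul, abs_mul, abs_of_nonneg (by positivity : 0 ≤ ‖u x‖ ^ 2)]
    gcongr
    exact le_trans (by gcongr) hg
  have s1 := mul_nonneg hcA (sq_nonneg ‖u x‖)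
  have s2 := mul_nonneg hcg hN0
  rw [Fld]
  rw [abs_le] at *
  constructor <;> linarith [t1.1, t1.2, t2.1, t2.2, t3.1, t3.2, t4.1, t4.2]

variable {f : Ed d → ℂ}

set_option maxHeartbeats 2000000 in
/-- The Carleman estimate for abstract radial weights: `E = e^{2φ}` with `φ' = p`, and a bounded
increasing `w` vanishing at the origin. -/
theorem carleman_abstract (hd : 2 ≤ d) (hu : ContDiff ℝ 2 u) {E w w' p p' : ℝ → ℝ}
    {V V₂ : Ed d → ℝ} {τ s a τ₁ M k c c₂ cΛ m : ℝ}
    (hV : ContDiff ℝ 1 V) (hVa : ∀ x, |V x| ≤ a) (hτ : |τ| ≤ τ₁)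
    (heq : ∀ x, lap u x = (V x + V₂ x - τ) • u x + s • (Complex.I * u x) - f x)
    (cE : ∀ r, 0 < r → ContDiffAt ℝ 1 E r) (cw : ∀ r, 0 < r → ContDiffAt ℝ 1 w r)
    (cp : ∀ r, 0 < r → ContDiffAt ℝ 1 p r)
    (dE : ∀ r, 0 < r → HasDerivAt E (2 * p r * E r) r)
    (dw : ∀ r, 0 < r → HasDerivAt w (w' r) r) (dp : ∀ r, 0 < r → HasDerivAt p (p' r) r)
    (hE1 : ∀ r, 0 < r → 1 ≤ E r) (hEM : ∀ r, 0 < r → E r ≤ M)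
    (hw00 : w 0 = 0) (hw0 : ∀ r, 0 < r → 0 ≤ w r) (hw1 : ∀ r, 0 < r → w r ≤ 1) (hwr : ∀ r, 0 < r → w r ≤ r)
    (hwr2 : ∀ r, 0 < r → w r ≤ r ^ 2) (hw' : ∀ r, 0 < r → 0 < w' r) (hp : ∀ r, 0 < r → 0 < p r)
    (hpk : ∀ r, 0 < r → p r ≤ k)
    (h1 : ∀ r, 0 < r → r * w' r ≤ 2 * w r)
    (h2 : ∀ r, 0 < r → 2 * w r / r - w' r ≤ cΛ * r ^ 2 * w' r)
    (hc : 0 ≤ c) (hc₂ : 0 ≤ c₂)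
    (hbr : ∀ x : Ed d, x ≠ 0 → c * (‖x‖ ^ 2 * wt (m + 1) 1 x) ≤
      w' ‖x‖ * (p ‖x‖ ^ 2 + τ - V x) + 2 * w ‖x‖ * p ‖x‖ * p' ‖x‖ - w ‖x‖ * fderiv ℝ V x x / ‖x‖
      - 3 / 4 * (w ‖x‖ * p' ‖x‖ ^ 2 / p ‖x‖) - 3 * w ‖x‖ ^ 2 * V₂ x ^ 2 / w' ‖x‖ - cΛ / 4 * w' ‖x‖)
    (hf2 : ∀ x : Ed d, x ≠ 0 → 3 * w ‖x‖ ^ 2 / w' ‖x‖ ≤ c₂ * wt (-m) 1 x)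
    (hS : Integrable fun x => ‖u x‖ ^ 2) (hN : Integrable fun x => nSq u x)
    (hf : Integrable fun x => wt (-m) 1 x * ‖f x‖ ^ 2)
    (hP : Integrable fun x => ‖x‖ ^ 2 * wt (m + 1) 1 x * ‖u x‖ ^ 2) :
    c * (∫ x, ‖x‖ ^ 2 * wt (m + 1) 1 x * ‖u x‖ ^ 2) ≤
      M * (c₂ * (∫ x, wt (-m) 1 x * ‖f x‖ ^ 2) + |s| * ((∫ x, ‖u x‖ ^ 2) + ∫ x, nSq u x)) := by
  have hd' : (2 : ℝ) ≤ d := by exact_mod_cast hd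
  -- The field is `Fld` with `A = e^{2φ} w/r`; `B` and `g` are dictated by testing against the
  -- conjugated radial derivative `∂_r u + ((d-1)/(2r) + p) u`.
  set Ar : ℝ → ℝ := fun r => E r * (w r / r) with hAr
  set Br : ℝ → ℝ := fun r => E r * (w r * (d - 1) / r + 2 * w r * p r) with hBr
  set Gr : ℝ → ℝ := fun r =>
    E r * (w r / r) * (2 * p r ^ 2 + p r * (d - 1) / r + τ + (d - 1) / (2 * r ^ 2)) with hGr
  set A : Ed d → ℝ := fun x => Ar ‖x‖ with hA
  set B : Ed d → ℝ := fun x => Br ‖x‖ with hB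
  set g : Ed d → ℝ := fun x => Gr ‖x‖ - Ar ‖x‖ * V x with hg
  have cid : ∀ r : ℝ, ContDiffAt ℝ 1 (fun r : ℝ => r) r := fun r => contDiffAt_id
  have cAr : ∀ r, 0 < r → ContDiffAt ℝ 1 Ar r := fun r hr =>
    (cE r hr).mul ((cw r hr).div (cid r) hr.ne')
  have cBr : ∀ r, 0 < r → ContDiffAt ℝ 1 Br r := fun r hr =>
    (cE r hr).mul ((((cw r hr).mul contDiffAt_const).div (cid r) hr.ne').add
      ((contDiffAt_const.mul (cw r hr)).mul (cp r hr)))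
  have cGr : ∀ r, 0 < r → ContDiffAt ℝ 1 Gr r := fun r hr =>
    (cAr r hr).mul ((((contDiffAt_const.mul ((cp r hr).pow 2)).add
      (((cp r hr).mul contDiffAt_const).div (cid r) hr.ne')).add contDiffAt_const).add
      (contDiffAt_const.div (contDiffAt_const.mul ((cid r).pow 2)) (by positivity)))
  have dAr : ∀ r, 0 < r → HasDerivAt Ar
      (E r * (2 * p r * w r / r + w' r / r - w r / r ^ 2)) r := fun r hr => by
    have := (dE r hr).mul ((dw r hr).div (hasDerivAt_id r) hr.ne')
    refine this.congr_deriv ?_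
    simp only [Pi.div_apply, id]
    field_simp; ring
  have dBr : ∀ r, 0 < r → HasDerivAt Br
      (E r * (2 * p r * (w r * (d - 1) / r + 2 * w r * p r) + w' r * (d - 1) / r
        - w r * (d - 1) / r ^ 2 + 2 * w' r * p r + 2 * w r * p' r)) r := fun r hr => by
    have := (dE r hr).mul ((((dw r hr).mul_const ((d:ℝ) - 1)).div (hasDerivAt_id r) hr.ne').add
      (((dw r hr).const_mul 2).mul (dp r hr)))
    refine this.congr_deriv ?_
    simp only [Pi.div_apply, Pi.add_apply, Pi.mul_apply, id]
    field_simp; ring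
  have dGr : ∀ r, 0 < r → HasDerivAt Gr
      (E r * ((2 * p r * w r / r + w' r / r - w r / r ^ 2) *
        (2 * p r ^ 2 + p r * (d - 1) / r + τ + (d - 1) / (2 * r ^ 2)) +
        w r / r * (4 * p r * p' r + p' r * (d - 1) / r - p r * (d - 1) / r ^ 2
          - (d - 1) / r ^ 3))) r := fun r hr => by
    have i2 := ((hasDerivAt_id r).pow 2).const_mul 2
    have i3 := (hasDerivAt_const r ((d:ℝ) - 1)).div i2 (by simp [hr.ne'])
    have i4 := (((((dp r hr).pow 2).const_mul 2).add (((dp r hr).mul_const ((d:ℝ) - 1)).div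
      (hasDerivAt_id r) hr.ne')).add_const τ).add i3
    have := (dAr r hr).mul i4
    refine this.congr_deriv ?_
    simp only [hAr, Pi.div_apply, Pi.add_apply, Pi.pow_apply, id]
    field_simp; ring
  have key := integral_le_zero_of_le_div hd (Fld u A B g)
    (fun x => (3 * M + M * (d - 1 + 2 * k) + M * (2 * k ^ 2 + k * (d - 1) + τ₁ + (d - 1) + a))
      * (‖u x‖ ^ 2 + nSq u x))
    (fun x => c * (‖x‖ ^ 2 * wt (m + 1) 1 x * ‖u x‖ ^ 2)
      + -(M * c₂) * (wt (-m) 1 x * ‖f x‖ ^ 2) + -(M * |s|) * (‖u x‖ ^ 2 + nSq u x))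
    (fun i x hx => contDiffAt_Fld hu (contDiffAt_radial hx (cAr _ (norm_pos_iff.2 hx)))
      (contDiffAt_radial hx (cBr _ (norm_pos_iff.2 hx)))
      ((contDiffAt_radial hx (cGr _ (norm_pos_iff.2 hx))).sub
        ((contDiffAt_radial hx (cAr _ (norm_pos_iff.2 hx))).mul hV.contDiffAt)) i)
    (continuous_const.mul ((hu.continuous.norm.pow 2).add (continuous_nSq hu)))
    ((hS.add hN).const_mul _) ?_
    (integrable_lin3 _ _ _ hP hf (hS.add hN)) ?_
  · have hSN : Integrable fun x => ‖u x‖ ^ 2 + nSq u x := hS.add hN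
    rw [integral_lin3 _ _ _ hP hf hSN, integral_add hS hN] at key
    linarith
  · intro i x
    have hM1 : 1 ≤ M := (hE1 1 one_pos).trans (hEM 1 one_pos)
    have hk0 : 0 < k := (hp 1 one_pos).trans_le (hpk 1 one_pos)
    have ha0 : 0 ≤ a := (abs_nonneg _).trans (hVa 0)
    have hτ10 : 0 ≤ τ₁ := (abs_nonneg _).trans hτ
    have hd1 : (0 : ℝ) ≤ d - 1 := by linarith
    rcases eq_or_ne x 0 with rfl | hx
    · have hN0 := nSq_nonneg u 0
      have e : Fld u A B g i 0 = 0 := by simp [Fld, hA, hB, hAr, hBr, hw00]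
      rw [e, abs_zero]
      positivity
    · have hr : 0 < ‖x‖ := norm_pos_iff.2 hx
      have q1 := hE1 _ hr
      have q2 := hEM _ hr
      have q3 := hw0 _ hr
      have q4 := hw1 _ hr
      have q5 : w ‖x‖ / ‖x‖ ≤ 1 := (div_le_one hr).2 (hwr _ hr)
      have q6 : w ‖x‖ / ‖x‖ ^ 2 ≤ 1 := (div_le_one (by positivity)).2 (hwr2 _ hr)
      have q7 := hp _ hr
      have q8 := hpk _ hr
      have q9 := hVa x
      refine abs_Fld_le x (by simp only [hA, hAr]; positivity) ?_ ?_ ?_ i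
      · simp only [hA, hAr]
        rw [mul_assoc, div_mul_cancel₀ _ hr.ne']
        nlinarith
      · simp only [hB, hBr]
        rw [abs_of_nonneg (by positivity)]
        gcongr
        · rw [mul_div_right_comm]; exact mul_le_of_le_one_left hd1 q5
        · nlinarith
      · simp only [hg, hGr, hAr]
        have e : (E ‖x‖ * (w ‖x‖ / ‖x‖) * (2 * p ‖x‖ ^ 2 + p ‖x‖ * (d - 1) / ‖x‖ + τ
            + (d - 1) / (2 * ‖x‖ ^ 2)) - E ‖x‖ * (w ‖x‖ / ‖x‖) * V x)
            = E ‖x‖ * (2 * p ‖x‖ ^ 2 * w ‖x‖ + p ‖x‖ * (d - 1) * (w ‖x‖ / ‖x‖)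
              + (d - 1) / 2 * (w ‖x‖ / ‖x‖ ^ 2) + w ‖x‖ * (τ - V x)) / ‖x‖ := by
          field_simp; ring
        rw [e, abs_div, abs_mul, abs_of_pos hr, div_mul_cancel₀ _ hr.ne',
          abs_of_pos (by linarith : 0 < E ‖x‖)]
        gcongr
        have u1 : 2 * p ‖x‖ ^ 2 * w ‖x‖ ≤ 2 * k ^ 2 * 1 := by gcongr
        have u2 : p ‖x‖ * (d - 1) * (w ‖x‖ / ‖x‖) ≤ k * (d - 1) * 1 := by gcongr
        have u3 : ((d : ℝ) - 1) / 2 * (w ‖x‖ / ‖x‖ ^ 2) ≤ (d - 1) / 2 * 1 := by gcongr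
        have u4 : |w ‖x‖ * (τ - V x)| ≤ 1 * (τ₁ + a) := by
          rw [abs_mul, abs_of_nonneg q3]
          gcongr
          exact (abs_sub _ _).trans (add_le_add hτ q9)
        have v1 : 0 ≤ 2 * p ‖x‖ ^ 2 * w ‖x‖ := by positivity
        have v2 : 0 ≤ p ‖x‖ * (d - 1) * (w ‖x‖ / ‖x‖) := by positivity
        have v3 : 0 ≤ ((d : ℝ) - 1) / 2 * (w ‖x‖ / ‖x‖ ^ 2) := by positivity
        rw [abs_le] at u4 ⊢
        constructor <;> linarith [u4.1, u4.2]
  · intro x hx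
    have hr : 0 < ‖x‖ := norm_pos_iff.2 hx
    have hdA : DifferentiableAt ℝ A x := (contDiffAt_radial hx (cAr _ hr)).differentiableAt one_ne_zero
    have hdG : DifferentiableAt ℝ (fun y : Ed d => Gr ‖y‖) x :=
      (contDiffAt_radial hx (cGr _ hr)).differentiableAt one_ne_zero
    have hg₁ : fderiv ℝ g x x = E ‖x‖ * (‖x‖ * (2 * p ‖x‖ * w ‖x‖ / ‖x‖ + w' ‖x‖ / ‖x‖
        - w ‖x‖ / ‖x‖ ^ 2) * (2 * p ‖x‖ ^ 2 + p ‖x‖ * (d - 1) / ‖x‖ - V x + τ + (d - 1) / (2 * ‖x‖ ^ 2))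
        + w ‖x‖ * (4 * p ‖x‖ * p' ‖x‖ + p' ‖x‖ * (d - 1) / ‖x‖ - p ‖x‖ * (d - 1) / ‖x‖ ^ 2
          - (d - 1) / ‖x‖ ^ 3) - w ‖x‖ / ‖x‖ * fderiv ℝ V x x) := by
      have hdV : DifferentiableAt ℝ V x := hV.differentiable one_ne_zero x
      have t1 := (hdG.hasFDerivAt.sub (hdA.hasFDerivAt.mul hdV.hasFDerivAt)).fderiv
      have t2 : fderiv ℝ g x x = fderiv ℝ (fun y : Ed d => Gr ‖y‖) x x
          - (A x * fderiv ℝ V x x + V x * fderiv ℝ A x x) := congrArg (fun L => L x) t1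
      rw [t2, fderiv_radial hx (dGr _ hr), fderiv_radial hx (dAr _ hr), real_inner_self_eq_norm_sq]
      simp only [hA, hAr]
      field_simp; ring
    rw [div_Fld hu (contDiffAt_radial hx (cAr _ hr)) (contDiffAt_radial hx (cBr _ hr))
      ((contDiffAt_radial hx (cGr _ hr)).sub
        ((contDiffAt_radial hx (cAr _ hr)).mul hV.contDiffAt))
      (fun i => by rw [fderiv_radial hx (dAr _ hr), inner_bv])
      (fun i => by rw [fderiv_radial hx (dBr _ hr), inner_bv]) hg₁]
    have l1 : inner ℝ (Xd u x) (lap u x) = (V x + V₂ x - τ) * inner ℝ (u x) (Xd u x)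
        + s * inner ℝ (Xd u x) (Complex.I * u x) - inner ℝ (Xd u x) (f x) := by
      rw [heq x, inner_sub_right, inner_add_right, real_inner_smul_right, real_inner_smul_right,
        real_inner_comm (u x) (Xd u x)]
    have l2 : inner ℝ (u x) (lap u x) = (V x + V₂ x - τ) * ‖u x‖ ^ 2 - inner ℝ (u x) (f x) := by
      rw [heq x, inner_sub_right, inner_add_right, real_inner_smul_right, real_inner_smul_right,
        inner_I_self, real_inner_self_eq_norm_sq]; ring
    rw [l1, l2]
    have cp := carleman_pointwise u hd x hx (f x) (s := s) (V := V x) (V₂ := V₂ x) (τ := τ)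
      (DV := fderiv ℝ V x x) (p' := p' ‖x‖)
      (hw0 _ hr) (hw1 _ hr) (hw' _ hr) (hp _ hr) (h1 _ hr) (h2 _ hr)
    have hE0 : 0 < E ‖x‖ := by linarith [hE1 _ hr]
    have hN0 := nSq_nonneg u x
    have b1 := le_trans (a := c * (‖x‖ ^ 2 * wt (m + 1) 1 x) * ‖u x‖ ^ 2
      - c₂ * wt (-m) 1 x * ‖f x‖ ^ 2 - |s| * (‖u x‖ ^ 2 + nSq u x)) (by
      have := mul_le_mul_of_nonneg_right (hbr x hx) (sq_nonneg ‖u x‖)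
      have := mul_le_mul_of_nonneg_right (hf2 x hx) (sq_nonneg ‖f x‖)
      linarith) cp
    have b2 := mul_le_mul_of_nonneg_left b1 hE0.le
    have b3 : c * (‖x‖ ^ 2 * wt (m + 1) 1 x * ‖u x‖ ^ 2)
      + -(M * c₂) * (wt (-m) 1 x * ‖f x‖ ^ 2) + -(M * |s|) * (‖u x‖ ^ 2 + nSq u x) ≤
      E ‖x‖ * (c * (‖x‖ ^ 2 * wt (m + 1) 1 x) * ‖u x‖ ^ 2
      - c₂ * wt (-m) 1 x * ‖f x‖ ^ 2 - |s| * (‖u x‖ ^ 2 + nSq u x)) := by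
      have w1 := wt_pos (m + 1) 1 x
      have w2 := wt_pos (-m) 1 x
      have k1 : 0 ≤ (E ‖x‖ - 1) * (c * (‖x‖ ^ 2 * wt (m + 1) 1 x) * ‖u x‖ ^ 2) :=
        mul_nonneg (by linarith [hE1 _ hr]) (by positivity)
      have k2 : 0 ≤ (M - E ‖x‖) * (c₂ * wt (-m) 1 x * ‖f x‖ ^ 2 + |s| * (‖u x‖ ^ 2 + nSq u x)) :=
        mul_nonneg (by linarith [hEM _ hr]) (by positivity)
      linarith
    refine b3.trans (b2.trans (le_of_eq ?_))
    simp only [hAr, hBr, hGr]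
    ring

end

/-! ### The explicit radial weights -/

/-- The bounded increasing multiplier `w(r) = 1 - (1 + r²/R²)^{-q}`. -/
def wF (q R r : ℝ) : ℝ := 1 - (1 + r ^ 2 / R ^ 2) ^ (-q)

/-- The derivative of `wF`. -/
def wF' (q R r : ℝ) : ℝ := 2 * q * r / R ^ 2 * (1 + r ^ 2 / R ^ 2) ^ (-q - 1)

/-- The slope `p = φ'` of the Carleman phase. -/
def pF (k L θ r : ℝ) : ℝ := k * (1 + r / L) ^ (-1 - θ)

/-- The derivative of `pF`. -/
def pF' (k L θ r : ℝ) : ℝ := -(pF k L θ r * (1 + θ) / (L + r))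

/-- The Carleman weight `e^{2φ}` with `φ' = pF`, `φ(0) = 0`; it is bounded. -/
def eF (k L θ r : ℝ) : ℝ := Real.exp (2 * (k * L / θ * (1 - (1 + r / L) ^ (-θ))))

section
variable {q R k L θ r : ℝ}

theorem wF_base_pos (R r : ℝ) : 0 < 1 + r ^ 2 / R ^ 2 := by positivity

theorem contDiff_wF (q R r : ℝ) : ContDiffAt ℝ 1 (wF q R) r := by
  unfold wF
  exact contDiffAt_const.sub ((contDiffAt_const.add
    ((contDiffAt_id.pow 2).div_const _)).rpow_const_of_ne (wF_base_pos R r).ne')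

theorem hasDerivAt_wF (q R r : ℝ) : HasDerivAt (wF q R) (wF' q R r) r := by
  have h := ((((hasDerivAt_id r).pow 2).div_const (R ^ 2)).const_add 1).rpow_const (p := -q)
    (Or.inl (wF_base_pos R r).ne')
  refine (h.const_sub 1).congr_deriv ?_
  simp only [wF', id, Pi.pow_apply]
  push_cast
  ring

theorem contDiff_pF (hL : 0 < L) (hr : 0 < r) (k θ : ℝ) : ContDiffAt ℝ 1 (pF k L θ) r := by
  unfold pF
  have : (1 + r / L) ≠ 0 := by positivity
  exact contDiffAt_const.mul ((contDiffAt_const.add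
    (contDiffAt_id.div_const _)).rpow_const_of_ne this)

theorem hasDerivAt_pF (hL : 0 < L) (hr : 0 < r) (k θ : ℝ) :
    HasDerivAt (pF k L θ) (pF' k L θ r) r := by
  have h0 : 0 < 1 + r / L := by positivity
  have h := (((hasDerivAt_id r).div_const L).const_add 1).rpow_const (p := -1 - θ)
    (Or.inl h0.ne')
  refine (h.const_mul k).congr_deriv ?_
  simp only [pF', pF, id]
  rw [Real.rpow_sub_one h0.ne']
  field_simp
  ring

theorem contDiff_eF (hL : 0 < L) (hr : 0 < r) (k θ : ℝ) : ContDiffAt ℝ 1 (eF k L θ) r := by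
  unfold eF
  have : (1 + r / L) ≠ 0 := by positivity
  exact (contDiffAt_const.mul (contDiffAt_const.mul (contDiffAt_const.sub
    ((contDiffAt_const.add (contDiffAt_id.div_const _)).rpow_const_of_ne this)))).exp

theorem hasDerivAt_eF (hL : 0 < L) (hr : 0 < r) (k : ℝ) (hθ : 0 < θ) :
    HasDerivAt (eF k L θ) (2 * pF k L θ r * eF k L θ r) r := by
  have h0 : 0 < 1 + r / L := by positivity
  have h := (((hasDerivAt_id r).div_const L).const_add 1).rpow_const (p := -θ)
    (Or.inl h0.ne')
  refine ((((h.const_sub 1).const_mul (k * L / θ)).const_mul 2).exp).congr_deriv ?_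
  simp only [eF, pF, id]
  rw [show -θ - 1 = -1 - θ by ring]
  field_simp

theorem eF_bounds (hL : 0 < L) (hr : 0 < r) (hk : 0 < k) (hθ : 0 < θ) :
    1 ≤ eF k L θ r ∧ eF k L θ r ≤ Real.exp (2 * (k * L / θ)) := by
  have h1 : 1 ≤ 1 + r / L := by
    have : 0 < r / L := by positivity
    linarith
  have h2 : (1 + r / L) ^ (-θ) ≤ 1 := Real.rpow_le_one_of_one_le_of_nonpos h1 (by linarith)
  have h3 : 0 ≤ (1 + r / L) ^ (-θ) := by positivity
  constructor
  · rw [eF, Real.one_le_exp_iff]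
    have : 0 ≤ 1 - (1 + r / L) ^ (-θ) := by linarith
    positivity
  · rw [eF, Real.exp_le_exp]
    have : k * L / θ * (1 - (1 + r / L) ^ (-θ)) ≤ k * L / θ * 1 := by gcongr; linarith
    linarith

theorem pF_pos (hL : 0 < L) (hr : 0 < r) (hk : 0 < k) (θ : ℝ) : 0 < pF k L θ r := by
  unfold pF; positivity

theorem pF_le (hL : 0 < L) (hr : 0 < r) (hk : 0 < k) (hθ : 0 < θ) :
    pF k L θ r ≤ k * (L / (L + r)) := by
  have h1 : 1 ≤ 1 + r / L := by
    have : 0 < r / L := by positivity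
    linarith
  have h2 : (1 + r / L) ^ (-1 - θ) ≤ (1 + r / L) ^ (-1 : ℝ) :=
    Real.rpow_le_rpow_of_exponent_le h1 (by linarith)
  have h3 : (1 + r / L) ^ (-1 : ℝ) = L / (L + r) := by
    rw [Real.rpow_neg_one]; field_simp
  rw [h3] at h2
  unfold pF; gcongr

theorem pF_le_k (hL : 0 < L) (hr : 0 < r) (hk : 0 < k) (hθ : 0 < θ) : pF k L θ r ≤ k := by
  refine (pF_le hL hr hk hθ).trans (mul_le_of_le_one_right hk.le ?_)
  rw [div_le_one (by positivity)]; linarith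

/-- For `4r ≤ L` the slope of the phase is still at least half of its value at the origin. -/
theorem le_pF (hL : 0 < L) (hr : 0 < r) (hk : 0 < k) (hθ1 : θ ≤ 1) (hrL : 4 * r ≤ L) :
    k / 2 ≤ pF k L θ r := by
  have h0 : r / L ≤ 1 / 4 := by rw [div_le_iff₀ hL]; linarith
  have h0' : 0 < r / L := by positivity
  have h2 : (1 + r / L) ^ (-2 : ℝ) ≤ (1 + r / L) ^ (-1 - θ) :=
    Real.rpow_le_rpow_of_exponent_le (by linarith) (by linarith)
  have h3 : (1 / 2 : ℝ) ≤ (1 + r / L) ^ (-2 : ℝ) := by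
    rw [Real.rpow_neg (by positivity), Real.rpow_two, one_div]
    apply inv_anti₀ (by positivity)
    nlinarith
  unfold pF
  have := mul_le_mul_of_nonneg_left (h3.trans h2) hk.le
  linarith

theorem wF'_pos (hq : 0 < q) (hR : 1 ≤ R) (hr : 0 < r) : 0 < wF' q R r := by
  have : 0 < R := by linarith
  unfold wF'; positivity

/-- With `t = r²/R²` and `D = (1 + t)^q`, one has `w = 1 - 1/D` and `r w' = 2qt / (D(1 + t))`,
and Bernoulli's inequalities control `D`. -/
theorem wF_aux (hq : 0 < q) (hq1 : q ≤ 1) (hR : 1 ≤ R) (hr : 0 < r) :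
    ∃ t D : ℝ, t = r ^ 2 / R ^ 2 ∧ D = (1 + t) ^ q ∧ 0 < t ∧ 1 ≤ D ∧ D ≤ 1 + q * t ∧
      1 + (1 + q) * t ≤ (1 + t) * D ∧ wF q R r = 1 - 1 / D ∧
      r * wF' q R r = 2 * q * t / (D * (1 + t)) := by
  have hR0 : 0 < R := by linarith
  have ht : 0 < r ^ 2 / R ^ 2 := by positivity
  refine ⟨_, _, rfl, rfl, ht, ?_, ?_, ?_, ?_, ?_⟩
  · exact Real.one_le_rpow (by linarith) hq.le
  · exact rpow_one_add_le_one_add_mul_self (by linarith) hq.le hq1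
  · have := one_add_mul_self_le_rpow_one_add (s := r ^ 2 / R ^ 2) (by linarith)
      (p := 1 + q) (by linarith)
    rwa [Real.rpow_add (by positivity), Real.rpow_one] at this
  · rw [wF, Real.rpow_neg (by positivity), one_div]
  · rw [wF', Real.rpow_sub_one (by positivity), Real.rpow_neg (by positivity)]
    field_simp

theorem wF_bounds (hq : 0 < q) (hq1 : q ≤ 1) (hR : 1 ≤ R) (hr : 0 < r) :
    0 ≤ wF q R r ∧ wF q R r ≤ 1 ∧ wF q R r ≤ r ∧ wF q R r ≤ r ^ 2 := by
  obtain ⟨t, D, ht, -, ht0, hD1, hD2, -, hw, -⟩ := wF_aux hq hq1 hR hr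
  have hD0 : 0 < D := by linarith
  have hqt : q * t ≤ t := mul_le_of_le_one_left ht0.le hq1
  have hR0 : 0 < R := by linarith
  have htr : t ≤ r ^ 2 := by
    rw [ht]; exact div_le_self (by positivity) (by nlinarith)
  have h1 : 1 / D ≤ 1 := by rw [div_le_one hD0]; exact hD1
  have h2 : 1 / (1 + t) ≤ 1 / D := one_div_le_one_div_of_le hD0 (by linarith)
  have h3 : 1 - 1 / (1 + t) = t / (1 + t) := by field_simp; ring
  have h4 : t / (1 + t) ≤ t := div_le_self ht0.le (by linarith)
  have h5 : t / (1 + t) ≤ r := by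
    rw [div_le_iff₀ (by positivity)]
    by_cases h : r ≤ 1
    · nlinarith
    · nlinarith
  have h6 : 0 < 1 / D := by positivity
  rw [hw]
  refine ⟨?_, ?_, ?_, ?_⟩ <;> linarith

theorem wF_zero (q R : ℝ) : wF q R 0 = 0 := by simp [wF]

theorem mul_wF'_le (hq : 0 < q) (hq1 : q ≤ 1) (hR : 1 ≤ R) (hr : 0 < r) :
    r * wF' q R r ≤ 2 * wF q R r := by
  obtain ⟨t, D, ht, -, ht0, hD1, hD2, hD3, hw, hw'⟩ := wF_aux hq hq1 hR hr
  have hD0 : 0 < D := by linarith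
  rw [hw, hw', div_le_iff₀ (by positivity)]
  have : 2 * (1 - 1 / D) * (D * (1 + t)) = 2 * ((1 + t) * D) - 2 * (1 + t) := by
    field_simp
  rw [this]; linarith

/-- The quantity `2w/r - w'` is positive but of relative size `r²/R²` only. -/
theorem two_wF_le (hq : 0 < q) (hq1 : q ≤ 1) (hR : 1 ≤ R) (hr : 0 < r) :
    2 * wF q R r ≤ r * (1 + r ^ 2 / R ^ 2) * wF' q R r := by
  obtain ⟨t, D, ht, -, ht0, hD1, hD2, hD3, hw, hw'⟩ := wF_aux hq hq1 hR hr
  have hD0 : 0 < D := by linarith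
  rw [← ht, mul_right_comm, hw, hw']
  have : 2 * q * t / (D * (1 + t)) * (1 + t) = 2 * q * t / D := by field_simp
  rw [this, le_div_iff₀ hD0]
  have : 2 * (1 - 1 / D) * D = 2 * D - 2 := by field_simp
  linarith

theorem wF_ratio (hq : 0 < q) (hq1 : q ≤ 1) (hR : 1 ≤ R) (hr : 0 < r) :
    2 * wF q R r / r - wF' q R r ≤ 1 / R ^ 2 * r ^ 2 * wF' q R r := by
  have h := two_wF_le hq hq1 hR hr
  have h2 : 2 * wF q R r / r ≤ (1 + r ^ 2 / R ^ 2) * wF' q R r := by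
    rw [div_le_iff₀ hr]; linarith
  have : (1 + r ^ 2 / R ^ 2) * wF' q R r = wF' q R r + 1 / R ^ 2 * r ^ 2 * wF' q R r := by ring
  linarith

/-- For large `r` the ratio `w/w'` grows only slightly faster than `r`. -/
theorem wF_le_wF' (hq : 0 < q) (hq1 : q ≤ 1) (hR : 1 ≤ R) (hr : 0 < r) :
    wF q R r ≤ 1 / (2 * q) * (1 + r ^ 2) ^ q * r * wF' q R r := by
  obtain ⟨t, D, ht, hD, ht0, hD1, hD2, hD3, hw, hw'⟩ := wF_aux hq hq1 hR hr
  have hD0 : 0 < D := by linarith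
  have hqt : q * t ≤ t := mul_le_of_le_one_left ht0.le hq1
  have htr : t ≤ r ^ 2 := by
    rw [ht]; exact div_le_self (by positivity) (by nlinarith)
  have h0 : D ≤ (1 + r ^ 2) ^ q := by
    rw [hD]; exact Real.rpow_le_rpow (by positivity) (by linarith) hq.le
  have h1 : wF q R r ≤ 1 / (2 * q) * D * (r * wF' q R r) := by
    rw [hw, hw']
    have : 1 / (2 * q) * D * (2 * q * t / (D * (1 + t))) = 1 - 1 / (1 + t) := by
      field_simp; ring
    rw [this]
    have h2 : 1 / (1 + t) ≤ 1 / D := one_div_le_one_div_of_le hD0 (by linarith)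
    linarith
  have hp := wF'_pos hq hR hr
  calc _ ≤ _ := h1
    _ ≤ 1 / (2 * q) * (1 + r ^ 2) ^ q * (r * wF' q R r) := by gcongr
    _ = _ := by ring

/-- The short-range decay `(1+r)^{-γ-1}` against `w` is controlled by a decaying multiple of
`w'` as soon as `q ≤ γ/4`. -/
theorem wF_decay (hq : 0 < q) (hq1 : q ≤ 1) (hR : 1 ≤ R) (hr : 0 < r) {γ : ℝ} (hqγ : q ≤ γ / 4) :
    wF q R r * (1 + r) ^ (-γ - 1) ≤ 1 / (2 * q) * (1 + r) ^ (-γ / 2) * wF' q R r := by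
  have hp := wF'_pos hq hR hr
  have h1 : (1 + r ^ 2) ^ q ≤ (1 + r) ^ (γ / 2) := by
    calc (1 + r ^ 2) ^ q ≤ ((1 + r) ^ (2 : ℝ)) ^ q := by
          apply Real.rpow_le_rpow (by positivity) _ hq.le
          rw [Real.rpow_two]; nlinarith
      _ = (1 + r) ^ (2 * q) := by rw [← Real.rpow_mul (by positivity)]
      _ ≤ _ := Real.rpow_le_rpow_of_exponent_le (by linarith) (by linarith)
  have h2 : (1 + r) ^ (γ / 2) * (1 + r) * (1 + r) ^ (-γ - 1) = (1 + r) ^ (-γ / 2) := by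
    rw [← Real.rpow_add_one (by positivity), ← Real.rpow_add (by positivity)]
    congr 1; ring
  calc _ ≤ (1 / (2 * q) * (1 + r ^ 2) ^ q * r * wF' q R r) * (1 + r) ^ (-γ - 1) := by
        gcongr; exact wF_le_wF' hq hq1 hR hr
    _ ≤ (1 / (2 * q) * (1 + r) ^ (γ / 2) * (1 + r) * wF' q R r) * (1 + r) ^ (-γ - 1) := by
        gcongr; linarith
    _ = 1 / (2 * q) * ((1 + r) ^ (γ / 2) * (1 + r) * (1 + r) ^ (-γ - 1)) * wF' q R r := by ring
    _ = _ := by rw [h2]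

theorem wF_sq_div (hq : 0 < q) (hq1 : q ≤ 1) (hR : 1 ≤ R) (hr : 0 < r) {m : ℝ}
    (hm : q + 1 / 2 ≤ m) :
    3 * wF q R r ^ 2 / wF' q R r ≤ 3 / (2 * q) * (1 + r ^ 2) ^ m := by
  have hp := wF'_pos hq hR hr
  obtain ⟨h0, h1, -, -⟩ := wF_bounds hq hq1 hR hr
  have h2 := wF_le_wF' hq hq1 hR hr
  have h3 : r ≤ (1 + r ^ 2) ^ (1 / 2 : ℝ) := by
    rw [← Real.sqrt_eq_rpow]; exact Real.le_sqrt_of_sq_le (by linarith)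
  have h4 : (1 + r ^ 2) ^ q * r ≤ (1 + r ^ 2) ^ m := by
    calc _ ≤ (1 + r ^ 2) ^ q * (1 + r ^ 2) ^ (1 / 2 : ℝ) := by gcongr
      _ = (1 + r ^ 2) ^ (q + 1 / 2) := by rw [← Real.rpow_add (by positivity)]
      _ ≤ _ := Real.rpow_le_rpow_of_exponent_le (by nlinarith) hm
  rw [div_le_iff₀ hp]
  calc 3 * wF q R r ^ 2 ≤ 3 * wF q R r := by nlinarith
    _ ≤ 3 * (1 / (2 * q) * (1 + r ^ 2) ^ q * r * wF' q R r) := by gcongr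
    _ = 3 / (2 * q) * ((1 + r ^ 2) ^ q * r) * wF' q R r := by ring
    _ ≤ _ := by gcongr

theorem le_wF' (hq : 0 < q) (hR : 1 ≤ R) (hr : 0 < r) {m : ℝ}
    (hm : q + 1 / 2 ≤ m) :
    2 * q / R ^ 2 * (r ^ 2 * (1 + r ^ 2) ^ (-(m + 1))) ≤ wF' q R r := by
  have hR0 : 0 < R := by linarith
  have h3 : r ≤ (1 + r ^ 2) ^ (1 / 2 : ℝ) := by
    rw [← Real.sqrt_eq_rpow]; exact Real.le_sqrt_of_sq_le (by linarith)
  have htr : r ^ 2 / R ^ 2 ≤ r ^ 2 := div_le_self (by positivity) (by nlinarith)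
  have h4 : r * (1 + r ^ 2) ^ (-(m + 1)) ≤ (1 + r ^ 2 / R ^ 2) ^ (-q - 1) := by
    calc _ ≤ (1 + r ^ 2) ^ (1 / 2 : ℝ) * (1 + r ^ 2) ^ (-(m + 1)) := by gcongr
      _ = (1 + r ^ 2) ^ (1 / 2 - (m + 1)) := by
          rw [← Real.rpow_add (by positivity)]; congr 1
      _ ≤ (1 + r ^ 2) ^ (-q - 1) :=
          Real.rpow_le_rpow_of_exponent_le (by nlinarith) (by linarith)
      _ ≤ _ := Real.rpow_le_rpow_of_nonpos (by positivity) (by linarith) (by linarith)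
  unfold wF'
  calc _ = 2 * q * r / R ^ 2 * (r * (1 + r ^ 2) ^ (-(m + 1))) := by ring
    _ ≤ _ := by gcongr

/-- The error from the second derivative of the phase is a small multiple of `w'` when first `L`
and then `R` are large. -/
theorem pF'_sq_le (hq : 0 < q) (hq1 : q ≤ 1) (hR : 1 ≤ R) (hr : 0 < r) (hL : 0 < L) (hk : 0 < k)
    (hθ : 0 < θ) (hθ1 : θ ≤ 1) :
    3 / 4 * (wF q R r * pF' k L θ r ^ 2 / pF k L θ r)
      ≤ 3 / 2 * k * (1 / L + L / R ^ 2) * wF' q R r := by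
  have hR0 : 0 < R := by linarith
  have hp := pF_pos hL hr hk θ
  have hp2 := pF_le hL hr hk hθ
  have hw := (wF_bounds hq hq1 hR hr).1
  have hw' := wF'_pos hq hR hr
  have h2 := two_wF_le hq hq1 hR hr
  have e : wF q R r * pF' k L θ r ^ 2 / pF k L θ r
      = wF q R r * pF k L θ r * (1 + θ) ^ 2 / (L + r) ^ 2 := by
    unfold pF'; field_simp
  rw [e]
  have h3 : L * (r * (1 + r ^ 2 / R ^ 2)) / (L + r) ^ 3 ≤ 1 / L + L / R ^ 2 := by
    rw [div_le_iff₀ (by positivity)]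
    have a1 : L * r ≤ 1 / L * (L + r) ^ 3 := by
      rw [div_mul_eq_mul_div, le_div_iff₀ hL, one_mul]
      have : (L + r) ^ 3 = L ^ 3 + 3 * L ^ 2 * r + 3 * L * r ^ 2 + r ^ 3 := by ring
      rw [this]
      have : 0 ≤ L ^ 3 + 2 * L ^ 2 * r + 3 * L * r ^ 2 + r ^ 3 := by positivity
      nlinarith
    have a2 : L / R ^ 2 * r ^ 3 ≤ L / R ^ 2 * (L + r) ^ 3 := by gcongr; linarith
    calc L * (r * (1 + r ^ 2 / R ^ 2)) = L * r + L / R ^ 2 * r ^ 3 := by ring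
      _ ≤ _ := by linarith
  calc 3 / 4 * (wF q R r * pF k L θ r * (1 + θ) ^ 2 / (L + r) ^ 2)
      ≤ 3 / 4 * (wF q R r * (k * (L / (L + r))) * (1 + 1) ^ 2 / (L + r) ^ 2) := by gcongr
    _ = 3 / 2 * k * (2 * wF q R r) * L / (L + r) ^ 3 := by field_simp; ring
    _ ≤ 3 / 2 * k * (r * (1 + r ^ 2 / R ^ 2) * wF' q R r) * L / (L + r) ^ 3 := by gcongr
    _ = 3 / 2 * k * (L * (r * (1 + r ^ 2 / R ^ 2)) / (L + r) ^ 3) * wF' q R r := by ring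
    _ ≤ _ := by gcongr

theorem phase_lower (hq : 0 < q) (hq1 : q ≤ 1) (hR : 1 ≤ R) (hr : 0 < r) (hL : 0 < L)
    (hθ : 0 < θ) :
    pF k L θ r ^ 2 * wF' q R r * (1 - (1 + r ^ 2 / R ^ 2) * (1 + θ) * r / (L + r))
      ≤ wF' q R r * pF k L θ r ^ 2 + 2 * wF q R r * pF k L θ r * pF' k L θ r := by
  have h2 := two_wF_le hq hq1 hR hr
  have e : wF' q R r * pF k L θ r ^ 2 + 2 * wF q R r * pF k L θ r * pF' k L θ r
      = pF k L θ r ^ 2 * (wF' q R r) - pF k L θ r ^ 2 * (1 + θ) / (L + r) * (2 * wF q R r) := by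
    unfold pF'; field_simp; ring
  rw [e]
  have := mul_le_mul_of_nonneg_left h2
    (show 0 ≤ pF k L θ r ^ 2 * (1 + θ) / (L + r) by positivity)
  calc _ = pF k L θ r ^ 2 * (wF' q R r) - pF k L θ r ^ 2 * (1 + θ) / (L + r) *
        (r * (1 + r ^ 2 / R ^ 2) * wF' q R r) := by ring
    _ ≤ _ := by linarith

/-- On a ball of radius much smaller than `L` and `R` the phase contributes a large multiple of
`w'`. -/
theorem phase_near (hq : 0 < q) (hq1 : q ≤ 1) (hR : 1 ≤ R) (hr : 0 < r) (hL : 0 < L) (hk : 0 < k)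
    (hθ : 0 < θ) (hθ1 : θ ≤ 1) (hrL : 4 * r ≤ L) (hrR : 2 * r ≤ R) :
    k ^ 2 / 8 * wF' q R r
      ≤ wF' q R r * pF k L θ r ^ 2 + 2 * wF q R r * pF k L θ r * pF' k L θ r := by
  have hR0 : 0 < R := by linarith
  have hw' := wF'_pos hq hR hr
  refine le_trans ?_ (phase_lower hq hq1 hR hr hL hθ)
  have h1 : k ^ 2 / 4 ≤ pF k L θ r ^ 2 := by
    have := le_pF hL hr hk hθ1 hrL
    nlinarith
  have h2 : (1 + r ^ 2 / R ^ 2) * (1 + θ) * r / (L + r) ≤ 1 / 2 := by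
    have a1 : r ^ 2 / R ^ 2 ≤ 1 / 4 := by rw [div_le_iff₀ (by positivity)]; nlinarith
    rw [div_le_iff₀ (by positivity)]
    calc (1 + r ^ 2 / R ^ 2) * (1 + θ) * r ≤ (1 + 1 / 4) * (1 + 1) * r := by gcongr
      _ ≤ _ := by linarith
  calc k ^ 2 / 8 * wF' q R r = k ^ 2 / 4 * wF' q R r * (1 / 2) := by ring
    _ ≤ _ := by gcongr; linarith

/-- Everywhere, the phase does at most little harm if `θ` and `L/R` are small. -/
theorem phase_far (hq : 0 < q) (hq1 : q ≤ 1) (hR : 1 ≤ R) (hr : 0 < r) (hL : 0 < L) (hk : 0 < k)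
    (hθ : 0 < θ) (hθ1 : θ ≤ 1) :
    -((k ^ 2 * θ + 2 * k ^ 2 * L ^ 2 / R ^ 2) * wF' q R r)
      ≤ wF' q R r * pF k L θ r ^ 2 + 2 * wF q R r * pF k L θ r * pF' k L θ r := by
  have hR0 : 0 < R := by linarith
  have hw' := wF'_pos hq hR hr
  have hp := pF_pos hL hr hk θ
  have hp2 := pF_le hL hr hk hθ
  refine le_trans ?_ (phase_lower hq hq1 hR hr hL hθ)
  have e : 1 - (1 + r ^ 2 / R ^ 2) * (1 + θ) * r / (L + r)
      = L / (L + r) - (θ * (r / (L + r)) + (1 + θ) * r ^ 3 / (R ^ 2 * (L + r))) := by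
    field_simp; ring
  have h0 : 0 ≤ L / (L + r) := by positivity
  have h1 : pF k L θ r ^ 2 * (θ * (r / (L + r)) + (1 + θ) * r ^ 3 / (R ^ 2 * (L + r)))
      ≤ k ^ 2 * θ + 2 * k ^ 2 * L ^ 2 / R ^ 2 := by
    have a1 : L / (L + r) ≤ 1 := by rw [div_le_one (by positivity)]; linarith
    have a2 : r / (L + r) ≤ 1 := by rw [div_le_one (by positivity)]; linarith
    calc _ ≤ (k * (L / (L + r))) ^ 2 *
          (θ * (r / (L + r)) + (1 + 1) * r ^ 3 / (R ^ 2 * (L + r))) := by gcongr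
      _ = k ^ 2 * θ * ((L / (L + r)) ^ 2 * (r / (L + r)))
          + 2 * k ^ 2 * L ^ 2 / R ^ 2 * (r / (L + r)) ^ 3 := by field_simp; ring
      _ ≤ k ^ 2 * θ * (1 ^ 2 * 1) + 2 * k ^ 2 * L ^ 2 / R ^ 2 * 1 ^ 3 := by gcongr
      _ = _ := by ring
  rw [e]
  have h3 := mul_le_mul_of_nonneg_right h1 hw'.le
  have h4 : 0 ≤ pF k L θ r ^ 2 * wF' q R r * (L / (L + r)) := by positivity
  nlinarith
end

/-! ### Choice of parameters and the estimate for measurable data -/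

/-- The parameters of the Carleman weight, chosen in the order `R₀`, `k`, `L`, `θ`, `R`:
beyond `R₀` the potentials are small compared with `τ₀`, inside the ball of radius `R₀` the
slope `k` of the phase dominates them, and `L`, `θ`, `R` make all remaining error terms small. -/
theorem exists_params {τ₀ C₁ γ : ℝ} (hτ₀ : 0 < τ₀) (hC₁ : 0 < C₁) (hγ : 0 < γ) :
    ∃ R₀ k L θ R : ℝ, 0 < R₀ ∧ 0 < k ∧ 0 < L ∧ 0 < θ ∧ θ ≤ 1 ∧ 1 ≤ R ∧
      (∀ r, R₀ ≤ r → C₁ * (1 + r) ^ (-γ / 2) ≤ τ₀ / 4) ∧ C₁ ≤ k ^ 2 / 8 ∧ 4 * R₀ ≤ L ∧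
      3 / 2 * k * (1 / L + L / R ^ 2) ≤ τ₀ / 8 ∧ k ^ 2 * θ + 2 * k ^ 2 * L ^ 2 / R ^ 2 ≤ τ₀ / 8 ∧
      2 * R₀ ≤ R ∧ 1 / R ^ 2 / 4 ≤ τ₀ / 16 := by
  obtain ⟨R₀, hR₀, hR₀'⟩ : ∃ R₀ : ℝ, 0 < R₀ ∧
      ∀ r, R₀ ≤ r → C₁ * (1 + r) ^ (-γ / 2) ≤ τ₀ / 4 := by
    have h1 : Filter.Tendsto (fun r : ℝ => C₁ * (1 + r) ^ (-(γ / 2))) Filter.atTop (nhds 0) := by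
      have := ((tendsto_rpow_neg_atTop (half_pos hγ)).comp
        (Filter.tendsto_atTop_add_const_left Filter.atTop (1 : ℝ) Filter.tendsto_id)).const_mul C₁
      simpa using this
    have h2 := (h1.eventually (eventually_le_nhds (show (0 : ℝ) < τ₀ / 4 by positivity))).and
      (Filter.eventually_gt_atTop 0)
    obtain ⟨R₀, h⟩ := Filter.eventually_atTop.1 h2
    refine ⟨R₀, (h R₀ le_rfl).2, fun r hr => ?_⟩
    rw [neg_div]; exact (h r hr).1
  set k := C₁ * 8 + 1 with hk
  have hk0 : 0 < k := by positivity
  set L := 4 * R₀ + 24 * k / τ₀ with hL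
  have hL0 : 0 < L := by positivity
  set θ := min 1 (τ₀ / (16 * k ^ 2)) with hθ
  have hθ0 : 0 < θ := lt_min one_pos (by positivity)
  set T := 1 + 2 * R₀ + 4 / τ₀ + 24 * k * L / τ₀ + 32 * k ^ 2 * L ^ 2 / τ₀ with hT
  have hT1 : 1 ≤ T := by
    have : 0 ≤ 2 * R₀ + 4 / τ₀ + 24 * k * L / τ₀ + 32 * k ^ 2 * L ^ 2 / τ₀ := by positivity
    linarith
  have hTT : T ≤ T ^ 2 := by nlinarith
  have e1 : 0 < 4 / τ₀ := by positivity
  have e2 : 0 < 24 * k * L / τ₀ := by positivity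
  have e3 : 0 < 32 * k ^ 2 * L ^ 2 / τ₀ := by positivity
  have hT0 : 0 < T ^ 2 := by positivity
  refine ⟨R₀, k, L, θ, T, hR₀, hk0, hL0, hθ0, min_le_left _ _, hT1, hR₀', ?_, ?_, ?_, ?_, ?_, ?_⟩
  · nlinarith
  · have : 0 < 24 * k / τ₀ := by positivity
    linarith
  · have a1 : 3 / 2 * k * (1 / L) ≤ τ₀ / 16 := by
      rw [mul_one_div, div_le_iff₀ hL0]
      have : τ₀ / 16 * (24 * k / τ₀) = 3 / 2 * k := by field_simp; ring
      have : 0 < τ₀ / 16 * (4 * R₀) := by positivity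
      rw [hL, mul_add]; linarith
    have a2 : 3 / 2 * k * (L / T ^ 2) ≤ τ₀ / 16 := by
      rw [← mul_div_assoc, div_le_iff₀ hT0]
      have h : 24 * k * L / τ₀ ≤ T ^ 2 := by linarith
      rw [div_le_iff₀ hτ₀] at h
      linarith
    rw [mul_add]; linarith
  · have a1 : k ^ 2 * θ ≤ τ₀ / 16 := by
      calc k ^ 2 * θ ≤ k ^ 2 * (τ₀ / (16 * k ^ 2)) := by gcongr; exact min_le_right _ _
        _ = _ := by field_simp
    have a2 : 2 * k ^ 2 * L ^ 2 / T ^ 2 ≤ τ₀ / 16 := by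
      rw [div_le_iff₀ hT0]
      have h : 32 * k ^ 2 * L ^ 2 / τ₀ ≤ T ^ 2 := by linarith
      rw [div_le_iff₀ hτ₀] at h
      linarith
    linarith
  · linarith
  · rw [div_div, div_le_iff₀ (by positivity)]
    have h : 4 / τ₀ ≤ T ^ 2 := by linarith
    rw [div_le_iff₀ hτ₀] at h
    linarith

/-- Positivity of the coefficient of `|u|²` in the Carleman identity. -/
theorem bracket_lower {τ₀ τ a γ q R₀ k L θ R r v dv v2 : ℝ} (hτ₀ : 0 < τ₀) (ha : 0 < a)
    (hq : 0 < q) (hq1 : q ≤ 1) (hqγ : q ≤ γ / 4) (hτ : τ₀ < τ)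
    (hk : 0 < k) (hL : 0 < L) (hθ : 0 < θ) (hθ1 : θ ≤ 1) (hR : 1 ≤ R)
    (hfar : ∀ r, R₀ ≤ r → (a + a / (2 * q) + 3 * a ^ 2 / (4 * q ^ 2)) * (1 + r) ^ (-γ / 2) ≤ τ₀ / 4)
    (hkC : a + a / (2 * q) + 3 * a ^ 2 / (4 * q ^ 2) ≤ k ^ 2 / 8) (hRL : 4 * R₀ ≤ L)
    (hp1 : 3 / 2 * k * (1 / L + L / R ^ 2) ≤ τ₀ / 8)
    (hp2 : k ^ 2 * θ + 2 * k ^ 2 * L ^ 2 / R ^ 2 ≤ τ₀ / 8)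
    (hRR : 2 * R₀ ≤ R) (hp3 : 1 / R ^ 2 / 4 ≤ τ₀ / 16) (hr : 0 < r)
    (hv : v ≤ a * (1 + r) ^ (-γ)) (hdv : dv ≤ a * (1 + r) ^ (-γ - 1))
    (hv2 : |v2| ≤ a * (1 + r) ^ (-γ - 1)) :
    τ₀ / 4 * wF' q R r ≤
      wF' q R r * (pF k L θ r ^ 2 + τ - v) + 2 * wF q R r * pF k L θ r * pF' k L θ r - wF q R r * dv
      - 3 / 4 * (wF q R r * pF' k L θ r ^ 2 / pF k L θ r) - 3 * wF q R r ^ 2 * v2 ^ 2 / wF' q R r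
      - 1 / R ^ 2 / 4 * wF' q R r := by
  have hw' := wF'_pos hq hR hr
  have hw := (wF_bounds hq hq1 hR hr).1
  have hdec := wF_decay hq hq1 hR hr hqγ
  set w := wF q R r
  set w' := wF' q R r
  set δ := (1 + r) ^ (-γ / 2) with hδ
  have hδ0 : 0 < δ := by positivity
  have hδ1 : δ ≤ 1 := Real.rpow_le_one_of_one_le_of_nonpos (by linarith) (by linarith)
  have b1 : w' * v ≤ a * δ * w' := by
    have : (1 + r) ^ (-γ) ≤ δ := Real.rpow_le_rpow_of_exponent_le (by linarith) (by linarith)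
    have h2 : v ≤ a * δ := hv.trans (by gcongr)
    nlinarith
  have b2 : w * dv ≤ a / (2 * q) * δ * w' := by
    calc w * dv ≤ w * (a * (1 + r) ^ (-γ - 1)) := by gcongr
      _ = a * (w * (1 + r) ^ (-γ - 1)) := by ring
      _ ≤ a * (1 / (2 * q) * δ * w') := by gcongr
      _ = _ := by ring
  have b3 : 3 * w ^ 2 * v2 ^ 2 / w' ≤ 3 * a ^ 2 / (4 * q ^ 2) * δ * w' := by
    have h1 : w * |v2| ≤ a / (2 * q) * δ * w' := by
      calc w * |v2| ≤ w * (a * (1 + r) ^ (-γ - 1)) := by gcongr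
        _ = a * (w * (1 + r) ^ (-γ - 1)) := by ring
        _ ≤ a * (1 / (2 * q) * δ * w') := by gcongr
        _ = _ := by ring
    have h2 : (w * |v2|) ^ 2 ≤ (a / (2 * q) * δ * w') ^ 2 := by gcongr
    rw [mul_pow, sq_abs] at h2
    rw [div_le_iff₀ hw']
    calc 3 * w ^ 2 * v2 ^ 2 ≤ 3 * (a / (2 * q) * δ * w') ^ 2 := by linarith
      _ = 3 * a ^ 2 / (4 * q ^ 2) * (δ * δ) * w' * w' := by field_simp; ring
      _ ≤ 3 * a ^ 2 / (4 * q ^ 2) * (δ * 1) * w' * w' := by gcongr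
      _ = _ := by ring
  have b4 := (pF'_sq_le hq hq1 hR hr hL hk hθ hθ1).trans (mul_le_mul_of_nonneg_right hp1 hw'.le)
  have b5 := mul_le_mul_of_nonneg_right hp3 hw'.le
  have b6 := mul_le_mul_of_nonneg_right hτ.le hw'.le
  set C₁ := a + a / (2 * q) + 3 * a ^ 2 / (4 * q ^ 2) with hC₁
  have hC₁0 : 0 < C₁ := by positivity
  have b7 : a * δ * w' + a / (2 * q) * δ * w' + 3 * a ^ 2 / (4 * q ^ 2) * δ * w' = C₁ * δ * w' := by
    rw [hC₁]; ring
  have hpos : 0 < τ₀ * w' := by positivity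
  by_cases hrR : r ≤ R₀
  · have b8 := phase_near hq hq1 hR hr hL hk hθ hθ1 (by linarith) (by linarith)
    have b9 : C₁ * δ * w' ≤ k ^ 2 / 8 * w' := by
      have : C₁ * δ ≤ C₁ := mul_le_of_le_one_right hC₁0.le hδ1
      gcongr; linarith
    linarith
  · have b8 := phase_far hq hq1 hR hr hL hk hθ hθ1
    have b9 := mul_le_mul_of_nonneg_right (hfar r (by linarith)) hw'.le
    have b10 := mul_le_mul_of_nonneg_right hp2 hw'.le
    linarith

/-- The resolvent estimate for measurable data, in terms of the smooth weights `wt`. -/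
theorem measurable_estimate {τ₀ τ₁ α a γ : ℝ} (hτ₀ : 0 < τ₀) (hτ₀₁ : τ₀ < τ₁) (hα : 0 < α)
    (ha : 0 < a) (hγ : 0 < γ) :
    ∃ C : ℝ, 0 ≤ C ∧ ∀ (d : ℕ), 2 ≤ d → ∀ (V₁ V₂ : Ed d → ℝ), ContDiff ℝ 1 V₁ →
      (∀ x : Ed d, |V₁ x| ≤ a * (1 + ‖x‖) ^ (-γ)) →
      (∀ x : Ed d, |V₂ x| ≤ a * (1 + ‖x‖) ^ (-γ - 1)) →
      (∀ x : Ed d, radialDeriv V₁ x ≤ a * (1 + ‖x‖) ^ (-γ - 1)) →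
      ∀ (τ ε : ℝ), τ₀ < τ → τ < τ₁ → 0 < ε → ε < 1 →
      ∀ (σ : ℝ), |σ| = 1 →
      ∀ (u f : Ed d → ℂ), ContDiff ℝ 2 u →
      (∀ x, lap u x = (V₁ x + V₂ x - τ) • u x + (σ * ε) • (Complex.I * u x) - f x) →
      AEStronglyMeasurable f →
      Integrable (fun x => wt ((1 + α) / 2) 1 x * ‖u x‖ ^ 2) →
      Integrable (fun x => wt ((1 + α) / 2) 1 x * nSq u x) →
      Integrable (fun x => wt (-((1 + α) / 2)) 1 x * ‖f x‖ ^ 2) →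
      (∫ x, wt ((1 + α) / 2) 1 x * ‖u x‖ ^ 2) ≤
        C * ∫ x, wt (-((1 + α) / 2)) 1 x * ‖f x‖ ^ 2 ∧
      (∫ x, wt ((1 + α) / 2) 1 x * nSq u x) ≤
        C * ∫ x, wt (-((1 + α) / 2)) 1 x * ‖f x‖ ^ 2 := by
  set m := (1 + α) / 2 with hm
  have hm0 : 0 < m := by positivity
  set q := min 1 (min (γ / 4) (α / 2)) with hqdef
  have hq : 0 < q := lt_min one_pos (lt_min (by positivity) (by positivity))
  have hq1 : q ≤ 1 := min_le_left _ _
  have hqγ : q ≤ γ / 4 := (min_le_right _ _).trans (min_le_left _ _)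
  have hqα : q + 1 / 2 ≤ m := by
    have : q ≤ α / 2 := (min_le_right _ _).trans (min_le_right _ _)
    linarith
  obtain ⟨R₀, k, L, θ, R, hR₀, hk, hL, hθ, hθ1, hR, hfar, hkC, hRL, hp1, hp2, hRR, hp3⟩ :=
    exists_params (C₁ := a + a / (2 * q) + 3 * a ^ 2 / (4 * q ^ 2)) hτ₀ (by positivity) hγ
  have hR0 : 0 < R := by linarith
  set c := τ₀ / 4 * (2 * q / R ^ 2) with hc
  have hc0 : 0 < c := by positivity
  set c₂ := 3 / (2 * q) with hc₂
  have hc₂0 : 0 < c₂ := by positivity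
  set M := Real.exp (2 * (k * L / θ)) with hM
  have hM0 : 0 < M := Real.exp_pos _
  obtain ⟨C, hC0, hC⟩ := close_estimate (2 * a + τ₁) m (M * (c₂ + 1) / c) hm0
    (by linarith) (by positivity)
  refine ⟨C, hC0, ?_⟩
  intro d hd V₁ V₂ hV₁ hV₁a hV₂a hdV τ ε hτ hτ' hε hε1 σ hσ u f hu heq hfm hS hN hf
  have hle : ∀ (x : Ed d) (s : ℝ), s ≤ 0 → a * (1 + ‖x‖) ^ s ≤ a := fun x s hs =>
    mul_le_of_le_one_right ha.le
      (Real.rpow_le_one_of_one_le_of_nonpos (by linarith [norm_nonneg x]) hs)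
  have hV₁b : ∀ x, |V₁ x| ≤ a := fun x => (hV₁a x).trans (hle x _ (by linarith))
  have hV₂b : ∀ x, |V₂ x| ≤ a := fun x => (hV₂a x).trans (hle x _ (by linarith))
  refine hC d hd u f (fun x => V₁ x + V₂ x - τ) ε σ hu hσ hε hε1 ?_ heq hfm hS hN hf ?_
  · intro x
    have h1 := abs_le.1 (hV₁b x)
    have h2 := abs_le.1 (hV₂b x)
    rw [abs_le]; constructor <;> linarith
  intro hS' hN'
  have hP := (integrable_wt_succ (m := m) (fun x => sq_nonneg ‖u x‖)
    (by exact (hu.continuous.norm.pow 2).aestronglyMeasurable) hS).2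
  have key := carleman_abstract (E := eF k L θ) (w := wF q R) (w' := wF' q R) (p := pF k L θ)
    (p' := pF' k L θ) (V := V₁) (V₂ := V₂) (τ := τ) (s := σ * ε) (a := a) (τ₁ := τ₁) (M := M)
    (k := k) (c := c) (c₂ := c₂) (cΛ := 1 / R ^ 2) (m := m) (f := f) hd hu hV₁ hV₁b
    (by rw [abs_of_pos (by linarith)]; exact hτ'.le) heq
    (fun r hr => contDiff_eF hL hr k θ) (fun r _ => contDiff_wF q R r)
    (fun r hr => contDiff_pF hL hr k θ) (fun r hr => hasDerivAt_eF hL hr k hθ)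
    (fun r _ => hasDerivAt_wF q R r) (fun r hr => hasDerivAt_pF hL hr k θ)
    (fun r hr => (eF_bounds hL hr hk hθ).1) (fun r hr => (eF_bounds hL hr hk hθ).2)
    (wF_zero q R) (fun r hr => (wF_bounds hq hq1 hR hr).1)
    (fun r hr => (wF_bounds hq hq1 hR hr).2.1) (fun r hr => (wF_bounds hq hq1 hR hr).2.2.1)
    (fun r hr => (wF_bounds hq hq1 hR hr).2.2.2) (fun r hr => wF'_pos hq hR hr)
    (fun r hr => pF_pos hL hr hk θ) (fun r hr => pF_le_k hL hr hk hθ)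
    (fun r hr => mul_wF'_le hq hq1 hR hr) (fun r hr => wF_ratio hq hq1 hR hr) hc0.le hc₂0.le
    (by
      intro x hx
      have hr : 0 < ‖x‖ := norm_pos_iff.2 hx
      have h1 := bracket_lower (v := V₁ x) (dv := fderiv ℝ V₁ x x / ‖x‖) (v2 := V₂ x) hτ₀ ha hq
        hq1 hqγ hτ hk hL hθ hθ1 hR hfar hkC hRL hp1 hp2 hRR hp3 hr
        ((le_abs_self _).trans (hV₁a x)) (hdV x) (hV₂a x)
      have h2 := mul_le_mul_of_nonneg_left (le_wF' hq hR hr hqα) (show 0 ≤ τ₀ / 4 by positivity)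
      rw [mul_div_assoc]
      refine le_trans (le_trans (le_of_eq ?_) h2) h1
      rw [hc, wt, one_pow, one_mul]; ring)
    (by
      intro x hx
      have hr : 0 < ‖x‖ := norm_pos_iff.2 hx
      have := wF_sq_div hq hq1 hR hr hqα
      rwa [wt, one_pow, one_mul, neg_neg])
    hS' hN' hf hP
  have hs : |σ * ε| = ε := by rw [abs_mul, hσ, one_mul, abs_of_pos hε]
  rw [hs] at key
  have hF : 0 ≤ ∫ x, wt (-m) 1 x * ‖f x‖ ^ 2 :=
    integral_nonneg fun x => mul_nonneg (wt_pos _ _ _).le (sq_nonneg _)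
  have hG : 0 ≤ ε * ((∫ x, ‖u x‖ ^ 2) + ∫ x, nSq u x) :=
    mul_nonneg hε.le (add_nonneg (integral_nonneg fun x => sq_nonneg _)
      (integral_nonneg fun x => nSq_nonneg u x))
  rw [div_mul_eq_mul_div, le_div_iff₀ hc0, mul_comm]
  refine key.trans ?_
  rw [mul_assoc]
  apply mul_le_mul_of_nonneg_left _ hM0.le
  nlinarith [mul_nonneg hc₂0.le hG]

/-! ### Measurable reduction and comparison of weights -/

/-- Among real `v` with `|v| ≤ b`, the modulus `|g + v z|` is minimised by the truncation to
`[-b, b]` of the unconstrained minimiser. -/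
theorem norm_add_clamp_le (g z : ℂ) {b v : ℝ} (hv : |v| ≤ b) :
    ‖g + max (-b) (min b (-(inner ℝ g z) / ‖z‖ ^ 2)) • z‖ ≤ ‖g + v • z‖ := by
  by_cases hz : z = 0
  · simp [hz]
  have hz0 : 0 < ‖z‖ := norm_pos_iff.2 hz
  set s := -(inner ℝ g z) / ‖z‖ ^ 2 with hs
  have hs' : inner ℝ g z = -(s * ‖z‖ ^ 2) := by rw [hs]; field_simp
  have e : ∀ t : ℝ, ‖g + t • z‖ ^ 2 = ‖g‖ ^ 2 - s ^ 2 * ‖z‖ ^ 2 + ‖z‖ ^ 2 * (t - s) ^ 2 := by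
    intro t
    rw [norm_add_sq_real, inner_smul_right, hs', norm_smul, mul_pow, Real.norm_eq_abs, sq_abs]
    ring
  refine abs_le_of_sq_le_sq' ?_ (norm_nonneg _) |>.2
  rw [e, e]
  have hvb := abs_le.1 hv
  have : (max (-b) (min b s) - s) ^ 2 ≤ (v - s) ^ 2 := by
    rcases le_total b s with h | h
    · rw [min_eq_left h, max_eq_right (by linarith)]
      nlinarith
    · rw [min_eq_right h]
      rcases le_total s (-b) with h' | h'
      · rw [max_eq_left h']; nlinarith
      · rw [max_eq_right h', sub_self]; nlinarith [sq_nonneg (v - s)]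
  gcongr

theorem abs_clamp_le {b : ℝ} (hb : 0 ≤ b) (s : ℝ) : |max (-b) (min b s)| ≤ b :=
  abs_le.2 ⟨le_max_left _ _, max_le (by linarith) (min_le_left _ _)⟩

theorem continuous_lap {d : ℕ} {u : Ed d → ℂ} (hu : ContDiff ℝ 2 u) : Continuous (lap u) := by
  unfold lap
  refine continuous_finsetSum _ fun i _ => ?_
  exact ((contDiff_pd hu i).continuous_fderiv one_ne_zero).clm_apply continuous_const

theorem usq_mul_ofReal {d : ℕ} (u : Ed d → ℂ) (x : Ed d) {W : ℝ} (hW : 0 ≤ W) :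
    usq u x * ENNReal.ofReal W = ENNReal.ofReal (W * ‖u x‖ ^ 2) := by
  rw [ENNReal.ofReal_mul hW, ENNReal.ofReal_pow (norm_nonneg _), mul_comm, usq,
    ofReal_norm, enorm_eq_nnnorm]

theorem gradSq_mul_ofReal {d : ℕ} (u : Ed d → ℂ) (x : Ed d) {W : ℝ} (hW : 0 ≤ W) :
    gradSq u x * ENNReal.ofReal W = ENNReal.ofReal (W * nSq u x) := by
  rw [ENNReal.ofReal_mul hW, mul_comm, gradSq, nSq, ENNReal.ofReal_sum_of_nonneg
    fun i _ => sq_nonneg _]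
  congr 1
  refine Finset.sum_congr rfl fun i _ => ?_
  rw [ENNReal.ofReal_pow (norm_nonneg _), ofReal_norm, enorm_eq_nnnorm]

theorem rpow_one_add_norm {d : ℕ} (x : Ed d) (s : ℝ) :
    (1 + ‖x‖) ^ (2 * s) = ((1 + ‖x‖) ^ 2) ^ s := by
  rw [Real.rpow_mul (by positivity), Real.rpow_two]

theorem weight_le_wt {d : ℕ} {α : ℝ} (hα : 0 < α) (x : Ed d) :
    (1 + ‖x‖) ^ (-(1 + α)) ≤ wt ((1 + α) / 2) 1 x := by
  rw [show -(1 + α) = 2 * (-((1 + α) / 2)) by ring, rpow_one_add_norm, wt]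
  exact Real.rpow_le_rpow_of_nonpos (by positivity) (by nlinarith [norm_nonneg x]) (by linarith)

theorem wt_le_weight {d : ℕ} {α : ℝ} (hα : 0 < α) (x : Ed d) :
    wt ((1 + α) / 2) 1 x ≤ 2 ^ ((1 + α) / 2) * (1 + ‖x‖) ^ (-(1 + α)) := by
  rw [show -(1 + α) = 2 * (-((1 + α) / 2)) by ring, rpow_one_add_norm, wt,
    show (2 : ℝ) ^ ((1 + α) / 2) = (1 / 2) ^ (-((1 + α) / 2)) by
      rw [one_div, Real.inv_rpow (by norm_num), Real.rpow_neg (by norm_num), inv_inv],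
    ← Real.mul_rpow (by norm_num) (by positivity)]
  exact Real.rpow_le_rpow_of_nonpos (by positivity) (by nlinarith [sq_nonneg (1 - ‖x‖)])
    (by linarith)

theorem wt_neg_le_weight {d : ℕ} {α : ℝ} (hα : 0 < α) (x : Ed d) :
    wt (-((1 + α) / 2)) 1 x ≤ (1 + ‖x‖) ^ (1 + α) := by
  rw [show (1 + α) = 2 * ((1 + α) / 2) by ring, rpow_one_add_norm, wt, neg_neg,
    show 2 * ((1 + α) / 2) / 2 = (1 + α) / 2 by ring]
  exact Real.rpow_le_rpow (by positivity) (by nlinarith [norm_nonneg x]) (by linarith)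

/-- Passing from finiteness of the `(1+|x|)^{-1-α}`-weighted integral to integrability against
the equivalent smooth weight. -/
theorem integrable_wt_of_lintegral {d : ℕ} {α : ℝ} (hα : 0 < α) {S : Ed d → ℝ}
    (hSc : Continuous S) (hS0 : ∀ x, 0 ≤ S x)
    (h : ∫⁻ x, ENNReal.ofReal ((1 + ‖x‖) ^ (-(1 + α)) * S x) < ⊤) :
    Integrable fun x => wt ((1 + α) / 2) 1 x * S x := by
  refine ⟨((contDiff_wt (d := d) _ 1).continuous.mul hSc).aestronglyMeasurable, ?_⟩
  rw [hasFiniteIntegral_iff_ofReal (Filter.Eventually.of_forall fun x =>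
    mul_nonneg (wt_pos _ _ _).le (hS0 x))]
  calc _ ≤ ∫⁻ x, ENNReal.ofReal (2 ^ ((1 + α) / 2)) *
        ENNReal.ofReal ((1 + ‖x‖) ^ (-(1 + α)) * S x) := by
        refine lintegral_mono fun x => ?_
        rw [← ENNReal.ofReal_mul (by positivity), ← mul_assoc]
        exact ENNReal.ofReal_le_ofReal (mul_le_mul_of_nonneg_right (wt_le_weight hα x) (hS0 x))
    _ = ENNReal.ofReal (2 ^ ((1 + α) / 2)) *
        ∫⁻ x, ENNReal.ofReal ((1 + ‖x‖) ^ (-(1 + α)) * S x) :=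
        lintegral_const_mul' _ _ ENNReal.ofReal_ne_top
    _ < ⊤ := ENNReal.mul_lt_top ENNReal.ofReal_lt_top h

theorem lintegral_weight_le {d : ℕ} {α I : ℝ} (hα : 0 < α) {S : Ed d → ℝ} (hS0 : ∀ x, 0 ≤ S x)
    (hS : Integrable fun x => wt ((1 + α) / 2) 1 x * S x)
    (hI : ∫ x, wt ((1 + α) / 2) 1 x * S x ≤ I) :
    ∫⁻ x, ENNReal.ofReal ((1 + ‖x‖) ^ (-(1 + α)) * S x) ≤ ENNReal.ofReal I := by
  refine le_trans ?_ (ENNReal.ofReal_le_ofReal hI)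
  rw [ofReal_integral_eq_lintegral_ofReal hS (Filter.Eventually.of_forall fun x =>
    mul_nonneg (wt_pos _ _ _).le (hS0 x))]
  exact lintegral_mono fun x => ENNReal.ofReal_le_ofReal
    (mul_le_mul_of_nonneg_right (weight_le_wt hα x) (hS0 x))

/-- Taking square roots in the two quadratic estimates. -/
theorem sqrt_add_le {A B F : ℝ≥0∞} {C : ℝ} (hC : 0 ≤ C) (hA : A ≤ ENNReal.ofReal C * F)
    (hB : B ≤ ENNReal.ofReal C * F) :
    A ^ (1 / 2 : ℝ) + B ^ (1 / 2 : ℝ) ≤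
      ENNReal.ofReal (2 * C ^ (1 / 2 : ℝ) + 1) * F ^ (1 / 2 : ℝ) := by
  have h : ∀ X : ℝ≥0∞, X ≤ ENNReal.ofReal C * F →
      X ^ (1 / 2 : ℝ) ≤ ENNReal.ofReal (C ^ (1 / 2 : ℝ)) * F ^ (1 / 2 : ℝ) := by
    intro X hX
    rw [← ENNReal.ofReal_rpow_of_nonneg hC (by norm_num),
      ← ENNReal.mul_rpow_of_nonneg _ _ (by norm_num)]
    exact ENNReal.rpow_le_rpow hX (by norm_num)
  calc _ ≤ ENNReal.ofReal (C ^ (1 / 2 : ℝ)) * F ^ (1 / 2 : ℝ) +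
        ENNReal.ofReal (C ^ (1 / 2 : ℝ)) * F ^ (1 / 2 : ℝ) := add_le_add (h A hA) (h B hB)
    _ = ENNReal.ofReal (2 * C ^ (1 / 2 : ℝ)) * F ^ (1 / 2 : ℝ) := by
        rw [← add_mul, ← ENNReal.ofReal_add (by positivity) (by positivity), ← two_mul]
    _ ≤ _ := by gcongr; linarith

/-! ### The resolvent estimate -/

/-- uniform weighted resolvent estimate on a compact spectral
window `τ₀ < τ < τ₁`, via the Ikebe–Saito compactness argument. -/
theorem stmt_9 (d : ℕ) (hd : 2 ≤ d) (τ₀ τ₁ α a γ : ℝ)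
    (hτ₀ : 0 < τ₀) (hτ₀₁ : τ₀ < τ₁) (hα : 0 < α) (ha : 0 < a) (hγ : 0 < γ) :
    ∃ C : ℝ, 0 < C ∧
      ∀ (V₁ V₂ : Ed d → ℝ), ContDiff ℝ 1 V₁ →
      (∀ x : Ed d, |V₁ x| ≤ a * (1 + ‖x‖) ^ (-γ)) →
      (∀ x : Ed d, |V₂ x| ≤ a * (1 + ‖x‖) ^ (-γ - 1)) →
      (∀ x : Ed d, radialDeriv V₁ x ≤ a * (1 + ‖x‖) ^ (-γ - 1)) →
      ∀ (τ ε : ℝ), τ₀ < τ → τ < τ₁ → 0 < ε → ε < 1 →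
      ∀ (σ : ℝ), σ = 1 ∨ σ = -1 →
      ∀ (u f : Ed d → ℂ), ContDiff ℝ 2 u →
      (∫⁻ x, usq u x * ENNReal.ofReal ((1 + ‖x‖) ^ (-(1 + α)))) < ⊤ →
      (∫⁻ x, gradSq u x * ENNReal.ofReal ((1 + ‖x‖) ^ (-(1 + α)))) < ⊤ →
      (∫⁻ x, usq f x * ENNReal.ofReal ((1 + ‖x‖) ^ (1 + α))) < ⊤ →
      (∀ x, -lap u x + ((V₁ x : ℂ) + (V₂ x : ℂ)) * u x
        + (σ : ℂ) * ((ε : ℂ) * Complex.I) * u x - (τ : ℂ) * u x = f x) →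
      (∫⁻ x, usq u x * ENNReal.ofReal ((1 + ‖x‖) ^ (-(1 + α)))) ^ (1/2 : ℝ)
        + (∫⁻ x, gradSq u x * ENNReal.ofReal ((1 + ‖x‖) ^ (-(1 + α)))) ^ (1/2 : ℝ)
      ≤ ENNReal.ofReal C *
          (∫⁻ x, usq f x * ENNReal.ofReal ((1 + ‖x‖) ^ (1 + α))) ^ (1/2 : ℝ) := by
  obtain ⟨C, hC0, hC⟩ := measurable_estimate hτ₀ hτ₀₁ hα ha hγ
  refine ⟨2 * C ^ (1 / 2 : ℝ) + 1, by positivity, ?_⟩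
  intro V₁ V₂ hV₁ hV₁a hV₂a hdV τ ε hτ hτ' hε hε1 σ hσ u f hu hSfin hNfin hFfin heq
  have hσ1 : |σ| = 1 := by rcases hσ with rfl | rfl <;> simp
  -- `V₂` and `f` need not be measurable: they are replaced by measurable `V₂'` and `f'` solving
  -- the same equation with the same bound on `V₂'` and with `|f'| ≤ |f|` pointwise.
  set g : Ed d → ℂ := fun x => (V₁ x - τ) • u x + (σ * ε) • (Complex.I * u x) - lap u x with hg
  set V₂' : Ed d → ℝ := fun x => max (-(a * (1 + ‖x‖) ^ (-γ - 1)))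
    (min (a * (1 + ‖x‖) ^ (-γ - 1)) (-(inner ℝ (g x) (u x)) / ‖u x‖ ^ 2)) with hV₂'
  set f' : Ed d → ℂ := fun x => g x + V₂' x • u x with hf'
  have huc := hu.continuous
  have hgc : Continuous g := by
    have h1 := continuous_lap hu
    have h2 := hV₁.continuous
    fun_prop
  have hbm : Measurable fun x : Ed d => a * (1 + ‖x‖) ^ (-γ - 1) :=
    ((measurable_const.add measurable_norm).pow_const _).const_mul _
  have hV₂m : Measurable V₂' :=
    hbm.neg.max (hbm.min ((hgc.inner huc).measurable.neg.div (huc.norm.pow 2).measurable))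
  have hf'm : Measurable f' := hgc.measurable.add (hV₂m.smul huc.measurable)
  have hfg : ∀ x, f x = g x + V₂ x • u x := by
    intro x
    rw [← heq x, hg]
    simp only [Complex.real_smul]
    push_cast
    ring
  have hf'f : ∀ x, ‖f' x‖ ≤ ‖f x‖ := by
    intro x
    rw [hfg x]
    exact norm_add_clamp_le (g x) (u x) (hV₂a x)
  have hV₂'a : ∀ x, |V₂' x| ≤ a * (1 + ‖x‖) ^ (-γ - 1) := fun x =>
    abs_clamp_le (by positivity) _
  have heq' : ∀ x, lap u x =
      (V₁ x + V₂' x - τ) • u x + (σ * ε) • (Complex.I * u x) - f' x := by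
    intro x
    simp only [hf', hg, add_smul, sub_smul]
    ring
  have hw : ∀ (x : Ed d) (s : ℝ), 0 ≤ (1 + ‖x‖) ^ s := fun x s => by positivity
  simp only [usq_mul_ofReal _ _ (hw _ _), gradSq_mul_ofReal _ _ (hw _ _)] at hSfin hNfin hFfin ⊢
  have hS0 : ∀ x, 0 ≤ ‖u x‖ ^ 2 := fun x => sq_nonneg _
  have hN0 : ∀ x, 0 ≤ nSq u x := fun x => nSq_nonneg u x
  have hS := integrable_wt_of_lintegral hα (huc.norm.pow 2) hS0 hSfin
  have hN := integrable_wt_of_lintegral hα (continuous_nSq hu) hN0 hNfin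
  have hFle : ∫⁻ x, ENNReal.ofReal (wt (-((1 + α) / 2)) 1 x * ‖f' x‖ ^ 2) ≤
      ∫⁻ x, ENNReal.ofReal ((1 + ‖x‖) ^ (1 + α) * ‖f x‖ ^ 2) :=
    lintegral_mono fun x => ENNReal.ofReal_le_ofReal
      (mul_le_mul (wt_neg_le_weight hα x) (by gcongr; exact hf'f x) (sq_nonneg _) (hw _ _))
  have hF0 : ∀ x, 0 ≤ wt (-((1 + α) / 2)) 1 x * ‖f' x‖ ^ 2 := fun x =>
    mul_nonneg (wt_pos _ _ _).le (sq_nonneg _)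
  have hF : Integrable fun x => wt (-((1 + α) / 2)) 1 x * ‖f' x‖ ^ 2 := by
    refine ⟨((contDiff_wt (d := d) _ 1).continuous.measurable.mul
      (hf'm.norm.pow_const 2)).aestronglyMeasurable, ?_⟩
    rw [hasFiniteIntegral_iff_ofReal (Filter.Eventually.of_forall hF0)]
    exact hFle.trans_lt hFfin
  obtain ⟨e1, e2⟩ := hC d hd V₁ V₂' hV₁ hV₁a hV₂'a hdV τ ε hτ hτ' hε hε1 σ hσ1 u f' hu heq'
    hf'm.aestronglyMeasurable hS hN hF
  have hI : ENNReal.ofReal (C * ∫ x, wt (-((1 + α) / 2)) 1 x * ‖f' x‖ ^ 2) ≤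
      ENNReal.ofReal C * ∫⁻ x, ENNReal.ofReal ((1 + ‖x‖) ^ (1 + α) * ‖f x‖ ^ 2) := by
    rw [ENNReal.ofReal_mul hC0, ofReal_integral_eq_lintegral_ofReal hF
      (Filter.Eventually.of_forall hF0)]
    gcongr
  exact sqrt_add_le hC0 ((lintegral_weight_le hα hS0 hS e1).trans hI)
    ((lintegral_weight_le hα hN0 hN e2).trans hI)
end
end

section
/- Let α, ε, κ, R be positive constants and let h : (0,∞) → [0,∞) be a continuous nonnegative function such that α + ε/6 + ∫₀^∞ t·h(t) dt < κ < 1/2. Then there exists a positive absolute constant C and a function Φ : (0,∞) → ℝ, three times continuously differentiable with Φ''' locally absolutely continuous, such that: (1) Φ⁗(r) + (4/r)Φ'''(r) = −(ε/R³)·χ_{(0,R)}(r) − h(r)/r for almost every r > 0 (i.e. the radial function x ↦ Φ(|x|) on ℝ³ satisfies Δ²Φ(x) = −(ε/R³)χ_{(0,R)}(|x|) − h(|x|)/|x| a.e.); (2) Φ'(r) ≥ 0 and Φ''(r) ≥ 0 for all r > 0; (3) Φ'(r)/r ≥ Cε/R and Φ''(r) ≥ Cε/R for all r ∈ (0,R);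 and (4) α ≤ Φ'(r) < κ < 1/2 for all r > 0. -/
noncomputable section
open MeasureTheory Set

/-!
Write `g` for minus the right-hand side of the equation and `q r = r² g r`, a nonnegative function
with `∫ q = ε / 3 + ∫ t h(t) dt`. The equation reads `(r⁴ Φ''')' = -r⁴ g`, and it is solved by
`Φ''' = -A / r⁴` with `A r = ∫₀^r s² q`. Integrating from infinity, resp. from zero, gives
`Φ'' = (A / r³ + B) / 3` and `Φ' = α + D / 2 - A / (6 r²) + r B / 3`, where `B r = ∫_r^∞ q / s` and
`D r = ∫₀^r q`. These formulas are taken as definitions; since `q` may jump at `R`, the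
derivatives are computed away from `R` and extended to `R` by continuity
(`momentF2_hasDerivAt`, `momentF1_hasDerivAt`).

The inequalities come from comparing moments of `q`: `A ≤ r² D` gives `Φ' - α ≥ r Φ''`,
`r B ≤ ∫_r^∞ q` gives `Φ' ≤ α + (∫ q) / 2`, and `Φ'' r ≥ A R / (3 R³)` for `r ≤ R` gives the
lower bound with the constant `C = 1 / 15`.
-/

/-- The moment `A r = ∫₀^r s² q(s) ds`. -/
def momentA (q : ℝ → ℝ) (r : ℝ) : ℝ := ∫ s in (0:ℝ)..r, s ^ 2 * q s

/-- The tail moment `B r = ∫_r^∞ q(s) / s ds`. -/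
def momentB (q : ℝ → ℝ) (r : ℝ) : ℝ := ∫ s in Ioi r, s⁻¹ * q s

/-- The mass `D r = ∫₀^r q(s) ds`. -/
def momentD (q : ℝ → ℝ) (r : ℝ) : ℝ := ∫ s in (0:ℝ)..r, q s

/-- The third derivative of the multiplier. -/
def momentF3 (q : ℝ → ℝ) (r : ℝ) : ℝ := -(momentA q r / r ^ 4)

/-- The second derivative of the multiplier. -/
def momentF2 (q : ℝ → ℝ) (r : ℝ) : ℝ := (momentA q r / r ^ 3 + momentB q r) / 3

/-- The first derivative of the multiplier. -/
def momentF1 (α : ℝ) (q : ℝ → ℝ) (r : ℝ) : ℝ :=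
  α + momentD q r / 2 - momentA q r / (6 * r ^ 2) + r * momentB q r / 3

/-! ### Regularity of the moments -/

lemma intervalIntegrable_sq_mul {q : ℝ → ℝ} (hq : Integrable q) (a b : ℝ) :
    IntervalIntegrable (fun s => s ^ 2 * q s) volume a b :=
  (hq.intervalIntegrable).continuousOn_mul (by fun_prop)

lemma integrableOn_inv_mul {q : ℝ → ℝ} (hq : Integrable q) {r : ℝ} (hr : 0 < r) :
    IntegrableOn (fun s => s⁻¹ * q s) (Ioi r) := by
  refine Integrable.mono' (g := fun s => r⁻¹ * ‖q s‖) (hq.norm.const_mul _).integrableOn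
    ((measurable_inv.aestronglyMeasurable.mul hq.aestronglyMeasurable).restrict) ?_
  filter_upwards [ae_restrict_mem measurableSet_Ioi] with s hs
  have hs' : r < s := hs
  rw [norm_mul, norm_inv, Real.norm_of_nonneg (hr.trans hs').le]
  gcongr

lemma intervalIntegrable_inv_mul {q : ℝ → ℝ} (hq : Integrable q) {a b : ℝ} (ha : 0 < a)
    (hb : 0 < b) : IntervalIntegrable (fun s => s⁻¹ * q s) volume a b := by
  rw [intervalIntegrable_iff]
  exact (integrableOn_inv_mul hq (lt_min ha hb)).mono_set fun x hx => hx.1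

lemma momentB_eq {q : ℝ → ℝ} (hq : Integrable q) {a b : ℝ} (ha : 0 < a) (hb : 0 < b) :
    momentB q b = momentB q a - ∫ s in a..b, s⁻¹ * q s := by
  have := intervalIntegral.integral_Ioi_sub_Ioi' (integrableOn_inv_mul hq ha)
    (integrableOn_inv_mul hq hb)
  unfold momentB
  linarith

lemma momentA_continuous {q : ℝ → ℝ} (hq : Integrable q) : Continuous (momentA q) :=
  intervalIntegral.continuous_primitive (fun a b => intervalIntegrable_sq_mul hq a b) 0

lemma momentD_continuous {q : ℝ → ℝ} (hq : Integrable q) : Continuous (momentD q) :=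
  intervalIntegral.continuous_primitive (fun _ _ => hq.intervalIntegrable) 0

lemma momentB_continuousAt {q : ℝ → ℝ} (hq : Integrable q) {r : ℝ} (hr : 0 < r) :
    ContinuousAt (momentB q) r := by
  have h2 : (0:ℝ) < r / 2 := by positivity
  have hc : ContinuousOn (fun x => ∫ s in (r/2)..x, s⁻¹ * q s) (uIcc (r/2) (2*r)) :=
    intervalIntegral.continuousOn_primitive_interval'
      (intervalIntegrable_inv_mul hq h2 (by positivity)) left_mem_uIcc
  have hc' : ContinuousAt (fun x => ∫ s in (r/2)..x, s⁻¹ * q s) r := by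
    refine hc.continuousAt ?_
    rw [uIcc_of_le (by linarith)]
    exact Icc_mem_nhds (by linarith) (by linarith)
  refine (continuousAt_const.sub hc' : ContinuousAt
    (fun x => momentB q (r/2) - ∫ s in (r/2)..x, s⁻¹ * q s) r).congr ?_
  filter_upwards [Ioi_mem_nhds hr] with x hx
  exact (momentB_eq hq h2 hx).symm

lemma momentA_hasDerivAt {q : ℝ → ℝ} (hq : Integrable q) {r : ℝ} (hc : ContinuousAt q r) :
    HasDerivAt (momentA q) (r ^ 2 * q r) r :=
  intervalIntegral.integral_hasDerivAt_right (intervalIntegrable_sq_mul hq 0 r)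
    (AEStronglyMeasurable.stronglyMeasurableAtFilter
      ((continuous_pow 2).aestronglyMeasurable.mul hq.aestronglyMeasurable))
    ((continuous_pow 2).continuousAt.mul hc)

lemma momentD_hasDerivAt {q : ℝ → ℝ} (hq : Integrable q) {r : ℝ} (hc : ContinuousAt q r) :
    HasDerivAt (momentD q) (q r) r :=
  intervalIntegral.integral_hasDerivAt_right hq.intervalIntegrable
    (AEStronglyMeasurable.stronglyMeasurableAtFilter hq.aestronglyMeasurable) hc

lemma momentB_hasDerivAt {q : ℝ → ℝ} (hq : Integrable q) {r : ℝ} (hr : 0 < r)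
    (hc : ContinuousAt q r) : HasDerivAt (momentB q) (-(r⁻¹ * q r)) r := by
  have h1 : HasDerivAt (fun x => ∫ s in r..x, s⁻¹ * q s) (r⁻¹ * q r) r :=
    intervalIntegral.integral_hasDerivAt_right (intervalIntegrable_inv_mul hq hr hr)
      (AEStronglyMeasurable.stronglyMeasurableAtFilter
        (measurable_inv.aestronglyMeasurable.mul hq.aestronglyMeasurable))
      ((continuousAt_inv₀ hr.ne').mul hc)
  refine (h1.const_sub (momentB q r)).congr_of_eventuallyEq ?_
  filter_upwards [Ioi_mem_nhds hr] with x hx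
  exact momentB_eq hq hr hx

/-! ### The derivative formulas -/

lemma momentF3_continuousAt {q : ℝ → ℝ} (hq : Integrable q) {r : ℝ} (hr : 0 < r) :
    ContinuousAt (momentF3 q) r :=
  ((momentA_continuous hq).continuousAt.div (by fun_prop) (by positivity)).neg

lemma momentF2_continuousAt {q : ℝ → ℝ} (hq : Integrable q) {r : ℝ} (hr : 0 < r) :
    ContinuousAt (momentF2 q) r :=
  (((momentA_continuous hq).continuousAt.div (by fun_prop) (by positivity)).add
    (momentB_continuousAt hq hr)).div_const 3

lemma momentF1_continuousAt (α : ℝ) {q : ℝ → ℝ} (hq : Integrable q) {r : ℝ} (hr : 0 < r) :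
    ContinuousAt (momentF1 α q) r :=
  ((continuousAt_const.add ((momentD_continuous hq).continuousAt.div_const 2)).sub
    ((momentA_continuous hq).continuousAt.div (by fun_prop) (by positivity))).add
    ((continuousAt_id.mul (momentB_continuousAt hq hr)).div_const 3)

lemma momentF3_hasDerivAt {q : ℝ → ℝ} (hq : Integrable q) {r : ℝ} (hr : 0 < r)
    (hc : ContinuousAt q r) :
    HasDerivAt (momentF3 q) (4 * momentA q r / r ^ 5 - q r / r ^ 2) r := by
  have h := ((momentA_hasDerivAt hq hc).div (hasDerivAt_pow 4 r) (by positivity)).neg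
  refine h.congr_deriv ?_
  field_simp
  push_cast
  ring

/-- Extension of a derivative formula to the positive point `R` by continuity. -/
lemma hasDerivAt_of_off_point {f f' : ℝ → ℝ} {R : ℝ}
    (hf : ∀ r, 0 < r → ContinuousAt f r) (hf' : ∀ r, 0 < r → ContinuousAt f' r)
    (hd : ∀ r, 0 < r → r ≠ R → HasDerivAt f (f' r) r) {r : ℝ} (hr : 0 < r) :
    HasDerivAt f (f' r) r := by
  by_cases h : r = R
  · subst h
    -- each one-sided derivative is the limit of the derivatives from that side
    have hr1 : HasDerivWithinAt f (f' r) (Ici r) r := by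
      refine hasDerivWithinAt_Ici_of_tendsto_deriv (s := Ioi r) ?_ ?_ self_mem_nhdsWithin ?_
      · exact fun x hx => (hd x (hr.trans hx) (ne_of_gt hx)).differentiableAt.differentiableWithinAt
      · exact (hf r hr).continuousWithinAt
      · refine ((hf' r hr).continuousWithinAt (s := Ioi r)).tendsto.congr' ?_
        filter_upwards [self_mem_nhdsWithin] with x hx
        exact (hd x (hr.trans hx) (ne_of_gt hx)).deriv.symm
    have hr2 : HasDerivWithinAt f (f' r) (Iic r) r := by
      refine hasDerivWithinAt_Iic_of_tendsto_deriv (s := Ioo 0 r) ?_ ?_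
        (Ioo_mem_nhdsLT hr) ?_
      · exact fun x hx => (hd x hx.1 (ne_of_lt hx.2)).differentiableAt.differentiableWithinAt
      · exact (hf r hr).continuousWithinAt
      · refine ((hf' r hr).continuousWithinAt (s := Iio r)).tendsto.congr' ?_
        filter_upwards [Ioo_mem_nhdsLT hr] with x hx
        exact (hd x hx.1 (ne_of_lt hx.2)).deriv.symm
    simpa using hr2.union hr1
  · exact hd r hr h

/-- At a jump of `q` the one-sided derivatives of `A / r³` and `B` differ, but the jumps cancel. -/
lemma momentF2_hasDerivAt {q : ℝ → ℝ} (hq : Integrable q) {R : ℝ}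
    (hc : ∀ r, 0 < r → r ≠ R → ContinuousAt q r) {r : ℝ} (hr : 0 < r) :
    HasDerivAt (momentF2 q) (momentF3 q r) r := by
  refine hasDerivAt_of_off_point (R := R) (fun _ => momentF2_continuousAt hq)
    (fun _ => momentF3_continuousAt hq) (fun x hx hxR => ?_) hr
  have h := (((momentA_hasDerivAt hq (hc x hx hxR)).div (hasDerivAt_pow 3 x) (by positivity)).add
    (momentB_hasDerivAt hq hx (hc x hx hxR))).div_const 3
  refine h.congr_deriv ?_
  unfold momentF3
  field_simp
  push_cast
  ring

lemma momentF1_hasDerivAt (α : ℝ) {q : ℝ → ℝ} (hq : Integrable q) {R : ℝ}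
    (hc : ∀ r, 0 < r → r ≠ R → ContinuousAt q r) {r : ℝ} (hr : 0 < r) :
    HasDerivAt (momentF1 α q) (momentF2 q r) r := by
  refine hasDerivAt_of_off_point (R := R) (fun _ => momentF1_continuousAt α hq)
    (fun _ => momentF2_continuousAt hq) (fun x hx hxR => ?_) hr
  have hcx := hc x hx hxR
  have h := ((((momentD_hasDerivAt hq hcx).div_const 2).const_add α).sub
    ((momentA_hasDerivAt hq hcx).div ((hasDerivAt_pow 2 x).const_mul 6) (by positivity))).add
    (((hasDerivAt_id x).mul (momentB_hasDerivAt hq hx hcx)).div_const 3)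
  refine h.congr_deriv ?_
  unfold momentF2
  simp only [id]
  field_simp
  push_cast
  ring

/-! ### Inequalities between the moments -/

lemma momentA_nonneg {q : ℝ → ℝ} (h0 : ∀ s, 0 ≤ q s) {r : ℝ} (hr : 0 < r) :
    0 ≤ momentA q r :=
  intervalIntegral.integral_nonneg hr.le fun s _ => mul_nonneg (sq_nonneg s) (h0 s)

lemma momentB_nonneg {q : ℝ → ℝ} (h0 : ∀ s, 0 ≤ q s) {r : ℝ} (hr : 0 < r) :
    0 ≤ momentB q r :=
  setIntegral_nonneg measurableSet_Ioi fun s hs =>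
    mul_nonneg (inv_nonneg.2 (hr.trans hs).le) (h0 s)

lemma momentA_le {q : ℝ → ℝ} (hq : Integrable q) (h0 : ∀ s, 0 ≤ q s) {r : ℝ} (hr : 0 < r) :
    momentA q r ≤ r ^ 2 * momentD q r := by
  unfold momentA momentD
  rw [← intervalIntegral.integral_const_mul]
  refine intervalIntegral.integral_mono_on hr.le (intervalIntegrable_sq_mul hq 0 r)
    (hq.intervalIntegrable.const_mul _) fun s hs => ?_
  have := h0 s
  have h1 := hs.1
  have h2 := hs.2
  gcongr

lemma mul_momentB_le {q : ℝ → ℝ} (hq : Integrable q) (h0 : ∀ s, 0 ≤ q s) {r : ℝ} (hr : 0 < r) :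
    r * momentB q r ≤ ∫ s in Ioi r, q s := by
  unfold momentB
  rw [← integral_const_mul]
  refine setIntegral_mono_on ((integrableOn_inv_mul hq hr).const_mul r) hq.integrableOn
    measurableSet_Ioi fun s hs => ?_
  have hs' : r < s := hs
  have h1 : r * s⁻¹ ≤ 1 := by
    rw [← div_eq_mul_inv, div_le_one (hr.trans hs')]
    exact hs'.le
  rw [← mul_assoc]
  exact mul_le_of_le_one_left (h0 s) h1

lemma momentB_ge {q : ℝ → ℝ} (hq : Integrable q) (h0 : ∀ s, 0 ≤ q s) {r R : ℝ} (hr : 0 < r)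
    (hrR : r ≤ R) : (momentA q R - momentA q r) / R ^ 3 ≤ momentB q r := by
  have hR : 0 < R := hr.trans_le hrR
  have h1 : momentA q R - momentA q r = ∫ s in r..R, s ^ 2 * q s :=
    intervalIntegral.integral_interval_sub_left (intervalIntegrable_sq_mul hq 0 R)
      (intervalIntegrable_sq_mul hq 0 r)
  have h2 := momentB_eq hq hr hR
  have h3 := momentB_nonneg h0 hR
  have h4 : (∫ s in r..R, s ^ 2 * q s) / R ^ 3 ≤ ∫ s in r..R, s⁻¹ * q s := by
    rw [← intervalIntegral.integral_div]
    refine intervalIntegral.integral_mono_on hrR ((intervalIntegrable_sq_mul hq r R).div_const _)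
      (intervalIntegrable_inv_mul hq hr hR) fun s hs => ?_
    have hs0 : 0 < s := hr.trans_le hs.1
    have : s ^ 2 / R ^ 3 ≤ s⁻¹ := by
      rw [div_le_iff₀ (by positivity), inv_mul_eq_div, le_div_iff₀ hs0]
      calc s ^ 2 * s = s ^ 3 := by ring
        _ ≤ R ^ 3 := pow_le_pow_left₀ hs0.le hs.2 3
    calc s ^ 2 * q s / R ^ 3 = s ^ 2 / R ^ 3 * q s := by ring
      _ ≤ s⁻¹ * q s := mul_le_mul_of_nonneg_right this (h0 s)
  rw [h1]
  linarith

lemma momentF2_nonneg {q : ℝ → ℝ} (h0 : ∀ s, 0 ≤ q s) {r : ℝ} (hr : 0 < r) :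
    0 ≤ momentF2 q r := by
  have := momentA_nonneg h0 hr
  have := momentB_nonneg h0 hr
  unfold momentF2
  positivity

lemma momentF2_ge {q : ℝ → ℝ} (hq : Integrable q) (h0 : ∀ s, 0 ≤ q s) {r R : ℝ} (hr : 0 < r)
    (hrR : r ≤ R) : momentA q R / R ^ 3 / 3 ≤ momentF2 q r := by
  have h1 := momentB_ge hq h0 hr hrR
  have h2 : momentA q r / R ^ 3 ≤ momentA q r / r ^ 3 :=
    div_le_div_of_nonneg_left (momentA_nonneg h0 hr) (by positivity)
      (pow_le_pow_left₀ hr.le hrR 3)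
  rw [sub_div] at h1
  unfold momentF2
  linarith

lemma momentF1_ge (α : ℝ) {q : ℝ → ℝ} (hq : Integrable q) (h0 : ∀ s, 0 ≤ q s) {r : ℝ}
    (hr : 0 < r) : α + r * momentF2 q r ≤ momentF1 α q r := by
  have h1 : momentA q r / r ^ 2 ≤ momentD q r := by
    rw [div_le_iff₀ (by positivity), mul_comm]
    exact momentA_le hq h0 hr
  have h2 : r * momentF2 q r = momentA q r / r ^ 2 / 3 + r * momentB q r / 3 := by
    unfold momentF2
    field_simp
  have h3 : momentA q r / (6 * r ^ 2) = momentA q r / r ^ 2 / 6 := by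
    field_simp
  rw [h2]
  unfold momentF1
  rw [h3]
  linarith

lemma momentF1_le (α : ℝ) {q : ℝ → ℝ} (hq : Integrable q) (h0 : ∀ s, 0 ≤ q s) {r : ℝ}
    (hr : 0 < r) : momentF1 α q r ≤ α + (∫ s in Ioi 0, q s) / 2 := by
  have h1 := mul_momentB_le hq h0 hr
  have h2 : (∫ s in Ioi 0, q s) - ∫ s in Ioi r, q s = momentD q r :=
    intervalIntegral.integral_Ioi_sub_Ioi' hq.integrableOn hq.integrableOn
  have h3 : 0 ≤ momentA q r / (6 * r ^ 2) := div_nonneg (momentA_nonneg h0 hr) (by positivity)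
  have h4 := mul_nonneg hr.le (momentB_nonneg h0 hr)
  unfold momentF1
  linarith

/-! ### The density and the multiplier -/

/-- The density `q r = r² (ε / R³ χ_{(0,R)} + h / r)` on `(0, ∞)`, extended by zero. -/
def density (ε R : ℝ) (h : ℝ → ℝ) : ℝ → ℝ := fun r =>
  (Ioo (0:ℝ) R).indicator (fun s => ε / R ^ 3 * s ^ 2) r +
    (Ioi (0:ℝ)).indicator (fun t => t * h t) r

lemma density_integrable {ε R : ℝ} {h : ℝ → ℝ}
    (hi : IntegrableOn (fun t => t * h t) (Ioi 0)) : Integrable (density ε R h) := by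
  refine Integrable.add ?_ ((integrable_indicator_iff measurableSet_Ioi).2 hi)
  rw [integrable_indicator_iff measurableSet_Ioo]
  exact ((by fun_prop : Continuous fun s : ℝ => ε / R ^ 3 * s ^ 2).integrableOn_Icc
    (a := 0) (b := R)).mono_set Ioo_subset_Icc_self

lemma density_nonneg {ε R : ℝ} {h : ℝ → ℝ} (hε : 0 < ε) (hR : 0 < R)
    (h0 : ∀ t ∈ Ioi (0:ℝ), 0 ≤ h t) (r : ℝ) : 0 ≤ density ε R h r :=
  add_nonneg (indicator_nonneg (fun s _ => by positivity) r)
    (indicator_nonneg (fun t ht => mul_nonneg (le_of_lt ht) (h0 t ht)) r)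

lemma density_continuousAt {ε R : ℝ} {h : ℝ → ℝ} (hc : ContinuousOn h (Ioi 0)) (r : ℝ)
    (hr : 0 < r) (hrR : r ≠ R) : ContinuousAt (density ε R h) r := by
  refine ContinuousAt.add ?_ ?_
  · rcases lt_or_gt_of_ne hrR with h1 | h1
    · refine ContinuousAt.congr (f := fun s => ε / R ^ 3 * s ^ 2) (by fun_prop) ?_
      filter_upwards [Ioo_mem_nhds hr h1] with x hx
      rw [indicator_of_mem hx]
    · refine ContinuousAt.congr (f := fun s => (0:ℝ)) (by fun_prop) ?_
      filter_upwards [Ioi_mem_nhds h1] with x hx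
      rw [indicator_of_notMem (fun h' => absurd h'.2 (not_lt.2 (le_of_lt hx)))]
  · refine ContinuousAt.congr (f := fun t => t * h t)
      (continuousAt_id.mul (hc.continuousAt (Ioi_mem_nhds hr))) ?_
    filter_upwards [Ioi_mem_nhds hr] with x hx
    rw [indicator_of_mem hx]

lemma density_div_sq {ε R : ℝ} {h : ℝ → ℝ} {r : ℝ} (hr : 0 < r) :
    density ε R h r / r ^ 2 =
      ε / R ^ 3 * (Ioo (0:ℝ) R).indicator (fun _ => (1:ℝ)) r + h r / r := by
  unfold density
  rw [indicator_of_mem (mem_Ioi.2 hr)]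
  by_cases h1 : r ∈ Ioo (0:ℝ) R
  · rw [indicator_of_mem h1, indicator_of_mem h1]
    field_simp
  · rw [indicator_of_notMem h1, indicator_of_notMem h1]
    field_simp
    ring

lemma density_integral {ε R : ℝ} {h : ℝ → ℝ} (hR : 0 < R)
    (hi : IntegrableOn (fun t => t * h t) (Ioi 0)) :
    ∫ s in Ioi 0, density ε R h s = ε / 3 + ∫ t in Ioi (0:ℝ), t * h t := by
  have hi1 : Integrable ((Ioo (0:ℝ) R).indicator (fun s => ε / R ^ 3 * s ^ 2)) := by
    rw [integrable_indicator_iff measurableSet_Ioo]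
    exact ((by fun_prop : Continuous fun s : ℝ => ε / R ^ 3 * s ^ 2).integrableOn_Icc
      (a := 0) (b := R)).mono_set Ioo_subset_Icc_self
  have hi2 := (integrable_indicator_iff measurableSet_Ioi).2 hi
  have hsub : Ioo (0:ℝ) R ⊆ Ioi 0 := Ioo_subset_Ioi_self
  unfold density
  rw [integral_add hi1.integrableOn hi2.integrableOn, setIntegral_indicator measurableSet_Ioo,
    setIntegral_indicator measurableSet_Ioi, inter_self,
    inter_eq_self_of_subset_right hsub,
    ← integral_Ioc_eq_integral_Ioo, ← intervalIntegral.integral_of_le hR.le]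
  congr 1
  rw [intervalIntegral.integral_const_mul, integral_pow]
  field_simp
  norm_num

lemma momentA_density_ge {ε R : ℝ} {h : ℝ → ℝ} (hR : 0 < R)
    (h0 : ∀ t ∈ Ioi (0:ℝ), 0 ≤ h t) (hi : IntegrableOn (fun t => t * h t) (Ioi 0)) :
    ε * R ^ 2 / 5 ≤ momentA (density ε R h) R := by
  have h1 : ∫ s in (0:ℝ)..R, ε / R ^ 3 * s ^ 4 = ε * R ^ 2 / 5 := by
    rw [intervalIntegral.integral_const_mul, integral_pow]
    field_simp
    norm_num
  rw [← h1]
  refine intervalIntegral.integral_mono_on_of_le_Ioo hR.le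
    ((by fun_prop : Continuous fun s : ℝ => ε / R ^ 3 * s ^ 4).intervalIntegrable 0 R)
    (intervalIntegrable_sq_mul (density_integrable hi) 0 R) fun s hs => ?_
  unfold density
  rw [indicator_of_mem hs, indicator_of_mem (mem_Ioi.2 hs.1)]
  have := mul_nonneg (sq_nonneg s) (mul_nonneg hs.1.le (h0 s hs.1))
  calc ε / R ^ 3 * s ^ 4 = s ^ 2 * (ε / R ^ 3 * s ^ 2) := by ring
    _ ≤ s ^ 2 * (ε / R ^ 3 * s ^ 2 + s * h s) := by rw [mul_add]; linarith

/-- A primitive of a `Cⁿ` function on `(0, ∞)` is `Cⁿ⁺¹` there. -/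
lemma contDiffOn_succ_of_hasDerivAt {f f' : ℝ → ℝ} {n : ℕ}
    (hd : ∀ r, 0 < r → HasDerivAt f (f' r) r) (hf : ContDiffOn ℝ n f' (Ioi 0)) :
    ContDiffOn ℝ (n + 1 : ℕ) f (Ioi 0) := by
  push_cast
  refine (contDiffOn_succ_iff_deriv_of_isOpen isOpen_Ioi).2 ⟨?_, by simp, ?_⟩
  · exact fun x hx => (hd x hx).differentiableAt.differentiableWithinAt
  · exact hf.congr fun x hx => (hd x hx).deriv

/-- construction of the radial multiplier Φ (Lemma 6.1 of the
paper). The third derivative of Φ is locally absolutely continuous on (0,∞)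
with a.e. derivative Φ4, and the radial bilaplacian equation
`Φ⁗ + (4/r)Φ''' = -(ε/R³)χ_{(0,R)} - h(r)/r` holds almost everywhere. -/
theorem stmt_16 :
    ∃ C : ℝ, 0 < C ∧
      ∀ (α ε κ R : ℝ) (h : ℝ → ℝ),
      0 < α → 0 < ε → 0 < κ → 0 < R →
      ContinuousOn h (Ioi 0) → (∀ t ∈ Ioi (0:ℝ), 0 ≤ h t) →
      IntegrableOn (fun t => t * h t) (Ioi 0) →
      α + ε / 6 + (∫ t in Ioi (0:ℝ), t * h t) < κ → κ < 1/2 →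
      ∃ (Φ Φ4 : ℝ → ℝ),
        ContDiffOn ℝ 3 Φ (Ioi 0) ∧
        -- Φ''' is locally absolutely continuous on (0,∞) with derivative Φ4:
        (∀ x y : ℝ, 0 < x → x ≤ y →
          deriv (deriv (deriv Φ)) y - deriv (deriv (deriv Φ)) x = ∫ t in x..y, Φ4 t) ∧
        -- the equation Δ²Φ = -(ε/R³)χ_{(0,R)} - h(|x|)/|x| holds a.e. (radially):
        (∀ᵐ r : ℝ, 0 < r →
          Φ4 r + (4 / r) * deriv (deriv (deriv Φ)) r
            = -(ε / R ^ 3) * (Ioo (0:ℝ) R).indicator (fun _ => (1:ℝ)) r - h r / r) ∧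
        (∀ r > (0:ℝ), 0 ≤ deriv Φ r ∧ 0 ≤ deriv (deriv Φ) r) ∧
        (∀ r ∈ Ioo (0:ℝ) R, C * ε / R ≤ deriv Φ r / r ∧ C * ε / R ≤ deriv (deriv Φ) r) ∧
        (∀ r > (0:ℝ), α ≤ deriv Φ r ∧ deriv Φ r < κ) := by
  refine ⟨1 / 15, by norm_num, ?_⟩
  intro α ε κ R h hα hε _ hR hc h0 hi hlt _
  set q := density ε R h with hq_def
  have hq : Integrable q := density_integrable hi
  have hq0 : ∀ s, 0 ≤ q s := density_nonneg hε hR h0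
  have hqc : ∀ r, 0 < r → r ≠ R → ContinuousAt q r := density_continuousAt hc
  set Φ : ℝ → ℝ := fun r => ∫ t in (1:ℝ)..r, momentF1 α q t with hΦ
  have hcF1 : ContinuousOn (momentF1 α q) (Ioi 0) :=
    fun x hx => (momentF1_continuousAt α hq hx).continuousWithinAt
  have d1 : ∀ r, 0 < r → HasDerivAt Φ (momentF1 α q r) r := fun r hr => by
    refine intervalIntegral.integral_hasDerivAt_right ?_ ?_ (momentF1_continuousAt α hq hr)
    · refine (hcF1.mono fun x hx => ?_).intervalIntegrable
      exact (lt_min one_pos hr).trans_le hx.1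
    · exact hcF1.stronglyMeasurableAtFilter isOpen_Ioi r hr
  have d2 : ∀ r, 0 < r → HasDerivAt (momentF1 α q) (momentF2 q r) r :=
    fun r hr => momentF1_hasDerivAt α hq hqc hr
  have d3 : ∀ r, 0 < r → HasDerivAt (momentF2 q) (momentF3 q r) r :=
    fun r hr => momentF2_hasDerivAt hq hqc hr
  have e1 : ∀ r, 0 < r → deriv Φ r = momentF1 α q r := fun r hr => (d1 r hr).deriv
  have e2 : ∀ r, 0 < r → deriv (deriv Φ) r = momentF2 q r := fun r hr => by
    have : deriv Φ =ᶠ[nhds r] momentF1 α q := by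
      filter_upwards [Ioi_mem_nhds hr] with x hx using e1 x hx
    rw [this.deriv_eq, (d2 r hr).deriv]
  have e3 : ∀ r, 0 < r → deriv (deriv (deriv Φ)) r = momentF3 q r := fun r hr => by
    have : deriv (deriv Φ) =ᶠ[nhds r] momentF2 q := by
      filter_upwards [Ioi_mem_nhds hr] with x hx using e2 x hx
    rw [this.deriv_eq, (d3 r hr).deriv]
  have hF2 : ∀ r ∈ Ioo (0:ℝ) R, 1 / 15 * ε / R ≤ momentF2 q r := fun r hr => by
    refine le_trans ?_ (momentF2_ge hq hq0 hr.1 hr.2.le)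
    have := momentA_density_ge (ε := ε) hR h0 hi
    calc 1 / 15 * ε / R = ε * R ^ 2 / 5 / R ^ 3 / 3 := by field_simp; norm_num
      _ ≤ momentA q R / R ^ 3 / 3 := by gcongr
  have hF1α : ∀ r, 0 < r → α ≤ momentF1 α q r := fun r hr => by
    have := momentF1_ge α hq hq0 hr
    have := mul_nonneg hr.le (momentF2_nonneg hq0 hr)
    linarith
  refine ⟨Φ, fun r => 4 * momentA q r / r ^ 5 - q r / r ^ 2, ?_, ?_, ?_, ?_, ?_, ?_⟩
  · have c0 : ContDiffOn ℝ (0 : ℕ) (momentF3 q) (Ioi 0) := by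
      refine contDiffOn_zero.2 fun x hx => ?_
      exact (momentF3_continuousAt hq hx).continuousWithinAt
    exact contDiffOn_succ_of_hasDerivAt d1 (contDiffOn_succ_of_hasDerivAt d2
      (contDiffOn_succ_of_hasDerivAt d3 c0))
  · intro x y hx hxy
    have hpos : ∀ t ∈ uIcc x y, 0 < t := fun t ht => by
      rw [uIcc_of_le hxy] at ht
      exact hx.trans_le ht.1
    rw [e3 x hx, e3 y (hx.trans_le hxy)]
    symm
    refine MeasureTheory.integral_eq_of_hasDerivAt_off_countable (momentF3 q) _
      (countable_singleton R) ?_ ?_ ?_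
    · exact fun t ht => (momentF3_continuousAt hq (hpos t ht)).continuousWithinAt
    · intro t ht
      have ht0 : 0 < t := hpos t (Ioo_subset_Icc_self ht.1)
      exact momentF3_hasDerivAt hq ht0 (hqc t ht0 ht.2)
    · refine IntervalIntegrable.sub (ContinuousOn.intervalIntegrable ?_) ?_
      · refine ContinuousOn.div ((momentA_continuous hq).const_mul 4).continuousOn
          (by fun_prop) fun t ht => ?_
        have := hpos t ht
        positivity
      · simp only [div_eq_mul_inv]
        refine IntervalIntegrable.mul_continuousOn hq.intervalIntegrable ?_
        refine ContinuousOn.inv₀ (by fun_prop) fun t ht => ?_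
        have := hpos t ht
        positivity
  · refine Filter.Eventually.of_forall fun r hr => ?_
    have h1 : 4 / r * momentF3 q r = -(4 * momentA q r / r ^ 5) := by
      unfold momentF3
      field_simp
    have h2 : q r / r ^ 2 = _ := density_div_sq hr
    simp only [e3 r hr, h1, h2]
    ring
  · intro r hr
    rw [e1 r hr, e2 r hr]
    exact ⟨hα.le.trans (hF1α r hr), momentF2_nonneg hq0 hr⟩
  · intro r hr
    rw [e1 r hr.1, e2 r hr.1]
    refine ⟨(hF2 r hr).trans ?_, hF2 r hr⟩
    rw [le_div_iff₀ hr.1]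
    have := momentF1_ge α hq hq0 hr.1
    linarith
  · intro r hr
    rw [e1 r hr]
    refine ⟨hF1α r hr, ?_⟩
    have h1 := momentF1_le α hq hq0 hr
    have h2 : ∫ s in Ioi 0, q s = _ := density_integral hR hi
    have h3 : 0 ≤ ∫ t in Ioi (0:ℝ), t * h t :=
      setIntegral_nonneg measurableSet_Ioi fun t ht => mul_nonneg (le_of_lt ht) (h0 t ht)
    rw [h2] at h1
    linarith
end
end

section
/- Let d ≥ 1 and let f, g : ℝ^d → ℂ be measurable. Then there exists a constant C depending only on d such that ∫_{ℝ^d} |f(x)||g(x)| dx ≤ C·‖f‖_X·‖g‖_{X*}. -/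
/-!
Up to the null set `{0}` the space is the union of the dyadic shells `C_j`. On each shell,
Cauchy–Schwarz bounds `∫ |f||g|` by `(∫_{C_j} |f|²)^{1/2} (∫_{C_j} |g|²)^{1/2}`, and since `C_j` lies
in the ball of radius `2^{j+2}`, the first factor is at most `(2^{j+2})^{1/2} ‖f‖_X`
(`lintegral_shell_le_nX2`). Moving `(2^{j+1})^{1/2}` to the second factor leaves `√2 ‖f‖_X` times
the `j`-th term of `‖g‖_{X*}` (`lintegral_shell_mul_le`); summing over `j` gives the result with
`C = √2`.
-/

noncomputable section
open MeasureTheory Metric Set ENNReal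

/-- Off the origin, the dyadic shells cover the whole space. -/
lemma compl_zero_subset_iUnion_shell (d : ℕ) :
    ({0}ᶜ : Set (Ed d)) ⊆ ⋃ j : ℤ, shell d j := by
  intro x hx
  obtain ⟨j, hj⟩ := exists_mem_Ioc_zpow (norm_pos_iff.mpr hx) (one_lt_two : (1:ℝ) < 2)
  exact mem_iUnion.mpr ⟨j, hj.1, hj.2⟩

/-- The shell `C_j` sits in the open ball of radius `2 ^ (j + 2)`, the radius at which the supremum
defining `nX2` is tested. -/
lemma lintegral_shell_le_nX2 {d : ℕ} (u : Ed d → ℝ≥0∞) (j : ℤ) :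
    ∫⁻ x in shell d j, u x ≤ 2 * ENNReal.ofReal ((2:ℝ) ^ (j + 1)) * nX2 u := by
  have hR : (0:ℝ) < 2 * 2 ^ (j + 1) := by positivity
  have hsub : shell d j ⊆ ball 0 (2 * 2 ^ (j + 1)) := by
    intro x hx
    have hpos : (0:ℝ) < 2 ^ (j + 1) := by positivity
    rw [mem_ball_zero_iff]
    linarith [hx.2]
  have hle : (ENNReal.ofReal (2 * 2 ^ (j + 1)))⁻¹ *
      ∫⁻ x in ball (0 : Ed d) (2 * 2 ^ (j + 1)), u x ≤ nX2 u :=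
    le_iSup₂ (f := fun (R : ℝ) (_ : 0 < R) =>
      (ENNReal.ofReal R)⁻¹ * ∫⁻ x in ball (0 : Ed d) R, u x) _ hR
  have h0 : ENNReal.ofReal (2 * 2 ^ (j + 1)) ≠ 0 := by simpa using hR
  rw [ENNReal.inv_mul_le_iff h0 ENNReal.ofReal_ne_top,
    ENNReal.ofReal_mul zero_le_two, ENNReal.ofReal_ofNat] at hle
  exact (lintegral_mono_set hsub).trans hle

/-- Cauchy–Schwarz on one shell; the factor `√2` is the loss from replacing the radius
`2 ^ (j + 1)` by `2 ^ (j + 2)`. -/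
lemma lintegral_shell_mul_le {d : ℕ} {f g : Ed d → ℂ} (hf : Measurable f) (hg : Measurable g)
    (j : ℤ) :
    ∫⁻ x in shell d j, (‖f x‖₊ : ℝ≥0∞) * (‖g x‖₊ : ℝ≥0∞) ≤
      2 ^ (1/2 : ℝ) * nX2 (usq f) ^ (1/2 : ℝ) *
        (ENNReal.ofReal ((2:ℝ) ^ (j + 1)) * ∫⁻ x in shell d j, usq g x) ^ (1/2 : ℝ) := by
  have hhalf : (0:ℝ) ≤ 1/2 := by norm_num
  have hCS := ENNReal.lintegral_mul_le_Lp_mul_Lq (volume.restrict (shell d j))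
    Real.HolderConjugate.two_two hf.nnnorm.coe_nnreal_ennreal.aemeasurable
    hg.nnnorm.coe_nnreal_ennreal.aemeasurable
  simp only [Pi.mul_apply, ENNReal.rpow_ofNat] at hCS
  calc _ ≤ (∫⁻ x in shell d j, usq f x) ^ (1/2 : ℝ) *
        (∫⁻ x in shell d j, usq g x) ^ (1/2 : ℝ) := hCS
    _ ≤ (2 * ENNReal.ofReal ((2:ℝ) ^ (j + 1)) * nX2 (usq f)) ^ (1/2 : ℝ) *
        (∫⁻ x in shell d j, usq g x) ^ (1/2 : ℝ) := by
      gcongr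
      exact lintegral_shell_le_nX2 _ j
    _ = _ := by
      simp only [ENNReal.mul_rpow_of_nonneg _ _ hhalf]
      ring

/-- duality pairing `∫ |f||g| ≤ C ‖f‖_X ‖g‖_{X*}`. -/
theorem stmt_18 (d : ℕ) (hd : 1 ≤ d) :
    ∃ C : ℝ, 0 < C ∧
      ∀ (f g : Ed d → ℂ), Measurable f → Measurable g →
      (∫⁻ x, (‖f x‖₊ : ℝ≥0∞) * (‖g x‖₊ : ℝ≥0∞))
        ≤ ENNReal.ofReal C * (nX2 (usq f)) ^ (1/2 : ℝ) * nXstar (usq g) := by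
  have : Nonempty (Fin d) := ⟨⟨0, hd⟩⟩
  refine ⟨2 ^ (1/2 : ℝ), by positivity, fun f g hf hg => ?_⟩
  have hC : ENNReal.ofReal ((2:ℝ) ^ (1/2 : ℝ)) = 2 ^ (1/2 : ℝ) := by
    rw [← ENNReal.ofReal_rpow_of_pos two_pos, ENNReal.ofReal_ofNat]
  -- `d ≥ 1` makes Lebesgue measure atomless, so the origin can be discarded.
  have hnull : volume ({0} : Set (Ed d)) = 0 := measure_singleton 0
  rw [hC, nXstar, ← ENNReal.tsum_mul_left,
    ← setLIntegral_univ,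
    ← setLIntegral_congr (s := {0}ᶜ) (ae_eq_univ.mpr (by rwa [compl_compl]))]
  calc _ ≤ ∫⁻ x in ⋃ j : ℤ, shell d j, (‖f x‖₊ : ℝ≥0∞) * (‖g x‖₊ : ℝ≥0∞) :=
        lintegral_mono_set (compl_zero_subset_iUnion_shell d)
    _ ≤ ∑' j : ℤ, ∫⁻ x in shell d j, (‖f x‖₊ : ℝ≥0∞) * (‖g x‖₊ : ℝ≥0∞) :=
        lintegral_iUnion_le _ _
    _ ≤ _ := ENNReal.tsum_le_tsum fun j => lintegral_shell_mul_le hf hg j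
end
end
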